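/- The number β₄ = √7 · arctan(√7/3) has irrationality measure at most 3.94705; that is, for every real κ > 3.94705, there exist only finitely many pairs (p, q) with p ∈ ℤ and q a positive integer such that |β₄ − p/q| < q^(−κ). -/

import Mathlib

open MeasureTheory Filter Topology Set

namespace Bfour

lemma pnt_G : ∃ G : ℂ → ℂ, ContinuousOn G {s | 1 ≤ s.re} ∧
    ∀ s : ℂ, 1 < s.re →
      G s = LSeries (fun n => ((ArithmeticFunction.vonMangoldt n : ℝ) : ℂ)) s - 1 / (s - 1) := by
  refine ⟨_, ArithmeticFunction.vonMangoldt.continuousOn_LFunctionResidueClassAux (q := 1) 1, ?_⟩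
  intro s hs
  have h := ArithmeticFunction.vonMangoldt.eqOn_LFunctionResidueClassAux (q := 1) (a := 1)
    isUnit_one (x := s) hs
  rw [h]
  have : (fun n : ℕ => ((ArithmeticFunction.vonMangoldt.residueClass (q := 1) 1 n : ℝ) : ℂ))
      = fun n => ((ArithmeticFunction.vonMangoldt n : ℝ) : ℂ) := by
    funext n
    rw [ArithmeticFunction.vonMangoldt.residueClass, Set.indicator_of_mem]
    exact Subsingleton.elim _ _
  simp [this]

noncomputable def fpsi (u : ℝ) : ℝ := Chebyshev.psi (Real.exp u) * Real.exp (-u)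

lemma fpsi_nonneg (u : ℝ) : 0 ≤ fpsi u := mul_nonneg (Chebyshev.psi_nonneg _) (Real.exp_pos _).le

lemma fpsi_le (u : ℝ) : fpsi u ≤ Real.log 4 + 4 := by
  have := Chebyshev.psi_le_const_mul_self (Real.exp_pos u).le
  calc fpsi u ≤ ((Real.log 4 + 4) * Real.exp u) * Real.exp (-u) := by
        unfold fpsi; gcongr
    _ = _ := by rw [mul_assoc, ← Real.exp_add]; simp

lemma fpsi_meas : Measurable fpsi :=
  (Chebyshev.psi_mono.measurable.comp Real.measurable_exp).mul
    (Real.measurable_exp.comp measurable_neg)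

lemma fpsi_neg {u : ℝ} (hu : u ≤ 0) : fpsi u = 0 := by
  unfold fpsi
  rw [Chebyshev.psi_eq_zero_of_le_one (Real.exp_le_one_iff.2 hu), zero_mul]

lemma fpsi_shift {u v : ℝ} (h : u ≤ v) : Real.exp (u - v) * fpsi u ≤ fpsi v := by
  unfold fpsi
  have := Chebyshev.psi_mono (Real.exp_le_exp.2 h)
  calc _ = Chebyshev.psi (Real.exp u) * (Real.exp (u - v) * Real.exp (-u)) := by ring
    _ = Chebyshev.psi (Real.exp u) * Real.exp (-v) := by rw [← Real.exp_add]; ring_nf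
    _ ≤ _ := by gcongr

lemma laplace_psi {s : ℂ} (hs : 0 < s.re) :
    ∫ u in Ioi (0 : ℝ), (fpsi u : ℂ) * Complex.exp (-s * u) =
      LSeries (fun n => ((ArithmeticFunction.vonMangoldt n : ℝ) : ℂ)) (1 + s) / (1 + s) := by
  have hO : (fun n : ℕ ↦ ∑ k ∈ Finset.Icc 1 n, ArithmeticFunction.vonMangoldt k) =O[atTop]
      fun n ↦ (n : ℝ) ^ (1 : ℝ) := by
    refine Asymptotics.IsBigO.of_bound (Real.log 4 + 4) (Eventually.of_forall fun n => ?_)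
    have := Chebyshev.psi_le_const_mul_self (Nat.cast_nonneg n : (0 : ℝ) ≤ n)
    have h2 : Chebyshev.psi n = ∑ k ∈ Finset.Icc 1 n, ArithmeticFunction.vonMangoldt k := by
      simp [Chebyshev.psi]; rfl
    rw [← h2, Real.norm_of_nonneg (Chebyshev.psi_nonneg _), Real.norm_of_nonneg (by positivity)]
    simpa using this
  rw [LSeries_eq_mul_integral_of_nonneg _ zero_le_one (s := 1 + s) (by simpa using hs) hO
    (fun _ => ArithmeticFunction.vonMangoldt_nonneg)]
  have h1s : (1 + s) ≠ 0 := by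
    intro h; have := congrArg Complex.re h; simp at this; linarith
  rw [mul_div_cancel_left₀ _ h1s]
  have himg : Real.exp '' Ioi (0 : ℝ) = Ioi 1 := by
    ext x; constructor
    · rintro ⟨u, hu, rfl⟩; exact Real.one_lt_exp_iff.2 hu
    · intro hx
      exact ⟨Real.log x, Real.log_pos hx, Real.exp_log (lt_trans one_pos hx)⟩
  rw [← himg, integral_image_eq_integral_abs_deriv_smul measurableSet_Ioi
    (fun x _ => (Real.hasDerivAt_exp x).hasDerivWithinAt) Real.exp_injective.injOn]
  refine setIntegral_congr_fun measurableSet_Ioi fun u hu => ?_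
  have h2 : ((Chebyshev.psi (Real.exp u) : ℝ) : ℂ)
      = ∑ k ∈ Finset.Icc 1 ⌊Real.exp u⌋₊, ((ArithmeticFunction.vonMangoldt k : ℝ) : ℂ) := by
    simp [Chebyshev.psi]; rfl
  simp only [fpsi]
  rw [← h2, abs_of_pos (Real.exp_pos u), Complex.cpow_def_of_ne_zero (by
    exact_mod_cast (Real.exp_pos u).ne'), ← Complex.ofReal_log (Real.exp_pos u).le, Real.log_exp]
  push_cast
  rw [Complex.real_smul, mul_left_comm, mul_assoc]
  push_cast
  rw [← Complex.exp_add, ← Complex.exp_add]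
  congr 2; ring

end Bfour

open MeasureTheory Filter Topology Set

namespace Bfour

noncomputable def kf (v : ℝ) : ℝ := (Real.sinc (v / 2)) ^ 2

lemma kf_nonneg (v : ℝ) : 0 ≤ kf v := sq_nonneg _
lemma kf_cont : Continuous kf := (Real.continuous_sinc.comp (continuous_id.div_const 2)).pow 2
lemma kf_le (v : ℝ) : kf v ≤ 5 * (1 + v ^ 2)⁻¹ := by
  rw [← div_eq_mul_inv, le_div_iff₀ (by positivity)]
  have h1 : kf v ≤ 1 := by
    unfold kf; rw [sq_le_one_iff_abs_le_one]; exact Real.abs_sinc_le_one _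
  have h2 : kf v * v ^ 2 ≤ 4 := by
    by_cases hv : v = 0
    · simp [hv]
    unfold kf
    rw [Real.sinc_of_ne_zero (by simpa using hv)]
    have := Real.sin_sq_le_one (v / 2)
    have h3 : (Real.sin (v / 2) / (v / 2)) ^ 2 * v ^ 2 = 4 * Real.sin (v / 2) ^ 2 := by
      field_simp; ring
    linarith
  linarith

lemma kf_int : Integrable kf :=
  (integrable_inv_one_add_sq.const_mul 5).mono' kf_cont.aestronglyMeasurable
    (Eventually.of_forall fun v => by rw [Real.norm_of_nonneg (kf_nonneg v)]; exact kf_le v)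

lemma kf_fourier (v : ℝ) :
    ∫ t in (0 : ℝ)..1, ((1 - t : ℝ) : ℂ) * (Complex.exp (Complex.I * (t * v))
      + Complex.exp (-(Complex.I * (t * v)))) = kf v := by
  have h1 : ∀ t : ℝ, ((1 - t : ℝ) : ℂ) * (Complex.exp (Complex.I * (t * v))
      + Complex.exp (-(Complex.I * (t * v)))) = ((2 * (1 - t) * Real.cos (t * v) : ℝ) : ℂ) := by
    intro t
    push_cast
    rw [Complex.cos]
    ring_nf
  simp_rw [h1]
  rw [intervalIntegral.integral_ofReal]
  congr 1
  by_cases hv : v = 0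
  · subst hv
    have h5 : ∫ x in (0 : ℝ)..1, (1 - x) = 1 / 2 := by
      rw [intervalIntegral.integral_sub (by simp) (by simp)]; simp; norm_num
    simp [kf, h5]
  have := intervalIntegral.integral_eq_sub_of_hasDerivAt (a := 0) (b := 1)
    (f := fun t => 2 * ((1 - t) * Real.sin (t * v) / v - Real.cos (t * v) / v ^ 2))
    (f' := fun t => 2 * (1 - t) * Real.cos (t * v)) (fun t _ => by
      have hs : HasDerivAt (fun t : ℝ => Real.sin (t * v)) (Real.cos (t * v) * v) t := by
        simpa using ((hasDerivAt_id t).mul_const v).sin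
      have hc : HasDerivAt (fun t : ℝ => Real.cos (t * v)) (-Real.sin (t * v) * v) t := by
        simpa using ((hasDerivAt_id t).mul_const v).cos
      have h1 : HasDerivAt (fun t : ℝ => 1 - t) (-1) t := by
        simpa using (hasDerivAt_id t).const_sub 1
      have h6 := (((h1.mul hs).div_const v).sub (hc.div_const (v ^ 2))).const_mul 2
      refine h6.congr_deriv ?_
      field_simp
      ring) (Continuous.intervalIntegrable (by fun_prop) _ _)
  rw [this]
  unfold kf
  rw [Real.sinc_of_ne_zero (by simpa using hv)]
  have h2 : Real.cos (v / 2) ^ 2 = 1 / 2 + Real.cos v / 2 := by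
    rw [Real.cos_sq]; ring_nf
  have h3 := Real.sin_sq_add_cos_sq (v / 2)
  have : Real.sin (v / 2) ^ 2 = (1 - Real.cos v) / 2 := by linarith
  rw [div_pow, this]
  simp
  field_simp
  ring

lemma int_fpsi {s : ℂ} (hs : 0 < s.re) (c : ℝ) :
    IntegrableOn (fun u : ℝ => ((fpsi u - c : ℝ) : ℂ) * Complex.exp (-s * u)) (Ioi 0) := by
  have h0 : IntegrableOn (fun u : ℝ => (Real.log 4 + 4 + |c|) * Real.exp (-s.re * u)) (Ioi 0) :=
    (integrableOn_exp_mul_Ioi (by simpa using hs) 0).const_mul _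
  refine h0.mono' ?_ (Eventually.of_forall fun u => ?_)
  · have := fpsi_meas
    exact (by fun_prop : Measurable _).aestronglyMeasurable
  · rw [norm_mul, Complex.norm_exp, Complex.norm_real]
    have h1 := fpsi_nonneg u
    have h2 := fpsi_le u
    have : ‖fpsi u - c‖ ≤ Real.log 4 + 4 + |c| := by
      refine (norm_sub_le _ _).trans ?_
      rw [Real.norm_of_nonneg h1, Real.norm_eq_abs]; linarith
    simp only [Complex.mul_re, Complex.neg_re, Complex.neg_im, Complex.ofReal_re,
      Complex.ofReal_im, mul_zero, sub_zero]
    gcongr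

lemma laplace_g {G : ℂ → ℂ} (hG : ∀ s : ℂ, 1 < s.re →
      G s = LSeries (fun n => ((ArithmeticFunction.vonMangoldt n : ℝ) : ℂ)) s - 1 / (s - 1))
    {s : ℂ} (hs : 0 < s.re) :
    ∫ u in Ioi (0 : ℝ), ((fpsi u - 1 : ℝ) : ℂ) * Complex.exp (-s * u) =
      (G (1 + s) - 1) / (1 + s) := by
  have h1s : (1 + s) ≠ 0 := by
    intro h; have := congrArg Complex.re h; simp at this; linarith
  have hs0 : s ≠ 0 := by
    intro h; simp [h] at hs
  have h1 : ∀ u : ℝ, ((fpsi u - 1 : ℝ) : ℂ) * Complex.exp (-s * u)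
      = (fpsi u : ℂ) * Complex.exp (-s * u) - Complex.exp (-s * u) := by
    intro u; push_cast; ring
  simp_rw [h1]
  rw [integral_sub, laplace_psi hs, integral_exp_mul_complex_Ioi (by simpa using hs),
    hG _ (by simpa using hs)]
  · simp
    field_simp
    ring
  · have := int_fpsi hs 0
    simp only [sub_zero] at this
    exact this
  · exact integrableOn_exp_mul_complex_Ioi (by simpa using hs) 0

lemma fubini_eps {G : ℂ → ℂ} (hG : ∀ s : ℂ, 1 < s.re →
      G s = LSeries (fun n => ((ArithmeticFunction.vonMangoldt n : ℝ) : ℂ)) s - 1 / (s - 1))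
    {ε : ℝ} (hε : 0 < ε) (T y : ℝ) :
    ∫ u in Ioi (0 : ℝ), ((fpsi u - 1 : ℝ) : ℂ) * Complex.exp (-ε * u) * kf (T * (u - y)) =
    ∫ t in (0 : ℝ)..1, ((1 - t : ℝ) : ℂ) *
      (Complex.exp (-(Complex.I * (t * T * y))) * ((G (1 + (ε - Complex.I * (t * T))) - 1) /
          (1 + (ε - Complex.I * (t * T)))) +
       Complex.exp (Complex.I * (t * T * y)) * ((G (1 + (ε + Complex.I * (t * T))) - 1) /
          (1 + (ε + Complex.I * (t * T))))) := by
  have hL : ∀ u : ℝ, ((fpsi u - 1 : ℝ) : ℂ) * Complex.exp (-ε * u) * kf (T * (u - y)) =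
      ∫ t in Ioc (0 : ℝ) 1, ((fpsi u - 1 : ℝ) : ℂ) * Complex.exp (-ε * u) *
        (((1 - t : ℝ) : ℂ) * (Complex.exp (Complex.I * (t * (T * (u - y) : ℝ)))
      + Complex.exp (-(Complex.I * (t * (T * (u - y) : ℝ)))))) := by
    intro u
    rw [← kf_fourier, intervalIntegral.integral_of_le zero_le_one, ← integral_const_mul]
  simp_rw [hL]
  rw [integral_integral_swap, intervalIntegral.integral_of_le zero_le_one]
  · refine setIntegral_congr_fun measurableSet_Ioc fun t ht => ?_
    rw [← laplace_g hG (by simpa using hε), ← laplace_g hG (by simpa using hε),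
      ← integral_const_mul, ← integral_const_mul, ← integral_add, ← integral_const_mul]
    · refine integral_congr_ae (Eventually.of_forall fun u => ?_)
      simp only
      have e1 : Complex.exp (Complex.I * (t * (T * (u - y) : ℝ))) * Complex.exp (-ε * u)
          = Complex.exp (-(Complex.I * (t * T * y)))
            * Complex.exp (-(ε - Complex.I * (t * T)) * u) := by
        rw [← Complex.exp_add, ← Complex.exp_add]; push_cast; ring_nf
      have e2 : Complex.exp (-(Complex.I * (t * (T * (u - y) : ℝ)))) * Complex.exp (-ε * u)
          = Complex.exp (Complex.I * (t * T * y))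
            * Complex.exp (-(ε + Complex.I * (t * T)) * u) := by
        rw [← Complex.exp_add, ← Complex.exp_add]; push_cast; ring_nf
      linear_combination ((fpsi u - 1 : ℝ) : ℂ) * ((1 - t : ℝ) : ℂ) * (e1 + e2)
    · exact (int_fpsi (by simpa using hε) 1).const_mul _
    · exact (int_fpsi (by simpa using hε) 1).const_mul _
  · have h1 : Integrable (fun u : ℝ => ((fpsi u - 1 : ℝ) : ℂ) * Complex.exp (-ε * u))
        (volume.restrict (Ioi 0)) := by
      exact int_fpsi (s := ε) (by simpa using hε) 1
    have h2 : Integrable (fun t : ℝ => (2 : ℂ)) (volume.restrict (Ioc (0 : ℝ) 1)) :=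
      integrable_const _
    refine (h1.mul_prod h2).mono ?_ ?_
    · have := fpsi_meas
      exact (by unfold Function.uncurry; fun_prop : Measurable _).aestronglyMeasurable
    · rw [Measure.prod_restrict]
      refine (ae_restrict_iff' (measurableSet_Ioi.prod measurableSet_Ioc)).2
        (Eventually.of_forall fun p hp => ?_)
      simp only [Function.uncurry]
      rw [norm_mul, norm_mul (_ * _) (2 : ℂ)]
      gcongr
      have ht := hp.2
      rw [norm_mul, Complex.norm_real, Real.norm_of_nonneg (by linarith [ht.2])]
      have n1 : ∀ x : ℝ, ‖Complex.exp (Complex.I * (p.2 * (x : ℝ)))‖ = 1 := by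
        intro x; rw [Complex.norm_exp]; simp
      have n2 : ∀ x : ℝ, ‖Complex.exp (-(Complex.I * (p.2 * (x : ℝ))))‖ = 1 := by
        intro x; rw [Complex.norm_exp]; simp
      calc _ ≤ 1 * (1 + 1 : ℝ) := by
            gcongr
            · linarith [ht.1]
            · refine (norm_add_le _ _).trans ?_
              rw [n1, n2]
        _ = _ := by norm_num

end Bfour

open MeasureTheory Filter Topology Set

namespace Bfour

lemma kfT_int {T : ℝ} (hT : 0 < T) (y : ℝ) : Integrable (fun u => kf (T * (u - y))) :=
  (kf_int.comp_mul_left' hT.ne').comp_sub_right y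

lemma RL_aux (Φ : ℝ → ℂ) {T : ℝ} (hT : T ≠ 0) :
    Tendsto (fun y : ℝ => ∫ t in (0 : ℝ)..1, Complex.exp (-(Complex.I * (t * T * y))) * Φ t)
      atTop (𝓝 0) := by
  have h := Real.tendsto_integral_exp_smul_cocompact ((Ioc (0 : ℝ) 1).indicator Φ)
  have h2 : Tendsto (fun y : ℝ => y * (T / (2 * Real.pi))) atTop (cocompact ℝ) := by
    have h3 : Tendsto (fun y : ℝ => y * (T / (2 * Real.pi))) (cocompact ℝ) (cocompact ℝ) :=
      (Homeomorph.mulRight₀ (T / (2 * Real.pi))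
        (div_ne_zero hT (by positivity))).isClosedEmbedding.tendsto_cocompact
    exact h3.mono_left atTop_le_cocompact
  refine (h.comp h2).congr fun y => ?_
  rw [intervalIntegral.integral_of_le zero_le_one, ← integral_indicator measurableSet_Ioc]
  refine integral_congr_ae (Eventually.of_forall fun t => ?_)
  by_cases ht : t ∈ Ioc (0 : ℝ) 1
  · simp only [Set.indicator_of_mem ht]
    rw [Circle.smul_def, Real.fourierChar_apply, smul_eq_mul]
    congr 2
    push_cast
    have : (Real.pi : ℂ) ≠ 0 := by exact_mod_cast Real.pi_ne_zero
    field_simp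
  · simp [Set.indicator_of_notMem ht]

lemma dct_aux {H : ℂ → ℂ} (hH : ContinuousOn H {s | 0 ≤ s.re}) (T y : ℝ) :
    Tendsto (fun ε : ℝ => ∫ t in (0 : ℝ)..1, ((1 - t : ℝ) : ℂ) *
      (Complex.exp (-(Complex.I * (t * T * y))) * H (ε - Complex.I * (t * T)) +
       Complex.exp (Complex.I * (t * T * y)) * H (ε + Complex.I * (t * T)))) (𝓝[>] 0)
    (𝓝 (∫ t in (0 : ℝ)..1, ((1 - t : ℝ) : ℂ) *
      (Complex.exp (-(Complex.I * (t * T * y))) * H (((0 : ℝ) : ℂ) - Complex.I * (t * T)) +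
       Complex.exp (Complex.I * (t * T * y)) * H (((0 : ℝ) : ℂ) + Complex.I * (t * T))))) := by
  set F : ℝ × ℝ → ℂ := fun p => ((1 - p.2 : ℝ) : ℂ) *
      (Complex.exp (-(Complex.I * (p.2 * T * y))) * H (p.1 - Complex.I * (p.2 * T)) +
       Complex.exp (Complex.I * (p.2 * T * y)) * H (p.1 + Complex.I * (p.2 * T))) with hF
  have hc : ContinuousOn F (Ici 0 ×ˢ univ) := by
    have h1 : ContinuousOn (fun p : ℝ × ℝ => H (p.1 - Complex.I * (p.2 * T))) (Ici 0 ×ˢ univ) :=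
      hH.comp (by fun_prop) (fun p hp => by simpa using hp.1)
    have h2 : ContinuousOn (fun p : ℝ × ℝ => H (p.1 + Complex.I * (p.2 * T))) (Ici 0 ×ˢ univ) :=
      hH.comp (by fun_prop) (fun p hp => by simpa using hp.1)
    have a1 : Continuous (fun p : ℝ × ℝ => ((1 - p.2 : ℝ) : ℂ)) := by fun_prop
    have a2 : Continuous (fun p : ℝ × ℝ => Complex.exp (-(Complex.I * (p.2 * T * y)))) := by fun_prop
    have a3 : Continuous (fun p : ℝ × ℝ => Complex.exp (Complex.I * (p.2 * T * y))) := by fun_prop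
    exact a1.continuousOn.mul ((a2.continuousOn.mul h1).add (a3.continuousOn.mul h2))
  obtain ⟨C, hC⟩ := (isCompact_Icc.prod isCompact_Icc : IsCompact
    (Icc (0 : ℝ) 1 ×ˢ Icc (0 : ℝ) 1)).exists_bound_of_continuousOn
    (hc.mono (Set.prod_mono Icc_subset_Ici_self (subset_univ _)))
  have hcε : ∀ ε : ℝ, 0 ≤ ε → Continuous (fun t => F (ε, t)) := by
    intro ε hε
    rw [← continuousOn_univ]
    exact hc.comp (by fun_prop) (fun t _ => ⟨hε, mem_univ _⟩)
  refine intervalIntegral.tendsto_integral_filter_of_dominated_convergence (fun _ => C) ?_ ?_ ?_ ?_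
  · filter_upwards [self_mem_nhdsWithin] with ε hε
    exact (hcε ε (le_of_lt hε)).aestronglyMeasurable
  · have : ∀ᶠ ε : ℝ in 𝓝[>] 0, ε < 1 :=
      mem_nhdsWithin_of_mem_nhds (Iio_mem_nhds one_pos)
    filter_upwards [self_mem_nhdsWithin, this] with ε hε h1
    refine Eventually.of_forall fun t ht => ?_
    rw [uIoc_of_le zero_le_one] at ht
    exact hC (ε, t) ⟨⟨le_of_lt hε, h1.le⟩, ht.1.le, ht.2⟩
  · simp
  · refine Eventually.of_forall fun t _ => ?_
    have h1 : ContinuousWithinAt F (Ici 0 ×ˢ univ) (0, t) := hc _ ⟨by simp, mem_univ _⟩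
    have h2 : Tendsto (fun ε : ℝ => (ε, t)) (𝓝[>] 0) (𝓝[Ici 0 ×ˢ univ] (0, t)) := by
      refine tendsto_nhdsWithin_iff.2 ⟨?_, ?_⟩
      · exact (Continuous.tendsto (by fun_prop) 0).mono_left nhdsWithin_le_nhds
      · filter_upwards [self_mem_nhdsWithin] with ε hε
        exact ⟨by simpa using le_of_lt (show (0:ℝ) < ε from hε), mem_univ _⟩
    exact h1.tendsto.comp h2

lemma conv_zero {T : ℝ} (hT : 0 < T) :
    Tendsto (fun y : ℝ => ∫ u in Ioi (0 : ℝ), (fpsi u - 1) * kf (T * (u - y))) atTop (𝓝 0) := by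
  obtain ⟨G, hGc, hG⟩ := pnt_G
  set H : ℂ → ℂ := fun s => (G (1 + s) - 1) / (1 + s) with hHdef
  have hH : ContinuousOn H {s | 0 ≤ s.re} := by
    have h1 : ContinuousOn (fun s => G (1 + s)) {s | 0 ≤ s.re} :=
      hGc.comp (by fun_prop) (fun s hs => by simpa using hs)
    refine (h1.sub continuousOn_const).div (by fun_prop) ?_
    intro s hs h
    have h2 := congrArg Complex.re h
    have h3 : 0 ≤ s.re := hs
    simp at h2
    linarith
  have key : ∀ y : ℝ, ((∫ u in Ioi (0 : ℝ), (fpsi u - 1) * kf (T * (u - y)) : ℝ) : ℂ) =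
      (∫ t in (0 : ℝ)..1, Complex.exp (-(Complex.I * (t * T * y))) *
        (((1 - t : ℝ) : ℂ) * H (((0 : ℝ) : ℂ) - Complex.I * (t * T)))) +
      ∫ t in (0 : ℝ)..1, Complex.exp (-(Complex.I * (t * (-T : ℝ) * y))) *
        (((1 - t : ℝ) : ℂ) * H (((0 : ℝ) : ℂ) + Complex.I * (t * T))) := by
    intro y
    have hi1 : Continuous (fun t : ℝ => H (((0 : ℝ) : ℂ) - Complex.I * (t * T))) := by
      rw [← continuousOn_univ]
      exact hH.comp (by fun_prop) (fun t _ => by simp)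
    have hi2 : Continuous (fun t : ℝ => H (((0 : ℝ) : ℂ) + Complex.I * (t * T))) := by
      rw [← continuousOn_univ]
      exact hH.comp (by fun_prop) (fun t _ => by simp)
    rw [← intervalIntegral.integral_add]
    rotate_left
    · have a1 : Continuous (fun t : ℝ => Complex.exp (-(Complex.I * (t * T * y)))) := by fun_prop
      have a2 : Continuous (fun t : ℝ => ((1 - t : ℝ) : ℂ)) := by fun_prop
      exact (a1.mul (a2.mul hi1)).intervalIntegrable _ _
    · have a1 : Continuous (fun t : ℝ => Complex.exp (-(Complex.I * (t * (-T : ℝ) * y)))) := by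
        fun_prop
      have a2 : Continuous (fun t : ℝ => ((1 - t : ℝ) : ℂ)) := by fun_prop
      exact (a1.mul (a2.mul hi2)).intervalIntegrable _ _
    have h1 := dct_aux hH T y
    have h2 : Tendsto (fun ε : ℝ => ∫ u in Ioi (0 : ℝ), ((fpsi u - 1 : ℝ) : ℂ) *
        Complex.exp (-ε * u) * kf (T * (u - y))) (𝓝[>] 0)
        (𝓝 (∫ u in Ioi (0 : ℝ), ((fpsi u - 1 : ℝ) : ℂ) *
        Complex.exp (-((0 : ℝ) : ℂ) * u) * kf (T * (u - y)))) := by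
      refine tendsto_integral_filter_of_dominated_convergence
        (fun u => (Real.log 4 + 5) * kf (T * (u - y))) ?_ ?_ ?_ ?_
      · refine Eventually.of_forall fun ε => ?_
        have := fpsi_meas
        have := kf_cont.measurable
        exact (by fun_prop : Measurable _).aestronglyMeasurable
      · filter_upwards [self_mem_nhdsWithin] with ε hε
        refine (ae_restrict_iff' measurableSet_Ioi).2 (Eventually.of_forall fun u hu => ?_)
        rw [norm_mul, norm_mul, Complex.norm_exp, Complex.norm_real, Complex.norm_real,
          Real.norm_of_nonneg (kf_nonneg _)]
        refine mul_le_mul_of_nonneg_right ?_ (kf_nonneg _)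
        have h1 := fpsi_nonneg u
        have h2 := fpsi_le u
        have h3 : ‖fpsi u - 1‖ ≤ Real.log 4 + 5 := by
          rw [Real.norm_eq_abs, abs_le]; constructor <;> linarith
        have h4 : Real.exp (-(ε : ℂ) * u).re ≤ 1 := by
          rw [Real.exp_le_one_iff]
          simp
          exact mul_nonneg (le_of_lt hε) (le_of_lt hu)
        calc _ ≤ (Real.log 4 + 5) * 1 := by gcongr
          _ = _ := by ring
      · exact ((kfT_int hT y).const_mul _).integrableOn
      · refine Eventually.of_forall fun u => ?_
        refine Tendsto.mono_left ?_ nhdsWithin_le_nhds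
        exact Continuous.tendsto (by fun_prop) (0 : ℝ)
    have h3 := tendsto_nhds_unique (h2.congr' (by
      filter_upwards [self_mem_nhdsWithin] with ε hε
      exact fubini_eps hG hε T y)) h1
    rw [← integral_complex_ofReal]
    simp only [neg_zero, Complex.ofReal_zero, zero_mul, Complex.exp_zero, mul_one] at h3
    rw [show (fun u : ℝ => (((fpsi u - 1) * kf (T * (u - y)) : ℝ) : ℂ)) =
      fun u : ℝ => ((fpsi u - 1 : ℝ) : ℂ) * ((kf (T * (u - y)) : ℝ) : ℂ) by
        funext u; push_cast; ring]
    rw [h3]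
    refine intervalIntegral.integral_congr fun t _ => ?_
    simp only [Complex.ofReal_zero, Complex.ofReal_neg]
    have e : -(Complex.I * (t * -T * y)) = Complex.I * (t * T * y) := by ring
    rw [e]
    ring
  have h1 := (RL_aux (fun t => ((1 - t : ℝ) : ℂ) * H (((0 : ℝ) : ℂ) - Complex.I * (t * T))) hT.ne').add
    (RL_aux (fun t => ((1 - t : ℝ) : ℂ) * H (((0 : ℝ) : ℂ) + Complex.I * (t * T)))
      (neg_ne_zero.2 hT.ne'))
  have h2 := h1.congr (fun y => (key y).symm)
  have h3 := (Complex.continuous_re.tendsto _).comp h2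
  simpa [Function.comp_def] using h3

lemma conv_main {T : ℝ} (hT : 0 < T) :
    Tendsto (fun y : ℝ => ∫ v, fpsi (y + v / T) * kf v) atTop (𝓝 (∫ v, kf v)) := by
  have h1 := conv_zero hT
  have hi : ∀ y, Integrable (fun u => fpsi u * kf (T * (u - y))) := fun y => by
    refine ((kfT_int hT y).const_mul (Real.log 4 + 4)).mono' ?_ (Eventually.of_forall fun u => ?_)
    · have := fpsi_meas
      have := kf_cont.measurable
      exact (by fun_prop : Measurable _).aestronglyMeasurable
    · rw [Real.norm_of_nonneg (mul_nonneg (fpsi_nonneg _) (kf_nonneg _))]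
      exact mul_le_mul_of_nonneg_right (fpsi_le _) (kf_nonneg _)
  have h2 : Tendsto (fun y : ℝ => ∫ u in Ioi (-y), kf (T * u)) atTop (𝓝 (∫ u, kf (T * u))) :=
    (aecover_Ioi tendsto_neg_atTop_atBot).integral_tendsto_of_countably_generated
      (kf_int.comp_mul_left' hT.ne')
  have h3 : ∀ y : ℝ, ∫ u in Ioi (0 : ℝ), (fpsi u - 1) * kf (T * (u - y)) =
      T⁻¹ * (∫ v, fpsi (y + v / T) * kf v) - ∫ u in Ioi (-y), kf (T * u) := by
    intro y
    have e1 : ∫ u in Ioi (0 : ℝ), kf (T * (u - y)) = ∫ u in Ioi (-y), kf (T * u) := by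
      have := (measurePreserving_sub_right volume y).setIntegral_preimage_emb
        (measurableEmbedding_subRight y) (fun u => kf (T * u)) (Ioi (-y))
      rw [← this]
      congr 2
      ext u; simp
    have e2 : ∫ u in Ioi (0 : ℝ), fpsi u * kf (T * (u - y)) =
        ∫ u, fpsi u * kf (T * (u - y)) := by
      refine setIntegral_eq_integral_of_forall_compl_eq_zero fun u hu => ?_
      rw [fpsi_neg (by simpa using hu), zero_mul]
    have e3 : ∫ u, fpsi u * kf (T * (u - y)) = T⁻¹ * ∫ v, fpsi (y + v / T) * kf v := by
      have a1 := integral_sub_right_eq_self (μ := volume)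
        (fun u => fpsi (y + T * u / T) * kf (T * u)) y
      have a2 := Measure.integral_comp_mul_left (fun v => fpsi (y + v / T) * kf v) T
      rw [abs_of_pos (inv_pos.2 hT), smul_eq_mul] at a2
      rw [← a2, ← a1]
      refine integral_congr_ae (Eventually.of_forall fun u => ?_)
      simp only
      congr 2
      field_simp; ring
    rw [← e3, ← e2, ← e1, ← integral_sub (hi y).integrableOn (kfT_int hT y).integrableOn]
    refine integral_congr_ae (Eventually.of_forall fun u => ?_)
    simp only; ring
  have h4 : ∫ u, kf (T * u) = T⁻¹ * ∫ v, kf v := by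
    have a2 := Measure.integral_comp_mul_left kf T
    rwa [abs_of_pos (inv_pos.2 hT), smul_eq_mul] at a2
  have h5 := ((h1.add h2).const_mul T)
  rw [h4, zero_add, ← mul_assoc, mul_inv_cancel₀ hT.ne', one_mul] at h5
  refine h5.congr fun y => ?_
  rw [h3, sub_add_cancel, ← mul_assoc, mul_inv_cancel₀ hT.ne', one_mul]

end Bfour

open MeasureTheory Filter Topology Set

namespace Bfour

lemma kf_pos_int : 0 < ∫ v, kf v := by
  rw [integral_pos_iff_support_of_nonneg kf_nonneg kf_int]
  refine lt_of_lt_of_le ?_ (measure_mono (?_ : Ioo (-1 : ℝ) 1 ⊆ _))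
  · simp
  · intro v hv
    rw [Function.mem_support]
    unfold kf
    by_cases h : v = 0
    · simp [h]
    rw [Real.sinc_of_ne_zero (by simpa using h)]
    have : Real.sin (v / 2) ≠ 0 := by
      rw [Ne, Real.sin_eq_zero_iff_of_lt_of_lt] 
      · simpa using h
      · have := Real.pi_gt_three; linarith [hv.1]
      · have := Real.pi_gt_three; linarith [hv.2]
    positivity

lemma fk_int {T : ℝ} (y : ℝ) : Integrable (fun v => fpsi (y + v / T) * kf v) := by
  refine (kf_int.const_mul (Real.log 4 + 4)).mono' ?_ (Eventually.of_forall fun u => ?_)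
  · have := fpsi_meas
    have := kf_cont.measurable
    exact (by fun_prop : Measurable _).aestronglyMeasurable
  · rw [Real.norm_of_nonneg (mul_nonneg (fpsi_nonneg _) (kf_nonneg _))]
    exact mul_le_mul_of_nonneg_right (fpsi_le _) (kf_nonneg _)

lemma tb_lower {A T : ℝ} (hT : 0 < T) (hA : 0 < A) (y : ℝ) :
    Real.exp (-(2 * A / T)) * fpsi (y - A / T) * (∫ v in Icc (-A) A, kf v) ≤
      ∫ v, fpsi (y + v / T) * kf v := by
  rw [← integral_const_mul]
  refine le_trans (setIntegral_mono_on (kf_int.const_mul _).integrableOn (fk_int (T := T) y).integrableOn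
    measurableSet_Icc ?_) (setIntegral_le_integral (fk_int y)
      (Eventually.of_forall fun v => mul_nonneg (fpsi_nonneg _) (kf_nonneg _)))
  intro v hv
  refine mul_le_mul_of_nonneg_right ?_ (kf_nonneg _)
  have h1 : -A / T ≤ v / T := by gcongr; exact hv.1
  have h2 : v / T ≤ A / T := by gcongr; exact hv.2
  rw [neg_div] at h1
  refine le_trans ?_ (fpsi_shift (u := y - A / T) (v := y + v / T) (by linarith))
  refine mul_le_mul_of_nonneg_right (Real.exp_le_exp.2 ?_) (fpsi_nonneg _)
  have : 2 * A / T = A / T + A / T := by ring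
  linarith

lemma tb_upper {A T : ℝ} (hT : 0 < T) (hA : 0 < A) (y : ℝ) :
    ∫ v, fpsi (y + v / T) * kf v ≤ Real.exp (2 * A / T) * fpsi (y + A / T) *
      (∫ v in Icc (-A) A, kf v) + (Real.log 4 + 4) * ((∫ v, kf v) - ∫ v in Icc (-A) A, kf v) := by
  rw [← integral_add_compl (measurableSet_Icc (a := -A) (b := A)) (fk_int (T := T) y),
    ← integral_add_compl (measurableSet_Icc (a := -A) (b := A)) kf_int, add_sub_cancel_left,
    ← integral_const_mul, ← integral_const_mul]
  refine add_le_add ?_ ?_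
  · refine setIntegral_mono_on (fk_int (T := T) y).integrableOn (kf_int.const_mul _).integrableOn
      measurableSet_Icc ?_
    intro v hv
    refine mul_le_mul_of_nonneg_right ?_ (kf_nonneg _)
    have h1 : -A / T ≤ v / T := by gcongr; exact hv.1
    have h2 : v / T ≤ A / T := by gcongr; exact hv.2
    rw [neg_div] at h1
    have h3 := (fpsi_shift (u := y + v / T) (v := y + A / T) (by linarith))
    have h4 : Real.exp (-(2 * A / T)) * fpsi (y + v / T) ≤ fpsi (y + A / T) := by
      refine le_trans (mul_le_mul_of_nonneg_right (Real.exp_le_exp.2 ?_) (fpsi_nonneg _)) h3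
      have : 2 * A / T = A / T + A / T := by ring
      linarith
    rw [Real.exp_neg, inv_mul_le_iff₀ (Real.exp_pos _)] at h4
    exact h4
  · refine setIntegral_mono_on (fk_int (T := T) y).integrableOn (kf_int.const_mul _).integrableOn
      measurableSet_Icc.compl ?_
    intro v hv
    exact mul_le_mul_of_nonneg_right (fpsi_le _) (kf_nonneg _)

lemma fpsi_tendsto : Tendsto fpsi atTop (𝓝 1) := by
  set c := ∫ v, kf v with hc
  have hc0 : 0 < c := kf_pos_int
  set cA : ℝ → ℝ := fun A => ∫ v in Icc (-A) A, kf v with hcA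
  have h1 : Tendsto cA atTop (𝓝 c) :=
    (aecover_Icc tendsto_neg_atTop_atBot tendsto_id).integral_tendsto_of_countably_generated kf_int
  have he : Tendsto (fun A : ℝ => 2 * A / A ^ 2) atTop (𝓝 0) := by
    have : Tendsto (fun A : ℝ => 2 * A⁻¹) atTop (𝓝 (2 * 0)) := tendsto_inv_atTop_zero.const_mul 2
    rw [mul_zero] at this
    refine this.congr' ?_
    filter_upwards [eventually_gt_atTop 0] with A hA
    field_simp
  have hU : Tendsto (fun A => Real.exp (2 * A / A ^ 2) * (c / cA A)) atTop (𝓝 1) := by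
    have := ((Real.continuous_exp.tendsto _).comp he).mul (tendsto_const_nhds (x := c) |>.div h1 hc0.ne')
    simpa [hc0.ne', Function.comp_def] using this
  have hL : Tendsto (fun A => Real.exp (-(2 * A / A ^ 2)) *
      ((c - (Real.log 4 + 4) * (c - cA A)) / cA A)) atTop (𝓝 1) := by
    have h2 : Tendsto (fun A => (c - (Real.log 4 + 4) * (c - cA A))) atTop
        (𝓝 (c - (Real.log 4 + 4) * (c - c))) :=
      tendsto_const_nhds.sub (tendsto_const_nhds.mul (tendsto_const_nhds.sub h1))
    have := ((Real.continuous_exp.tendsto _).comp he.neg).mul (h2.div h1 hc0.ne')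
    simpa [hc0.ne', Function.comp_def] using this
  rw [tendsto_order]
  constructor
  · intro a ha
    obtain ⟨A, hA1, hA2, hA0⟩ := ((hL.eventually (lt_mem_nhds ha)).and
      ((h1.eventually (lt_mem_nhds hc0)).and (eventually_gt_atTop 0))).exists
    have hT : 0 < A ^ 2 := by positivity
    have h3 : Tendsto (fun y => Real.exp (-(2 * A / A ^ 2)) * (((∫ v, fpsi (y + v / A ^ 2) * kf v)
      - (Real.log 4 + 4) * (c - cA A)) / cA A)) atTop (𝓝 _) :=
      (((conv_main hT).sub_const ((Real.log 4 + 4) * (c - cA A))).div_const (cA A)).const_mul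
      (Real.exp (-(2 * A / A ^ 2)))
    have h4 := h3.eventually (lt_mem_nhds hA1)
    have h5 := (tendsto_atTop_add_const_right atTop (-(A / A ^ 2)) tendsto_id).eventually h4
    filter_upwards [h5] with y hy
    refine lt_of_lt_of_le hy ?_
    have h6 := tb_upper hT hA0 (id y + -(A / A ^ 2))
    rw [id, show y + -(A / A ^ 2) + A / A ^ 2 = y by ring] at h6
    rw [Real.exp_neg, inv_mul_le_iff₀ (Real.exp_pos _), div_le_iff₀ hA2]
    simp only [id]
    linarith
  · intro a ha
    obtain ⟨A, hA1, hA2, hA0⟩ := ((hU.eventually (gt_mem_nhds ha)).and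
      ((h1.eventually (lt_mem_nhds hc0)).and (eventually_gt_atTop 0))).exists
    have hT : 0 < A ^ 2 := by positivity
    have h3 : Tendsto (fun y => Real.exp ((2 * A / A ^ 2)) * (((∫ v, fpsi (y + v / A ^ 2) * kf v)) / cA A)) atTop (𝓝 _) :=
      (((conv_main hT)).div_const (cA A)).const_mul
      (Real.exp ((2 * A / A ^ 2)))
    have h4 := h3.eventually (gt_mem_nhds hA1)
    have h5 := (tendsto_atTop_add_const_right atTop ((A / A ^ 2)) tendsto_id).eventually h4
    filter_upwards [h5] with y hy
    refine lt_of_le_of_lt ?_ hy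
    have h6 := tb_lower hT hA0 (id y + (A / A ^ 2))
    rw [id, show y + (A / A ^ 2) - A / A ^ 2 = y by ring] at h6
    rw [Real.exp_neg, mul_assoc, inv_mul_le_iff₀ (Real.exp_pos _)] at h6
    rw [mul_div_assoc', le_div_iff₀ hA2]
    simpa using h6

lemma psi_tendsto : Tendsto (fun x : ℝ => Chebyshev.psi x / x) atTop (𝓝 1) := by
  refine (fpsi_tendsto.comp Real.tendsto_log_atTop).congr' ?_
  filter_upwards [eventually_gt_atTop 0] with x hx
  simp only [Function.comp, fpsi]
  rw [Real.exp_neg, Real.exp_log hx, div_eq_mul_inv]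

lemma theta_tendsto : Tendsto (fun x : ℝ => Chebyshev.theta x / x) atTop (𝓝 1) := by
  have h1 := Chebyshev.isBigO_psi_sub_theta_sqrt
  have h2 : (fun x : ℝ => Real.sqrt x) =o[atTop] (fun x : ℝ => x) := by
    rw [Asymptotics.isLittleO_iff_tendsto' (by
      filter_upwards [eventually_gt_atTop 0] with x hx h0
      exact absurd h0 hx.ne')]
    refine (tendsto_inv_atTop_zero.comp Real.tendsto_sqrt_atTop).congr' ?_
    filter_upwards [eventually_gt_atTop 0] with x hx
    rw [Function.comp, Real.sqrt_div_self]
  have h3 := (h1.trans_isLittleO h2).tendsto_div_nhds_zero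
  have h4 := psi_tendsto.sub h3
  rw [sub_zero] at h4
  refine h4.congr fun x => ?_
  simp [Pi.sub_apply]; ring

end Bfour

open MeasureTheory Filter Topology Set

namespace Bfour

noncomputable def wf (t : ℝ) : ℝ := (Real.pi / Real.cosh (Real.pi * t)) ^ 2

lemma wf_nonneg (t : ℝ) : 0 ≤ wf t := sq_nonneg _
lemma wf_cont : Continuous wf := by
  unfold wf
  refine Continuous.pow (Continuous.div continuous_const ?_ fun t => (Real.cosh_pos _).ne') 2
  fun_prop

lemma wf_neg (t : ℝ) : wf (-t) = wf t := by simp [wf, mul_neg, Real.cosh_neg]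

lemma wf_sigm (t : ℝ) : 2 * Real.pi * (Real.sigmoid (2 * Real.pi * t) *
    (1 - Real.sigmoid (2 * Real.pi * t))) = wf t / (2 * Real.pi) := by
  rw [← Real.sigmoid_neg, Real.sigmoid_def, Real.sigmoid_def, neg_neg, wf, Real.cosh_eq,
    show Real.exp (2 * Real.pi * t) = Real.exp (Real.pi * t) ^ 2 by rw [← Real.exp_nat_mul]; ring_nf,
    show Real.exp (-(2 * Real.pi * t)) = (Real.exp (Real.pi * t) ^ 2)⁻¹ by
      rw [← Real.exp_nat_mul, ← Real.exp_neg]; ring_nf, Real.exp_neg]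
  have := Real.exp_pos (Real.pi * t)
  have := Real.pi_pos
  generalize Real.exp (Real.pi * t) = e at *
  field_simp
  ring

lemma sigm_ratio (x a : ℝ) : Real.sigmoid x ^ (-a) * (1 - Real.sigmoid x) ^ a = Real.exp (-(a * x)) := by
  rw [← Real.sigmoid_neg, ← Real.sigmoid_mul_rexp_neg, Real.mul_rpow (Real.sigmoid_nonneg _)
    (Real.exp_pos _).le, ← mul_assoc, ← Real.rpow_add (Real.sigmoid_pos _), neg_add_cancel,
    Real.rpow_zero, one_mul, ← Real.exp_mul]
  ring_nf

lemma image_sigm : (fun t : ℝ => Real.sigmoid (2 * Real.pi * t)) '' univ = Ioo 0 1 := by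
  rw [← Real.range_sigmoid, image_univ]
  have h : Function.Surjective (fun t : ℝ => 2 * Real.pi * t) := fun y =>
    ⟨y / (2 * Real.pi), by have := Real.pi_pos; field_simp⟩
  exact h.range_comp Real.sigmoid

lemma inj_sigm : InjOn (fun t : ℝ => Real.sigmoid (2 * Real.pi * t)) univ := by
  intro a _ b _ h
  have := Real.sigmoid_injective h
  have hp := Real.pi_pos
  exact mul_left_cancel₀ (by positivity) this

lemma der_sigm (t : ℝ) : HasDerivAt (fun t : ℝ => Real.sigmoid (2 * Real.pi * t))
    (wf t / (2 * Real.pi)) t := by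
  have := (Real.hasDerivAt_sigmoid (2 * Real.pi * t)).comp t ((hasDerivAt_id t).const_mul (2 * Real.pi))
  refine this.congr_deriv ?_
  rw [← wf_sigm]; simp; ring

lemma wf_exp_int {s : ℝ} (hs : |s| < 2 * Real.pi) : Integrable (fun t => Real.exp (-(s * t)) * wf t) := by
  have hp := Real.pi_pos
  rw [abs_lt] at hs
  set a := s / (2 * Real.pi) with ha
  have ha1 : -1 < a := by rw [ha, lt_div_iff₀ (by positivity)]; linarith
  have ha2 : a < 1 := by rw [ha, div_lt_iff₀ (by positivity)]; linarith
  have h1 := Complex.betaIntegral_convergent (u := ((1 - a : ℝ) : ℂ)) (v := ((1 + a : ℝ) : ℂ))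
    (by rw [Complex.ofReal_re]; linarith) (by rw [Complex.ofReal_re]; linarith)
  rw [intervalIntegrable_iff_integrableOn_Ioo_of_le zero_le_one] at h1
  rw [← image_sigm, integrableOn_image_iff_integrableOn_abs_deriv_smul MeasurableSet.univ
    (fun t _ => (der_sigm t).hasDerivWithinAt) inj_sigm, integrableOn_univ] at h1
  have h2 := (h1.norm).const_mul (2 * Real.pi)
  refine h2.congr (Eventually.of_forall fun t => ?_)
  have hs0 := Real.sigmoid_pos (2 * Real.pi * t)
  have hs1 : 0 < 1 - Real.sigmoid (2 * Real.pi * t) := by linarith [Real.sigmoid_lt_one (2 * Real.pi * t)]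
  simp only
  rw [norm_smul, norm_mul, Complex.norm_cpow_eq_rpow_re_of_pos hs0]
  rw [show (1 : ℂ) - ((Real.sigmoid (2 * Real.pi * t) : ℝ) : ℂ) =
    ((1 - Real.sigmoid (2 * Real.pi * t) : ℝ) : ℂ) by push_cast; rfl,
    Complex.norm_cpow_eq_rpow_re_of_pos hs1]
  have e1 : (((1 - a : ℝ) : ℂ) - 1).re = -a := by simp
  have e2 : (((1 + a : ℝ) : ℂ) - 1).re = a := by simp
  rw [e1, e2, sigm_ratio, Real.norm_eq_abs, abs_abs, abs_of_nonneg (div_nonneg (wf_nonneg t) (by positivity)), ha]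
  field_simp

lemma wf_lap {s : ℝ} (hs : |s| < 2 * Real.pi) (h0 : s ≠ 0) :
    ∫ t, Real.exp (-(s * t)) * wf t = Real.pi * s / Real.sin (s / 2) := by
  have hp := Real.pi_pos
  rw [abs_lt] at hs
  set a := s / (2 * Real.pi) with ha
  have ha0 : a ≠ 0 := div_ne_zero h0 (by positivity)
  have ha1 : -1 < a := by rw [ha, lt_div_iff₀ (by positivity)]; linarith
  have ha2 : a < 1 := by rw [ha, div_lt_iff₀ (by positivity)]; linarith
  have h1 := Complex.Gamma_mul_Gamma_eq_betaIntegral (s := ((1 - a : ℝ) : ℂ)) (t := ((1 + a : ℝ) : ℂ))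
    (by rw [Complex.ofReal_re]; linarith) (by rw [Complex.ofReal_re]; linarith)
  have h2 : Complex.betaIntegral ((1 - a : ℝ) : ℂ) ((1 + a : ℝ) : ℂ) =
      (((2 * Real.pi)⁻¹ * ∫ t, Real.exp (-(s * t)) * wf t : ℝ) : ℂ) := by
    rw [Complex.betaIntegral, intervalIntegral.integral_of_le zero_le_one, integral_Ioc_eq_integral_Ioo,
      ← image_sigm, integral_image_eq_integral_abs_deriv_smul MeasurableSet.univ
    (fun t _ => (der_sigm t).hasDerivWithinAt) inj_sigm, setIntegral_univ, ← integral_const_mul,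
      ← integral_complex_ofReal]
    refine integral_congr_ae (Eventually.of_forall fun t => ?_)
    have hs0 := Real.sigmoid_pos (2 * Real.pi * t)
    have hs1 : 0 < 1 - Real.sigmoid (2 * Real.pi * t) := by linarith [Real.sigmoid_lt_one (2 * Real.pi * t)]
    simp only
    rw [show (1 : ℂ) - ((Real.sigmoid (2 * Real.pi * t) : ℝ) : ℂ) =
      ((1 - Real.sigmoid (2 * Real.pi * t) : ℝ) : ℂ) by push_cast; rfl]
    have e1 : (((1 - a : ℝ) : ℂ) - 1) = ((-a : ℝ) : ℂ) := by push_cast; ring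
    have e2 : (((1 + a : ℝ) : ℂ) - 1) = ((a : ℝ) : ℂ) := by push_cast; ring
    rw [e1, e2, ← Complex.ofReal_cpow hs0.le, ← Complex.ofReal_cpow hs1.le, ← Complex.ofReal_mul,
      sigm_ratio, abs_of_nonneg (div_nonneg (wf_nonneg t) (by positivity)), Complex.real_smul,
      ← Complex.ofReal_mul, ha]
    congr 1
    field_simp
  rw [h2, show ((1 - a : ℝ) : ℂ) + ((1 + a : ℝ) : ℂ) = 2 by push_cast; ring, Complex.Gamma_ofNat_eq_factorial,
    Complex.Gamma_ofReal, Complex.Gamma_ofReal, ← Complex.ofReal_mul] at h1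
  have h3 : Real.Gamma (1 - a) * Real.Gamma (1 + a) = (2 * Real.pi)⁻¹ * ∫ t, Real.exp (-(s * t)) * wf t := by
    simp only [Nat.factorial_one, Nat.cast_one, one_mul] at h1
    exact_mod_cast h1
  have h4 := Real.Gamma_mul_Gamma_one_sub a
  rw [add_comm 1 a, Real.Gamma_add_one ha0] at h3
  have h5 : Real.pi * a = s / 2 := by rw [ha]; field_simp
  rw [h5] at h4
  have h6 : Real.Gamma (1 - a) * (a * Real.Gamma a) = a * (Real.pi / Real.sin (s / 2)) := by
    rw [← h4]; ring
  rw [h6] at h3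
  have h7 : ∫ t, Real.exp (-(s * t)) * wf t = 2 * Real.pi * (a * (Real.pi / Real.sin (s / 2))) := by
    rw [h3, ← mul_assoc, mul_inv_cancel₀ (by positivity), one_mul]
  rw [h7, ha]; field_simp

end Bfour

open MeasureTheory Filter Topology Set

namespace Bfour

noncomputable def muw : Measure ℝ := volume.withDensity (fun t => ENNReal.ofReal (wf t))

lemma muw_int_iff {E : Type*} [NormedAddCommGroup E] [NormedSpace ℝ E] (f : ℝ → E) :
    Integrable f muw ↔ Integrable (fun t => wf t • f t) := by
  unfold muw
  rw [integrable_withDensity_iff_integrable_smul' wf_cont.measurable.ennreal_ofReal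
    (Eventually.of_forall fun t => ENNReal.ofReal_lt_top)]
  simp_rw [ENNReal.toReal_ofReal (wf_nonneg _)]

lemma muw_integral {E : Type*} [NormedAddCommGroup E] [NormedSpace ℝ E] (f : ℝ → E) :
    ∫ t, f t ∂muw = ∫ t, wf t • f t := by
  unfold muw
  rw [integral_withDensity_eq_integral_toReal_smul wf_cont.measurable.ennreal_ofReal
    (Eventually.of_forall fun t => ENNReal.ofReal_lt_top)]
  simp_rw [ENNReal.toReal_ofReal (wf_nonneg _)]

lemma muw_mem {s : ℝ} (hs : |s| < 2 * Real.pi) :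
    s ∈ interior (ProbabilityTheory.integrableExpSet (fun t : ℝ => -t) muw) := by
  rw [mem_interior]
  refine ⟨Ioo (-(2 * Real.pi)) (2 * Real.pi), ?_, isOpen_Ioo, abs_lt.1 hs⟩
  intro u hu
  have h := wf_exp_int (abs_lt.2 hu)
  unfold ProbabilityTheory.integrableExpSet
  rw [mem_ofPred_eq, muw_int_iff]
  refine h.congr (Eventually.of_forall fun t => ?_)
  simp only [smul_eq_mul, mul_neg]; ring

lemma mon_int {s : ℝ} (hs : |s| < 2 * Real.pi) (n : ℕ) :
    Integrable (fun t : ℝ => (-t : ℂ) ^ n * ((Real.exp (-(s * t)) * wf t : ℝ) : ℂ)) := by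
  have h := ProbabilityTheory.integrable_pow_mul_exp_of_mem_interior_integrableExpSet (muw_mem hs) n
  rw [muw_int_iff] at h
  refine h.ofReal (𝕜 := ℂ) |>.congr (Eventually.of_forall fun t => ?_)
  change ((wf t * ((-t) ^ n * Real.exp (s * -t)) : ℝ) : ℂ) = _
  simp only [mul_neg]; push_cast; ring

lemma mon_der {s : ℝ} (hs : |s| < 2 * Real.pi) (n : ℕ) :
    HasDerivAt (fun s : ℝ => ∫ t : ℝ, (-t : ℂ) ^ n * ((Real.exp (-(s * t)) * wf t : ℝ) : ℂ))
     (∫ t : ℝ, (-t : ℂ) ^ (n + 1) * ((Real.exp (-(s * t)) * wf t : ℝ) : ℂ)) s := by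
  have h := ProbabilityTheory.hasDerivAt_integral_pow_mul_exp (X := fun t : ℝ => -t) (μ := muw)
    (z := (s : ℂ)) (by simpa using muw_mem hs) n
  have h2 := h.comp_ofReal
  have key : ∀ (m : ℕ) (s : ℝ), ∫ t : ℝ, (((-t : ℝ) : ℂ)) ^ m * Complex.exp ((s : ℂ) * ((-t : ℝ) : ℂ)) ∂muw =
      ∫ t : ℝ, (-t : ℂ) ^ m * ((Real.exp (-(s * t)) * wf t : ℝ) : ℂ) := by
    intro m s
    rw [muw_integral]
    refine integral_congr_ae (Eventually.of_forall fun t => ?_)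
    simp only [Complex.real_smul]; push_cast; ring_nf
  rw [key] at h2
  simp_rw [key] at h2
  exact h2

open Polynomial in
lemma pol_int (R : ℂ[X]) {s : ℝ} (hs : |s| < 2 * Real.pi) :
    Integrable (fun t : ℝ => R.eval (-t : ℂ) * ((Real.exp (-(s * t)) * wf t : ℝ) : ℂ)) := by
  induction R using Polynomial.induction_on' with
  | add p q hp hq =>
    refine (hp.add hq).congr (Eventually.of_forall fun t => ?_)
    simp only [Pi.add_apply, eval_add]; ring
  | monomial n a =>
    refine ((mon_int hs n).const_mul a).congr (Eventually.of_forall fun t => ?_)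
    simp only [eval_monomial]; ring

open Polynomial in
lemma pol_der (R : ℂ[X]) {s : ℝ} (hs : |s| < 2 * Real.pi) :
    HasDerivAt (fun s : ℝ => ∫ t : ℝ, R.eval (-t : ℂ) * ((Real.exp (-(s * t)) * wf t : ℝ) : ℂ))
     (∫ t : ℝ, (X * R).eval (-t : ℂ) * ((Real.exp (-(s * t)) * wf t : ℝ) : ℂ)) s := by
  induction R using Polynomial.induction_on' with
  | add p q hp hq =>
    have h1 := hp.add hq
    rw [← integral_add (pol_int _ hs) (pol_int _ hs)] at h1
    refine (h1.congr_of_eventuallyEq ?_).congr_deriv ?_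
    · have : ∀ᶠ u in 𝓝 s, |u| < 2 * Real.pi :=
        (continuous_abs.tendsto s).eventually (gt_mem_nhds hs)
      filter_upwards [this] with u hu
      rw [Pi.add_apply, ← integral_add (pol_int _ hu) (pol_int _ hu)]
      refine integral_congr_ae (Eventually.of_forall fun t => ?_)
      simp only [eval_add]; ring
    · refine integral_congr_ae (Eventually.of_forall fun t => ?_)
      simp only [eval_add, eval_mul]; ring
  | monomial n a =>
    have h1 := (mon_der hs n).const_mul a
    simp_rw [← integral_const_mul] at h1
    refine (h1.congr_of_eventuallyEq (Eventually.of_forall fun u => ?_)).congr_deriv ?_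
    · refine integral_congr_ae (Eventually.of_forall fun t => ?_)
      simp only [eval_monomial]; ring
    · refine integral_congr_ae (Eventually.of_forall fun t => ?_)
      simp only [eval_monomial, eval_mul, eval_X]; ring

open Polynomial

noncomputable def lam (P : ℂ[X]) (s : ℝ) : ℂ :=
  ∫ t : ℝ, P.eval (-1 / 2 + Complex.I * t) * ((Real.exp (-(s * t)) * wf t : ℝ) : ℂ)

lemma lam_comp (P : ℂ[X]) (t : ℝ) : (P.comp (C (-1 / 2) + C (-Complex.I) * X)).eval (-t : ℂ) =
    P.eval (-1 / 2 + Complex.I * t) := by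
  simp

lemma lam_int (P : ℂ[X]) {s : ℝ} (hs : |s| < 2 * Real.pi) :
    Integrable (fun t : ℝ => P.eval (-1 / 2 + Complex.I * t) * ((Real.exp (-(s * t)) * wf t : ℝ) : ℂ)) := by
  have := pol_int (P.comp (C (-1 / 2) + C (-Complex.I) * X)) hs
  simp_rw [lam_comp] at this
  exact this

lemma lam_add (P Q : ℂ[X]) {s : ℝ} (hs : |s| < 2 * Real.pi) : lam (P + Q) s = lam P s + lam Q s := by
  unfold lam
  rw [← integral_add (lam_int P hs) (lam_int Q hs)]
  simp_rw [eval_add, add_mul]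

lemma lam_C_mul (a : ℂ) (P : ℂ[X]) (s : ℝ) : lam (C a * P) s = a * lam P s := by
  unfold lam
  rw [← integral_const_mul]
  simp_rw [eval_mul, eval_C, mul_assoc]

lemma lam_der (P : ℂ[X]) {s : ℝ} (hs : |s| < 2 * Real.pi) :
    HasDerivAt (lam P) (Complex.I * lam (X * P) s + Complex.I / 2 * lam P s) s := by
  have h := pol_der (P.comp (C (-1 / 2) + C (-Complex.I) * X)) hs
  simp_rw [eval_mul, lam_comp] at h
  refine h.congr_deriv ?_
  unfold lam
  rw [← integral_const_mul, ← integral_const_mul, ← integral_add]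
  · refine integral_congr_ae (Eventually.of_forall fun t => ?_)
    simp only [eval_mul, eval_X]
    linear_combination (-(t:ℂ)) * (eval (-1 / 2 + Complex.I * ↑t) P) * (((Real.exp (-(s * t)) * wf t : ℝ) : ℂ)) * Complex.I_mul_I
  · exact (lam_int _ hs).const_mul _
  · exact (lam_int _ hs).const_mul _

lemma lam_one {s : ℝ} (hs : |s| < 2 * Real.pi) (h0 : s ≠ 0) :
    lam 1 s = ((Real.pi * s / Real.sin (s / 2) : ℝ) : ℂ) := by
  unfold lam
  simp only [eval_one, one_mul]
  rw [integral_complex_ofReal, wf_lap hs h0]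

end Bfour

open MeasureTheory Filter Topology Set

namespace Bfour
open Polynomial

noncomputable def dl (k : ℕ) (P : ℂ[X]) : ℂ :=
  ∑ j ∈ Finset.range (k + 1), (-1) ^ (k - j) * (k.choose j : ℂ) * P.eval (j : ℂ)

lemma dl_add (k : ℕ) (P Q : ℂ[X]) : dl k (P + Q) = dl k P + dl k Q := by
  unfold dl
  rw [← Finset.sum_add_distrib]
  simp_rw [eval_add, mul_add]

lemma dl_C_mul (k : ℕ) (a : ℂ) (P : ℂ[X]) : dl k (C a * P) = a * dl k P := by
  unfold dl
  rw [Finset.mul_sum]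
  refine Finset.sum_congr rfl fun j _ => ?_
  rw [eval_mul, eval_C]; ring

lemma dl_zero_of_lt (k : ℕ) (P : ℂ[X]) (h : P.natDegree < k) : dl k P = 0 := by
  have h1 := congrFun (P.fwdDiff_iter_eq_zero_of_degree_lt h) 0
  rw [fwdDiff_iter_eq_sum_shift] at h1
  refine Eq.trans ?_ h1
  unfold dl
  refine Finset.sum_congr rfl fun j _ => ?_
  simp

lemma dl_zero_X_mul (P : ℂ[X]) : dl 0 (X * P) = 0 := by simp [dl]

lemma dl_X_mul (k : ℕ) (P : ℂ[X]) : dl (k + 1) (X * P) = (k + 1) * (dl (k + 1) P + dl k P) := by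
  unfold dl
  have h1 : ∑ j ∈ Finset.range (k + 1), (-1 : ℂ) ^ (k - j) * (k.choose j : ℂ) * P.eval (j : ℂ) =
      ∑ j ∈ Finset.range (k + 1 + 1), -((-1 : ℂ) ^ (k + 1 - j) * (k.choose j : ℂ) * P.eval (j : ℂ)) := by
    rw [Finset.sum_range_succ _ (k + 1)]
    simp only [Nat.choose_succ_self, Nat.cast_zero, mul_zero, zero_mul, neg_zero, add_zero]
    refine Finset.sum_congr rfl fun j hj => ?_
    rw [Finset.mem_range] at hj
    rw [Nat.succ_sub (by omega), pow_succ]; ring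
  rw [h1, ← Finset.sum_add_distrib, Finset.mul_sum]
  refine Finset.sum_congr rfl fun j hj => ?_
  rw [eval_mul, eval_X]
  have h2 : (j : ℂ) * ((k + 1).choose j : ℂ) = (k + 1) * (((k + 1).choose j : ℂ) - (k.choose j : ℂ)) := by
    cases j with
    | zero => simp
    | succ j =>
      have h3 := Nat.add_one_mul_choose_eq k j
      have h4 := Nat.choose_succ_succ k j
      have h5 : ((k : ℂ) + 1) * (k.choose j : ℂ) = ((k + 1).choose (j + 1) : ℂ) * ((j : ℂ) + 1) := by
        exact_mod_cast h3
      have h6 : ((k + 1).choose (j + 1) : ℂ) = (k.choose j : ℂ) + (k.choose (j + 1) : ℂ) := by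
        exact_mod_cast h4
      push_cast
      rw [h6] at h5 ⊢
      linear_combination -h5
  linear_combination (-1 : ℂ) ^ (k + 1 - j) * P.eval (j : ℂ) * h2

noncomputable def Ek (k : ℕ) (s : ℝ) : ℂ :=
  Complex.exp (Complex.I * s) ^ k / (1 - Complex.exp (Complex.I * s)) ^ (k + 1)

lemma Ek_der (k : ℕ) {s : ℝ} (h : 1 - Complex.exp (Complex.I * s) ≠ 0) :
    HasDerivAt (Ek k) (Complex.I * (k * Ek k s + (k + 1) * Ek (k + 1) s)) s := by
  have h1 : HasDerivAt (fun s : ℝ => Complex.exp (Complex.I * s))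
      (Complex.exp (Complex.I * s) * Complex.I) s := by
    have : HasDerivAt (fun s : ℝ => Complex.I * (s : ℂ)) Complex.I s := by
      simpa using (Complex.ofRealCLM.hasDerivAt (x := s)).const_mul Complex.I
    exact this.cexp
  have h2 := (h1.pow k).div ((h1.const_sub 1).pow (k + 1)) (pow_ne_zero _ h)
  refine h2.congr_deriv ?_
  unfold Ek
  simp only [Pi.pow_apply]
  clear h1 h2
  generalize Complex.exp (Complex.I * s) = z at *
  cases k with
  | zero => simp; field_simp
  | succ k =>
    simp only [Nat.add_sub_cancel]
    push_cast
    field_simp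
    ring

noncomputable def Dk (M : ℕ) (P : ℂ[X]) (s : ℝ) : ℂ := ∑ k ∈ Finset.range M, dl k P * Ek k s

lemma Dk_add (M : ℕ) (P Q : ℂ[X]) (s : ℝ) : Dk M (P + Q) s = Dk M P s + Dk M Q s := by
  unfold Dk
  rw [← Finset.sum_add_distrib]
  simp_rw [dl_add, add_mul]

lemma Dk_C_mul (M : ℕ) (a : ℂ) (P : ℂ[X]) (s : ℝ) : Dk M (C a * P) s = a * Dk M P s := by
  unfold Dk
  rw [Finset.mul_sum]
  simp_rw [dl_C_mul, mul_assoc]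

lemma Dk_der (M : ℕ) (P : ℂ[X]) (hP : P.natDegree < M) {s : ℝ}
    (h : 1 - Complex.exp (Complex.I * s) ≠ 0) :
    HasDerivAt (Dk (M + 1) P) (Complex.I * Dk (M + 1) (X * P) s) s := by
  have h1 : HasDerivAt (fun s => ∑ k ∈ Finset.range (M + 1), dl k P * Ek k s)
      (∑ k ∈ Finset.range (M + 1), dl k P * (Complex.I * (k * Ek k s + (k + 1) * Ek (k + 1) s))) s :=
    HasDerivAt.fun_sum fun k _ => (Ek_der k h).const_mul _
  refine h1.congr_deriv ?_
  unfold Dk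
  have e1 : ∑ k ∈ Finset.range (M + 1), dl k P * (Complex.I * (k * Ek k s + (k + 1) * Ek (k + 1) s)) =
      Complex.I * (∑ k ∈ Finset.range (M + 1), dl k P * (k * Ek k s) +
        ∑ k ∈ Finset.range (M + 1), dl k P * ((k + 1) * Ek (k + 1) s)) := by
    rw [← Finset.sum_add_distrib, Finset.mul_sum]
    refine Finset.sum_congr rfl fun k _ => ?_
    ring
  rw [e1]
  congr 1
  rw [Finset.sum_range_succ' (fun k => dl k (X * P) * Ek k s), dl_zero_X_mul, zero_mul, add_zero,
    Finset.sum_range_succ' (fun k => dl k P * (k * Ek k s)),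
    Finset.sum_range_succ (fun k => dl k P * ((k + 1) * Ek (k + 1) s)), dl_zero_of_lt M P hP]
  simp only [Nat.cast_zero, zero_mul, mul_zero, add_zero]
  rw [← Finset.sum_add_distrib]
  refine Finset.sum_congr rfl fun k _ => ?_
  rw [dl_X_mul]; push_cast; ring

noncomputable def RHS (M : ℕ) (P : ℂ[X]) (s : ℝ) : ℂ :=
  -2 * Real.pi * Complex.I * Complex.exp (Complex.I * s / 2) *
    (s * Dk M P s - Complex.I * Dk M (derivative P) s)

lemma exp_ne {s : ℝ} (hs : |s| < 2 * Real.pi) (h0 : s ≠ 0) : 1 - Complex.exp (Complex.I * s) ≠ 0 := by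
  intro h
  have h1 : Complex.exp (Complex.I * s) = 1 := by linear_combination -h
  rw [Complex.exp_eq_one_iff] at h1
  obtain ⟨n, hn⟩ := h1
  have h2 : (s : ℂ) = ((n * (2 * Real.pi) : ℝ) : ℂ) := by
    push_cast
    have := Complex.I_ne_zero
    apply mul_left_cancel₀ this
    rw [hn]; ring
  have h3 : s = n * (2 * Real.pi) := by exact_mod_cast h2
  have hp := Real.pi_pos
  rw [h3, abs_mul, abs_of_pos (a := 2 * Real.pi) (by positivity)] at hs
  have h4 : |(n : ℝ)| < 1 := by
    by_contra h5
    push Not at h5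
    nlinarith
  have h5 : |n| < 1 := by exact_mod_cast h4
  have h6 : n = 0 := by rwa [Int.abs_lt_one_iff] at h5
  apply h0; rw [h3, h6]; simp

lemma main_X (M : ℕ) (P : ℂ[X]) (hP : P.natDegree < M)
    (ih : ∀ s : ℝ, |s| < 2 * Real.pi → s ≠ 0 → lam P s = RHS (M + 1) P s) :
    ∀ s : ℝ, |s| < 2 * Real.pi → s ≠ 0 → lam (X * P) s = RHS (M + 1) (X * P) s := by
  intro s hs h0
  have hz := exp_ne hs h0
  have h1 := lam_der P hs
  have h2 : HasDerivAt (fun s : ℝ => Complex.exp (Complex.I * s / 2))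
      (Complex.exp (Complex.I * s / 2) * (Complex.I / 2)) s := by
    have : HasDerivAt (fun s : ℝ => Complex.I * (s : ℂ) / 2) (Complex.I / 2) s := by
      simpa using ((Complex.ofRealCLM.hasDerivAt (x := s)).const_mul Complex.I).div_const 2
    exact this.cexp
  have h2s : HasDerivAt (fun s : ℝ => (s : ℂ)) 1 s := Complex.ofRealCLM.hasDerivAt (x := s)
  have h3 := (h2.const_mul (-2 * Real.pi * Complex.I)).mul
    ((h2s.mul (Dk_der M P hP hz)).sub ((Dk_der M (derivative P)
      (lt_of_le_of_lt (natDegree_derivative_le P) (by omega)) hz).const_mul Complex.I))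
  have h4 : lam P =ᶠ[𝓝 s] RHS (M + 1) P := by
    have a1 : ∀ᶠ u in 𝓝 s, |u| < 2 * Real.pi :=
      (continuous_abs.tendsto s).eventually (gt_mem_nhds hs)
    filter_upwards [a1, isOpen_ne.mem_nhds h0] with u hu hu0 using ih u hu hu0
  have h5 := (h1.congr_of_eventuallyEq h4.symm).unique h3
  rw [ih s hs h0] at h5
  have h6 : derivative (X * P) = P + X * derivative P := by
    rw [derivative_mul, derivative_X, one_mul]
  unfold RHS at h5 ⊢
  rw [h6, Dk_add]
  have hI := Complex.I_mul_I
  apply mul_left_cancel₀ Complex.I_ne_zero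
  set e := Complex.exp (Complex.I * s / 2)
  simp only [Pi.sub_apply, Pi.mul_apply] at h5
  linear_combination h5 + (-2 * Complex.I * Real.pi * e * Dk (M + 1) P s) * hI

lemma Dk_one (M : ℕ) (s : ℝ) : Dk (M + 1) 1 s = Ek 0 s := by
  unfold Dk
  rw [Finset.sum_range_succ', Finset.sum_eq_zero]
  · simp [dl]
  · intro k _
    rw [dl_zero_of_lt _ _ (by simp), zero_mul]

lemma Dk_zero (M : ℕ) (s : ℝ) : Dk M 0 s = 0 := by
  unfold Dk dl
  simp

lemma sin_half (s : ℝ) : ((Real.sin (s / 2) : ℝ) : ℂ) =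
    Complex.I / 2 * Complex.exp (-(Complex.I * s / 2)) * (1 - Complex.exp (Complex.I * s)) := by
  push_cast
  rw [Complex.sin, show Complex.exp (Complex.I * s) = Complex.exp (Complex.I * s / 2) * Complex.exp (Complex.I * s / 2) by
    rw [← Complex.exp_add]; ring_nf, show -(↑s / 2) * Complex.I = -(Complex.I * s / 2) by ring,
    show (↑s / 2) * Complex.I = (Complex.I * s / 2) by ring, Complex.exp_neg]
  have := Complex.exp_ne_zero (Complex.I * s / 2)
  field_simp

lemma main_one (M : ℕ) (s : ℝ) (hs : |s| < 2 * Real.pi) (h0 : s ≠ 0) :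
    lam 1 s = RHS (M + 1) 1 s := by
  rw [lam_one hs h0]
  unfold RHS
  rw [derivative_one, Dk_zero, Dk_one, Complex.ofReal_div, sin_half, Complex.exp_neg]
  have h1 := exp_ne hs h0
  have := Complex.exp_ne_zero (Complex.I * s / 2)
  have hI := Complex.I_mul_I
  unfold Ek
  have hI0 := Complex.I_ne_zero
  push_cast
  simp only [pow_zero, pow_one, mul_zero, sub_zero]
  field_simp
  linear_combination (s * (1 - Complex.exp (s * Complex.I))⁻¹) * hI

lemma RHS_add (M : ℕ) (P Q : ℂ[X]) (s : ℝ) : RHS M (P + Q) s = RHS M P s + RHS M Q s := by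
  unfold RHS
  rw [derivative_add, Dk_add, Dk_add]; ring

lemma RHS_C_mul (M : ℕ) (a : ℂ) (P : ℂ[X]) (s : ℝ) : RHS M (C a * P) s = a * RHS M P s := by
  unfold RHS
  rw [derivative_C_mul, Dk_C_mul, Dk_C_mul]; ring

lemma main_formula (M : ℕ) (P : ℂ[X]) (hP : P.natDegree ≤ M) (s : ℝ) (hs : |s| < 2 * Real.pi)
    (h0 : s ≠ 0) : lam P s = RHS (M + 1) P s := by
  have hX : ∀ n ≤ M, ∀ s : ℝ, |s| < 2 * Real.pi → s ≠ 0 → lam (X ^ n) s = RHS (M + 1) (X ^ n) s := by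
    intro n
    induction n with
    | zero => intro _ s hs h0; rw [pow_zero]; exact main_one M s hs h0
    | succ n ih =>
      intro hn
      rw [pow_succ']
      exact main_X M _ (by rw [natDegree_X_pow]; omega) (ih (by omega))
  refine Polynomial.induction_with_natDegree_le (fun P => lam P s = RHS (M + 1) P s) M ?_ ?_ ?_ P hP
  · have h1 := lam_C_mul 0 0 s
    have h2 := RHS_C_mul (M + 1) 0 0 s
    simp only [mul_zero, zero_mul] at h1 h2
    rw [h1, h2]
  · intro n r _ hn
    rw [lam_C_mul, RHS_C_mul, hX n hn s hs h0]
  · intro f g _ _ hf hg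
    rw [lam_add _ _ hs, RHS_add, hf, hg]

end Bfour

open MeasureTheory Filter Topology Set

namespace Bfour
open Polynomial

noncomputable def om : ℂ := (1 + Complex.I * (Real.sqrt 7 : ℝ)) / 2

lemma s7 : ((Real.sqrt 7 : ℝ) : ℂ) * (Real.sqrt 7 : ℝ) = 7 := by
  rw [← Complex.ofReal_mul, Real.mul_self_sqrt (by norm_num)]; norm_num

lemma om_sq : om * om = om - 2 := by
  unfold om
  linear_combination (1 / 4 : ℂ) * (Complex.I * Complex.I) * s7 + (7 / 4 : ℂ) * Complex.I_mul_I

lemma om_im : om.im = Real.sqrt 7 / 2 := by unfold om; simp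
lemma om_re : om.re = 1 / 2 := by unfold om; simp
lemma s7pos : 0 < Real.sqrt 7 := Real.sqrt_pos.2 (by norm_num)

def IsZ (c : ℂ) : Prop := ∃ x y : ℤ, c = x + y * om

lemma IsZ.int (n : ℤ) : IsZ n := ⟨n, 0, by simp⟩
lemma IsZ.add {a b : ℂ} (ha : IsZ a) (hb : IsZ b) : IsZ (a + b) := by
  obtain ⟨x, y, rfl⟩ := ha
  obtain ⟨u, v, rfl⟩ := hb
  exact ⟨x + u, y + v, by push_cast; ring⟩
lemma IsZ.mul {a b : ℂ} (ha : IsZ a) (hb : IsZ b) : IsZ (a * b) := by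
  obtain ⟨x, y, rfl⟩ := ha
  obtain ⟨u, v, rfl⟩ := hb
  exact ⟨x * u - 2 * y * v, x * v + y * u + y * v, by
    push_cast; linear_combination (y * v : ℂ) * om_sq⟩
lemma IsZ.pow {a : ℂ} (ha : IsZ a) (n : ℕ) : IsZ (a ^ n) := by
  induction n with
  | zero => simpa using IsZ.int 1
  | succ n ih => rw [pow_succ]; exact ih.mul ha
lemma IsZ.sum {ι : Type*} (s : Finset ι) (f : ι → ℂ) (h : ∀ i ∈ s, IsZ (f i)) : IsZ (∑ i ∈ s, f i) :=
  Finset.sum_induction f IsZ (fun _ _ => IsZ.add) (by simpa using IsZ.int 0) h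

lemma om_inj {x y u v : ℤ} (h : (x : ℂ) + y * om = u + v * om) : x = u ∧ y = v := by
  have h1 := congrArg Complex.im h
  have h2 := congrArg Complex.re h
  simp only [Complex.add_im, Complex.intCast_im, Complex.mul_im, Complex.intCast_re, zero_mul,
    add_zero, zero_add, om_im, Complex.add_re, Complex.mul_re, sub_zero] at h1 h2
  have h3 : (y : ℝ) = v := mul_right_cancel₀ (by have := s7pos; positivity) h1
  rw [h3] at h2
  have h4 : (x : ℝ) = u := by linarith
  exact ⟨by exact_mod_cast h4, by exact_mod_cast h3⟩

lemma om_pow_odd (g : ℂ) (hg : ∃ u v : ℤ, g = u + v * om ∧ Odd (u + v)) (m : ℕ) :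
    ∃ u v : ℤ, g * om ^ m = u + v * om ∧ Odd (u + v) := by
  induction m with
  | zero => simpa using hg
  | succ m ih =>
    obtain ⟨u, v, h, ho⟩ := ih
    refine ⟨-2 * v, u + v, ?_, ?_⟩
    · rw [pow_succ, ← mul_assoc, h]; push_cast; linear_combination (v : ℂ) * om_sq
    · obtain ⟨w, hw⟩ := ho
      exact ⟨w - v, by omega⟩

lemma div_lemma (g c : ℂ) (hg : ∃ u v : ℤ, g = u + v * om ∧ Odd (u + v)) (m : ℕ) (a : ℤ)
    (hc : IsZ c) (h : a * g = (om - 1) ^ m * c) : (2 : ℤ) ^ m ∣ a := by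
  obtain ⟨u, v, h1, ho⟩ := om_pow_odd g hg m
  obtain ⟨x, y, rfl⟩ := hc
  have h2 : (a : ℂ) * (u + v * om) = (-2) ^ m * (x + y * om) := by
    rw [← h1, ← mul_assoc, h, show (-2 : ℂ) = (om - 1) * om by linear_combination -om_sq, mul_pow]
    ring
  have h3 : (((a * u : ℤ)) : ℂ) + ((a * v : ℤ) : ℂ) * om =
      (((-2) ^ m * x : ℤ) : ℂ) + (((-2) ^ m * y : ℤ) : ℂ) * om := by
    push_cast; linear_combination h2
  obtain ⟨h4, h5⟩ := om_inj h3
  have h6 : (-2 : ℤ) ^ m ∣ a * (u + v) := ⟨x + y, by linear_combination h4 + h5⟩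
  have h7 : (2 : ℤ) ^ m ∣ a * (u + v) := by
    rcases Nat.even_or_odd m with hm | hm
    · rwa [hm.neg_pow] at h6
    · rw [hm.neg_pow] at h6; exact (neg_dvd).1 h6
  refine IsCoprime.dvd_of_dvd_mul_right (IsCoprime.pow_left ?_) h7
  obtain ⟨w, hw⟩ := ho
  exact ⟨-w, 1, by rw [hw]; ring⟩

noncomputable def th : ℝ := Real.arctan (Real.sqrt 7 / 3)

lemma th_pos : 0 < th := by
  unfold th
  rw [← Real.arctan_zero]
  exact Real.arctan_strictMono (by have := s7pos; positivity)
lemma th_lt : th < Real.pi / 2 := Real.arctan_lt_pi_div_two _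

lemma th_sqrt : Real.sqrt (1 + (Real.sqrt 7 / 3) ^ 2) = 4 / 3 := by
  rw [div_pow, Real.sq_sqrt (by norm_num), Real.sqrt_eq_iff_eq_sq] <;> norm_num

lemma exp_th : Complex.exp (Complex.I * th) = 3 / 4 + Complex.I * (Real.sqrt 7 : ℝ) / 4 := by
  rw [mul_comm, Complex.exp_mul_I, ← Complex.ofReal_cos, ← Complex.ofReal_sin, th, Real.cos_arctan,
    Real.sin_arctan, th_sqrt]
  push_cast
  ring

lemma one_sub_exp : (1 - Complex.exp (Complex.I * th)) * om = 1 := by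
  rw [exp_th]; unfold om
  linear_combination (-1 / 8 : ℂ) * (Complex.I * Complex.I) * s7 + (-7 / 8 : ℂ) * Complex.I_mul_I

lemma exp_om : Complex.exp (Complex.I * th) * om = om - 1 := by
  linear_combination -one_sub_exp

lemma Ek_th (k : ℕ) : Ek k th = om * (om - 1) ^ k := by
  unfold Ek
  have h0 : 1 - Complex.exp (Complex.I * th) ≠ 0 := by
    intro h; have := one_sub_exp; rw [h] at this; simp at this
  rw [div_eq_iff (pow_ne_zero _ h0), ← exp_om, mul_pow]
  have h1 : om ^ (k + 1) * (1 - Complex.exp (Complex.I * th)) ^ (k + 1) = 1 := by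
    rw [← mul_pow, mul_comm, one_sub_exp, one_pow]
  rw [pow_succ] at h1
  linear_combination -(Complex.exp (Complex.I * th)) ^ k * h1

lemma exp_th' : Complex.exp (Complex.I * ((th - 2 * Real.pi : ℝ) : ℂ)) = Complex.exp (Complex.I * th) := by
  rw [show Complex.I * ((th - 2 * Real.pi : ℝ) : ℂ) = Complex.I * th - 2 * Real.pi * Complex.I by
    push_cast; ring, Complex.exp_periodic.sub_eq]

lemma Ek_th' (k : ℕ) : Ek k (th - 2 * Real.pi) = om * (om - 1) ^ k := by
  rw [← Ek_th]; unfold Ek; rw [exp_th']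

noncomputable def cc : ℂ := Complex.exp (Complex.I * th / 2) * om

lemma cc_eq : cc = Complex.I * (Real.sqrt 2 : ℝ) ∨ cc = -(Complex.I * (Real.sqrt 2 : ℝ)) := by
  rw [← sq_eq_sq_iff_eq_or_eq_neg]
  have h1 : Complex.exp (Complex.I * th / 2) * Complex.exp (Complex.I * th / 2) =
      Complex.exp (Complex.I * th) := by rw [← Complex.exp_add]; ring_nf
  have h2 : ((Real.sqrt 2 : ℝ) : ℂ) * (Real.sqrt 2 : ℝ) = 2 := by
    rw [← Complex.ofReal_mul, Real.mul_self_sqrt (by norm_num)]; norm_num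
  unfold cc
  linear_combination om * om * h1 + om * exp_om + om_sq - Complex.I * Complex.I * h2 - 2 * Complex.I_mul_I

noncomputable def rr (M : ℕ) (P : ℂ[X]) : ℂ := ∑ k ∈ Finset.range M, dl k P * (om - 1) ^ k

lemma lam_th (M : ℕ) (P : ℂ[X]) (hP : P.natDegree ≤ M) : lam P th =
    -2 * Real.pi * Complex.I * cc * (th * rr (M + 1) P - Complex.I * rr (M + 1) (derivative P)) := by
  have h1 := th_pos
  have h2 := th_lt
  rw [main_formula M P hP th (by rw [abs_of_pos h1]; linarith) h1.ne']
  unfold RHS Dk rr cc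
  simp_rw [Ek_th]
  have : ∀ Q : ℂ[X], ∑ k ∈ Finset.range (M + 1), dl k Q * (om * (om - 1) ^ k) =
      om * ∑ k ∈ Finset.range (M + 1), dl k Q * (om - 1) ^ k := by
    intro Q; rw [Finset.mul_sum]; refine Finset.sum_congr rfl fun k _ => ?_; ring
  rw [this, this]; ring

lemma lam_th' (M : ℕ) (P : ℂ[X]) (hP : P.natDegree ≤ M) : lam P (th - 2 * Real.pi) =
    2 * Real.pi * Complex.I * cc * ((th - 2 * Real.pi) * rr (M + 1) P -
      Complex.I * rr (M + 1) (derivative P)) := by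
  have h1 := th_pos
  have h2 := th_lt
  rw [main_formula M P hP _ (by rw [abs_of_neg (by linarith)]; linarith) (by linarith)]
  unfold RHS Dk rr cc
  simp_rw [Ek_th']
  have : ∀ Q : ℂ[X], ∑ k ∈ Finset.range (M + 1), dl k Q * (om * (om - 1) ^ k) =
      om * ∑ k ∈ Finset.range (M + 1), dl k Q * (om - 1) ^ k := by
    intro Q; rw [Finset.mul_sum]; refine Finset.sum_congr rfl fun k _ => ?_; ring
  have e : Complex.exp (Complex.I * ((th - 2 * Real.pi : ℝ) : ℂ) / 2) =
      - Complex.exp (Complex.I * th / 2) := by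
    rw [show Complex.I * ((th - 2 * Real.pi : ℝ) : ℂ) / 2 = Complex.I * th / 2 - Real.pi * Complex.I by
      push_cast; ring, Complex.exp_sub_pi_mul_I]
  rw [this, this, e]; push_cast; ring

lemma rr_isZ (M m : ℕ) (P : ℂ[X]) (l : ℕ) (hP : ∀ j : ℕ, ∃ a : ℤ, (l : ℂ) * P.eval (j : ℂ) = a)
    (h0 : ∀ j < m, P.eval (j : ℂ) = 0) : ∃ c, IsZ c ∧ (l : ℂ) * rr M P = (om - 1) ^ m * c := by
  have hd : ∀ k, IsZ ((l : ℂ) * dl k P) := by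
    intro k
    unfold dl
    rw [Finset.mul_sum]
    refine IsZ.sum _ _ fun j _ => ?_
    obtain ⟨a, ha⟩ := hP j
    refine (congrArg IsZ ?_).mp (IsZ.int ((-1) ^ (k - j) * (k.choose j : ℤ) * a))
    push_cast
    rw [← ha]; ring
  have hz : ∀ k < m, dl k P = 0 := by
    intro k hk
    refine Finset.sum_eq_zero fun j hj => ?_
    rw [Finset.mem_range] at hj
    rw [h0 j (by omega), mul_zero]
  have hom : IsZ (om - 1) := ⟨-1, 1, by push_cast; ring⟩
  refine ⟨∑ k ∈ Finset.range M, (l : ℂ) * dl k P * (om - 1) ^ (k - m),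
    IsZ.sum _ _ fun k _ => (hd k).mul (hom.pow _), ?_⟩
  unfold rr
  rw [Finset.mul_sum, Finset.mul_sum]
  refine Finset.sum_congr rfl fun k _ => ?_
  by_cases hk : k < m
  · rw [hz k hk]; ring
  · obtain ⟨d, rfl⟩ := Nat.exists_eq_add_of_le (not_lt.1 hk)
    rw [Nat.add_sub_cancel_left, pow_add]; ring

lemma lam_real (P : ℂ[X]) (hP : ∀ t : ℝ, (P.eval (-1 / 2 + Complex.I * t)).im = 0) (s : ℝ) :
    ∃ x : ℝ, lam P s = x := by
  refine ⟨∫ t : ℝ, (P.eval (-1 / 2 + Complex.I * t)).re * (Real.exp (-(s * t)) * wf t), ?_⟩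
  unfold lam
  rw [← integral_complex_ofReal]
  refine integral_congr_ae (Eventually.of_forall fun t => ?_)
  simp only
  rw [Complex.ofReal_mul]
  congr 1
  apply Complex.ext <;> simp [hP t]

theorem p4_main (P : ℂ[X]) (l m : ℕ) (hl : 0 < l)
    (hP : ∀ j : ℕ, ∃ a : ℤ, P.eval (j : ℂ) = a)
    (hP' : ∀ j : ℕ, ∃ a : ℤ, (l : ℂ) * (derivative P).eval (j : ℂ) = a)
    (h0 : ∀ j < m, P.eval (j : ℂ) = 0) (h0' : ∀ j < m, (derivative P).eval (j : ℂ) = 0)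
    (hr : ∀ t : ℝ, (P.eval (-1 / 2 + Complex.I * t)).im = 0) :
    ∃ A B : ℤ, (2 : ℝ) ^ m * |(A : ℝ)| * (4 * Real.sqrt 2 * Real.pi ^ 2) =
        l * ‖lam P th + lam P (th - 2 * Real.pi)‖ ∧
      (2 : ℝ) ^ m * |A * (Real.sqrt 7 * th) - B| * (2 * Real.sqrt 2 * Real.pi) =
        Real.sqrt 7 * l * ‖lam P th‖ := by
  set M := P.natDegree with hM
  have e1 := lam_th M P le_rfl
  have e2 := lam_th' M P le_rfl
  obtain ⟨x1, hx1⟩ := lam_real P hr th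
  obtain ⟨x2, hx2⟩ := lam_real P hr (th - 2 * Real.pi)
  have hp := Real.pi_pos
  have hs2 : 0 < Real.sqrt 2 := Real.sqrt_pos.2 (by norm_num)
  have hl0 : (0 : ℝ) < l := by exact_mod_cast hl
  have h7 := s7pos
  -- sign
  obtain ⟨σ, hσ, hcc⟩ : ∃ σ : ℝ, |σ| = 1 ∧ cc = Complex.I * (Real.sqrt 2 : ℝ) * σ := by
    rcases cc_eq with h | h
    · exact ⟨1, by simp, by rw [h]; simp⟩
    · exact ⟨-1, by simp, by rw [h]; simp⟩
  have hσ0 : σ ≠ 0 := by intro h; rw [h] at hσ; simp at hσ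
  set r := rr (M + 1) P with hrdef
  set rB := rr (M + 1) (derivative P) with hrBdef
  have f1 : (x1 : ℂ) = ((2 * Real.sqrt 2 * Real.pi * σ : ℝ) : ℂ) * (th * r - Complex.I * rB) := by
    rw [← hx1, e1, hcc]; push_cast
    linear_combination (-2 * Real.pi * Real.sqrt 2 * σ * (th * r - Complex.I * rB)) * Complex.I_mul_I
  have f2 : ((x1 + x2 : ℝ) : ℂ) = ((4 * Real.sqrt 2 * Real.pi ^ 2 * σ : ℝ) : ℂ) * r := by
    rw [Complex.ofReal_add, ← hx1, ← hx2, e1, e2, hcc]; push_cast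
    linear_combination (-4 * Real.pi ^ 2 * Real.sqrt 2 * σ * r) * Complex.I_mul_I
  have hri : r.im = 0 := by
    have := congrArg Complex.im f2
    rw [Complex.ofReal_im, Complex.im_ofReal_mul] at this
    have hne : 4 * Real.sqrt 2 * Real.pi ^ 2 * σ ≠ 0 := by positivity
    exact (mul_eq_zero.1 this.symm).resolve_left hne
  have hBr : rB.re = 0 := by
    have := congrArg Complex.im f1
    rw [Complex.ofReal_im, Complex.im_ofReal_mul] at this
    have hne : 2 * Real.sqrt 2 * Real.pi * σ ≠ 0 := by positivity
    have h3 := (mul_eq_zero.1 this.symm).resolve_left hne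
    simpa [hri] using h3
  obtain ⟨c1, hc1, hr1⟩ := rr_isZ (M + 1) m P l (fun j => by
    obtain ⟨a, ha⟩ := hP j; exact ⟨l * a, by rw [ha]; push_cast; ring⟩) h0
  obtain ⟨c2, hc2, hr2⟩ := rr_isZ (M + 1) m (derivative P) l hP' h0'
  rw [← hrdef] at hr1
  rw [← hrBdef] at hr2
  have hom : IsZ (om - 1) := ⟨-1, 1, by push_cast; ring⟩
  -- A
  obtain ⟨a, ha⟩ : ∃ a : ℤ, (l : ℂ) * r = a := by
    obtain ⟨x, y, hxy⟩ := (hom.pow m).mul hc1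
    rw [← hr1] at hxy
    have := congrArg Complex.im hxy
    simp [hri, om_im] at this
    exact ⟨x, by rw [hxy, this]; simp⟩
  obtain ⟨b, hb⟩ : ∃ b : ℤ, (l : ℂ) * rB = b * (1 - 2 * om) := by
    obtain ⟨x, y, hxy⟩ := (hom.pow m).mul hc2
    rw [← hr2] at hxy
    have := congrArg Complex.re hxy
    simp [hBr, om_re] at this
    have h4 : (y : ℝ) = ((-2 * x : ℤ) : ℝ) := by push_cast; linarith
    have h5 : y = -2 * x := by exact_mod_cast h4
    exact ⟨x, by rw [hxy, h5]; push_cast; ring⟩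
  obtain ⟨A, hA⟩ := div_lemma 1 c1 ⟨1, 0, by simp, by decide⟩ m a hc1 (by rw [← hr1, ha, mul_one])
  obtain ⟨B, hB⟩ := div_lemma (1 - 2 * om) c2 ⟨1, -2, by push_cast; ring, by decide⟩ m b hc2
    (by rw [← hr2, hb])
  have g1 : (l : ℝ) * r.re = 2 ^ m * A := by
    have := congrArg Complex.re ha
    simp only [Complex.mul_re, Complex.natCast_re, Complex.natCast_im, zero_mul, sub_zero,
      Complex.intCast_re] at this
    rw [this, hA]; push_cast; ring
  have g2 : (l : ℝ) * rB.im = -(2 ^ m * B * Real.sqrt 7) := by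
    have := congrArg Complex.im hb
    simp [om_im] at this
    rw [this, hB]; push_cast; ring
  have k1 : x1 + x2 = (4 * Real.sqrt 2 * Real.pi ^ 2 * σ) * r.re := by
    have := congrArg Complex.re f2
    rwa [Complex.ofReal_re, Complex.re_ofReal_mul] at this
  have k2 : x1 = (2 * Real.sqrt 2 * Real.pi * σ) * (th * r.re + rB.im) := by
    have := congrArg Complex.re f1
    rw [Complex.ofReal_re, Complex.re_ofReal_mul] at this
    simpa using this
  refine ⟨A, 7 * B, ?_, ?_⟩
  · rw [hx1, hx2, ← Complex.ofReal_add, Complex.norm_real, Real.norm_eq_abs, k1, abs_mul, abs_mul, hσ, mul_one,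
      abs_of_pos (a := 4 * Real.sqrt 2 * Real.pi ^ 2) (by positivity)]
    have : |(l : ℝ) * r.re| = |2 ^ m * (A : ℝ)| := by rw [g1]
    rw [abs_mul, abs_mul, abs_of_pos hl0, abs_of_pos (a := (2 : ℝ) ^ m) (by positivity)] at this
    linear_combination -(4 * Real.sqrt 2 * Real.pi ^ 2) * this
  · rw [hx1, Complex.norm_real, Real.norm_eq_abs, k2, abs_mul, abs_mul, hσ, mul_one,
      abs_of_pos (a := 2 * Real.sqrt 2 * Real.pi) (by positivity)]
    have : |Real.sqrt 7 * ((l : ℝ) * (th * r.re + rB.im))| =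
        |2 ^ m * ((A : ℝ) * (Real.sqrt 7 * th) - 7 * B)| := by
      congr 1
      have q := Real.mul_self_sqrt (show (0 : ℝ) ≤ 7 by norm_num)
      linear_combination Real.sqrt 7 * th * g1 + Real.sqrt 7 * g2 - 2 ^ m * B * q
    rw [abs_mul, abs_mul, abs_mul, abs_of_pos hl0, abs_of_pos h7,
      abs_of_pos (a := (2 : ℝ) ^ m) (by positivity)] at this
    push_cast
    linear_combination -(2 * Real.sqrt 2 * Real.pi) * this

end Bfour

open MeasureTheory Filter Topology Set
namespace Bfour
open Polynomial

lemma int_deriv (F : ℂ[X]) (m d : ℕ) (hm : 0 < m) (hdeg : F.natDegree ≤ m)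
    (hd : ∀ k, 1 ≤ k → k ≤ m → k ∣ d)
    (hF : ∀ j : ℕ, ∃ a : ℤ, F.eval (j : ℂ) = a) (ν : ℕ) :
    ∃ a : ℤ, (d : ℂ) * (derivative F).eval (ν : ℂ) = a := by
  set H := F /ₘ (X - C (ν : ℂ)) with hH
  have hmon := monic_X_sub_C (ν : ℂ)
  have e : F = C (F.eval (ν : ℂ)) + (X - C (ν : ℂ)) * H := by
    conv_lhs => rw [← modByMonic_add_div F (X - C (ν : ℂ))]
    rw [modByMonic_X_sub_C_eq_C_eval]
  have hdH : H.natDegree < m := by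
    rw [hH, natDegree_divByMonic F hmon, natDegree_X_sub_C]; omega
  have hD : (derivative F).eval (ν : ℂ) = H.eval (ν : ℂ) := by
    rw [e]; simp
  have h0 := congrFun (Polynomial.fwdDiff_iter_eq_zero_of_degree_lt hdH) (ν : ℂ)
  rw [fwdDiff_iter_eq_sum_shift, Finset.sum_range_succ'] at h0
  simp only [zero_smul, add_zero, Nat.choose_zero_right, Pi.zero_apply] at h0
  have key : ∀ k ∈ Finset.range m, ∃ a : ℤ,
      (d : ℂ) * H.eval ((ν : ℂ) + (k + 1) • (1 : ℂ)) = a := by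
    intro k hk
    obtain ⟨a, ha⟩ := hF (ν + (k + 1))
    obtain ⟨b, hb⟩ := hF ν
    obtain ⟨c, hc⟩ := hd (k + 1) (by omega) (by have := Finset.mem_range.1 hk; omega)
    have e2 := congrArg (Polynomial.eval (((ν + (k + 1) : ℕ)) : ℂ)) e
    rw [ha] at e2
    simp only [eval_add, eval_C, eval_mul, eval_sub, eval_X, hb] at e2
    push_cast at e2
    have e3 : ((k : ℂ) + 1) * H.eval ((ν : ℂ) + (k + 1)) = a - b := by
      rw [e2]; ring
    refine ⟨c * (a - b), ?_⟩
    rw [hc]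
    simp only [nsmul_eq_mul, mul_one]
    push_cast
    linear_combination (c : ℂ) * e3
  choose! g hg using key
  refine ⟨(-1) ^ (m + 1) * ∑ k ∈ Finset.range m, ((-1 : ℤ) ^ (m - (k + 1)) * (m.choose (k + 1))) * g k, ?_⟩
  rw [hD]
  push_cast
  have h1 : ∑ k ∈ Finset.range m, ((-1 : ℂ) ^ (m - (k + 1)) * (m.choose (k + 1))) * (g k : ℂ)
      = d * ∑ k ∈ Finset.range m, (((-1 : ℤ) ^ (m - (k + 1)) * (m.choose (k + 1) : ℕ)) : ℤ) • H.eval ((ν : ℂ) + (k + 1) • (1 : ℂ)) := by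
    rw [Finset.mul_sum]
    refine Finset.sum_congr rfl fun k hk => ?_
    rw [← hg k hk, zsmul_eq_mul]; push_cast; ring
  rw [h1, eq_neg_of_add_eq_zero_left h0, zsmul_eq_mul]
  push_cast
  have : ((-1 : ℂ) ^ m) * (-1) ^ m = 1 := by rw [← mul_pow]; simp
  simp only [Nat.sub_zero, pow_succ, mul_one]
  linear_combination -(d * eval (ν : ℂ) H) * this

def rt (K i : ℕ) : ℂ := (i : ℂ) - K

noncomputable def bp (K : ℕ) : ℂ[X] :=
  C (1 / ((2 * K).factorial : ℂ)) * ∏ i ∈ Finset.range (2 * K), (X + C ((K : ℂ) - i))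

lemma bp_eval (K : ℕ) (x : ℂ) : (bp K).eval x =
    (∏ i ∈ Finset.range (2 * K), (x + K - i)) / ((2 * K).factorial : ℂ) := by
  simp [bp, eval_prod, add_sub_assoc]; ring

lemma bp_eval_nat (K j : ℕ) : (bp K).eval (j : ℂ) = ((j + K).choose (2 * K) : ℕ) := by
  rw [bp_eval, Nat.choose_eq_descFactorial_div_factorial,
    Nat.cast_div (Nat.factorial_dvd_descFactorial _ _) (by exact_mod_cast (Nat.factorial_ne_zero _)),
    ← descPochhammer_eval_eq_descFactorial, descPochhammer_eval_eq_prod_range]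
  push_cast; rfl

lemma bp_deg (K : ℕ) : (bp K).natDegree ≤ 2 * K := by
  unfold bp
  refine (natDegree_C_mul_le _ _).trans ?_
  refine (natDegree_prod_le _ _).trans ?_
  simp only [natDegree_X_add_C]; simp

noncomputable def Pp (N : ℕ) : ℂ[X] := bp (7 * N) * bp (5 * N) * bp (3 * N)

lemma Pp_int (N j : ℕ) : ∃ a : ℤ, (Pp N).eval (j : ℂ) = a := by
  refine ⟨((j + 7 * N).choose (2 * (7 * N)) * (j + 5 * N).choose (2 * (5 * N)) *
    (j + 3 * N).choose (2 * (3 * N)) : ℕ), ?_⟩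
  simp [Pp, bp_eval_nat]

lemma dvd_lcmUpto {k n : ℕ} (h1 : 1 ≤ k) (h2 : k ≤ n) : k ∣ Nat.lcmUpto n :=
  Finset.dvd_lcm (f := id) (Finset.mem_Icc.2 ⟨h1, h2⟩)

lemma bp_der_int (K n : ℕ) (hK : 0 < K) (h : 2 * K ≤ n) (ν : ℕ) :
    ∃ a : ℤ, (Nat.lcmUpto n : ℂ) * (derivative (bp K)).eval (ν : ℂ) = a :=
  int_deriv _ (2 * K) _ (by omega) (bp_deg K) (fun _ h1 h2 => dvd_lcmUpto h1 (h2.trans h))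
    (fun j => ⟨((j + K).choose (2 * K) : ℕ), by rw [bp_eval_nat]; simp⟩) ν

lemma Pp_der_int (N : ℕ) (hN : 0 < N) (ν : ℕ) :
    ∃ a : ℤ, (Nat.lcmUpto (14 * N) : ℂ) * (derivative (Pp N)).eval (ν : ℂ) = a := by
  obtain ⟨a, ha⟩ := bp_der_int (7 * N) (14 * N) (by omega) (by omega) ν
  obtain ⟨b, hb⟩ := bp_der_int (5 * N) (14 * N) (by omega) (by omega) ν
  obtain ⟨c, hc⟩ := bp_der_int (3 * N) (14 * N) (by omega) (by omega) ν
  have h7 := bp_eval_nat (7 * N) ν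
  have h5 := bp_eval_nat (5 * N) ν
  have h3 := bp_eval_nat (3 * N) ν
  set x7 := (ν + 7 * N).choose (2 * (7 * N))
  set x5 := (ν + 5 * N).choose (2 * (5 * N))
  set x3 := (ν + 3 * N).choose (2 * (3 * N))
  refine ⟨a * x5 * x3 + b * x7 * x3 + c * x7 * x5, ?_⟩
  simp only [Pp, derivative_mul, eval_add, eval_mul, h7, h5, h3]
  push_cast
  rw [← ha, ← hb, ← hc]; ring

lemma bp_van (K j : ℕ) (h : j < K) : (bp K).eval (j : ℂ) = 0 := by
  rw [bp_eval_nat, Nat.choose_eq_zero_of_lt (by omega)]; simp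

lemma Pp_van (N j : ℕ) (h : j < 5 * N) : (Pp N).eval (j : ℂ) = 0 := by
  simp [Pp, bp_van (5 * N) j h]

lemma Pp_van' (N j : ℕ) (h : j < 5 * N) : (derivative (Pp N)).eval (j : ℂ) = 0 := by
  simp [Pp, derivative_mul, bp_van (5 * N) j h, bp_van (7 * N) j (by omega)]

end Bfour

open MeasureTheory Filter Topology Set
namespace Bfour
open Polynomial

def cnd (p r : ℤ) : Prop :=
  (p ≤ 12 * r ∧ 14 * r < 3 * p) ∨ (p ≤ 4 * r ∧ 14 * r < 5 * p) ∨ (3 * p ≤ 8 * r ∧ 7 * r < 3 * p) ∨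
  (7 * p ≤ 12 * r ∧ 7 * r < 5 * p) ∨ (3 * p ≤ 4 * r ∧ 7 * r < 6 * p) ∨
  (7 * p ≤ 8 * r ∧ 14 * r < 13 * p)

lemma dsplit (p x : ℤ) (n : ℕ) (hp : 0 < p) (h0 : 0 ≤ x) (h1 : x < (n : ℤ) * p) :
    ∃ f : ℤ, x / p = f ∧ p * f ≤ x ∧ x < p * f + p ∧ 0 ≤ f ∧ f < n :=
  ⟨x / p, rfl, Int.mul_ediv_self_le hp.ne', Int.lt_mul_ediv_self_add hp, Int.ediv_nonneg h0 hp.le,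
    by rw [Int.ediv_lt_iff_lt_mul hp]; exact h1⟩

lemma g0 (p s y : ℤ) (hp : 0 < p) : 0 ≤ (s + y) / p - (s - y) / p - (2 * y) / p := by
  have h2 : p * ((s - y) / p) ≤ s - y := Int.mul_ediv_self_le hp.ne'
  have h3 : p * ((2 * y) / p) ≤ 2 * y := Int.mul_ediv_self_le hp.ne'
  have : (s - y) / p + (2 * y) / p ≤ (s + y) / p := by
    rw [Int.le_ediv_iff_mul_le hp]; linarith
  linarith

/-- if the `y`-difference vanishes then remainders compare -/
lemma g1 (p s y : ℤ) (hp : 0 < p) (h : (s + y) / p - (s - y) / p - (2 * y) / p ≤ 0) :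
    2 * y - p * ((2 * y) / p) ≤ s + y - p * ((s + y) / p) := by
  have h2 : p * ((s - y) / p) ≤ s - y := Int.mul_ediv_self_le hp.ne'
  have h3 : p * ((s + y) / p - (s - y) / p - (2 * y) / p) ≤ p * 0 :=
    mul_le_mul_of_nonneg_left h hp.le
  linarith

lemma core (p r s : ℤ) (hp : 0 < p) (hr0 : 0 ≤ r) (hr1 : r < p) (hs0 : 0 ≤ s) (hs1 : s < p) (hc : cnd p r) :
    1 ≤ ((s + 7 * r) / p - (s - 7 * r) / p - (2 * (7 * r)) / p) +
     ((s + 5 * r) / p - (s - 5 * r) / p - (2 * (5 * r)) / p) +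
     ((s + 3 * r) / p - (s - 3 * r) / p - (2 * (3 * r)) / p) := by
  by_contra hcon
  have z7 := g0 p s (7 * r) hp
  have z5 := g0 p s (5 * r) hp
  have z3 := g0 p s (3 * r) hp
  have k7 := g1 p s (7 * r) hp (by omega)
  have k5 := g1 p s (5 * r) hp (by omega)
  have k3 := g1 p s (3 * r) hp (by omega)
  clear z7 z5 z3 hcon
  obtain ⟨D7, e7, u7, v7, w7, x7⟩ := dsplit p (2 * (7 * r)) 14 hp (by omega) (by push_cast; omega)
  obtain ⟨D5, e5, u5, v5, w5, x5⟩ := dsplit p (2 * (5 * r)) 10 hp (by omega) (by push_cast; omega)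
  obtain ⟨D3, e3, u3, v3, w3, x3⟩ := dsplit p (2 * (3 * r)) 6 hp (by omega) (by push_cast; omega)
  obtain ⟨A7, E7, U7, V7, W7, X7⟩ := dsplit p (s + 7 * r) 8 hp (by omega) (by push_cast; omega)
  obtain ⟨A5, E5, U5, V5, W5, X5⟩ := dsplit p (s + 5 * r) 6 hp (by omega) (by push_cast; omega)
  obtain ⟨A3, E3, U3, V3, W3, X3⟩ := dsplit p (s + 3 * r) 4 hp (by omega) (by push_cast; omega)
  rw [e7, E7] at k7
  rw [e5, E5] at k5
  rw [e3, E3] at k3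
  clear e7 e5 e3 E7 E5 E3
  push_cast at *
  unfold cnd at hc
  rcases hc with hc | hc | hc | hc | hc | hc <;> interval_cases D7 <;> try omega
  all_goals (interval_cases D5 <;> try omega)
  all_goals (interval_cases D3 <;> try omega)
  all_goals (interval_cases A7 <;> try omega)
  all_goals (interval_cases A5 <;> try omega)
  all_goals (interval_cases A3 <;> try omega)

end Bfour

open MeasureTheory Filter Topology Set
namespace Bfour
open Polynomial

lemma floor_ineq (p N ν : ℤ) (hp : 0 < p) (hc : cnd p (N % p)) :
    (2 * (7 * N)) / p + (2 * (5 * N)) / p + (2 * (3 * N)) / p + 1 ≤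
     ((ν + 7 * N) / p - (ν - 7 * N) / p) + ((ν + 5 * N) / p - (ν - 5 * N) / p) +
     ((ν + 3 * N) / p - (ν - 3 * N) / p) := by
  have h := core p (N % p) (ν % p) hp (Int.emod_nonneg _ hp.ne') (Int.emod_lt_of_pos _ hp)
    (Int.emod_nonneg _ hp.ne') (Int.emod_lt_of_pos _ hp) hc
  have hN := Int.emod_add_mul_ediv N p
  have hν := Int.emod_add_mul_ediv ν p
  set r := N % p
  set s := ν % p
  set a := N / p
  set b := ν / p
  have e1 : ∀ k : ℤ, (ν + k * N) / p = (s + k * r) / p + (b + k * a) := fun k => by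
    rw [← Int.add_mul_ediv_left _ _ hp.ne', ← hN, ← hν]; congr 1; ring
  have e2 : ∀ k : ℤ, (ν - k * N) / p = (s - k * r) / p + (b - k * a) := fun k => by
    rw [← Int.add_mul_ediv_left _ _ hp.ne', ← hN, ← hν]; congr 1; ring
  have e3 : ∀ k : ℤ, (2 * (k * N)) / p = (2 * (k * r)) / p + (2 * (k * a)) := fun k => by
    rw [← Int.add_mul_ediv_left _ _ hp.ne', ← hN]; congr 1; ring
  rw [e1, e1, e1, e2, e2, e2, e3, e3, e3]
  linarith

lemma cnt_eq (p x : ℤ) (hp : 0 < p) (n : ℕ) :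
    (((Finset.range n).filter (fun i : ℕ => p ∣ x - i)).card : ℤ) = x / p - (x - n) / p := by
  induction n with
  | zero => simp
  | succ n ih =>
    rw [Finset.range_add_one, Finset.filter_insert]
    have key : (x - n) / p - (x - n - 1) / p = if p ∣ x - n then 1 else 0 := by
      generalize x - (n : ℤ) = y
      split_ifs with h
      · obtain ⟨c, rfl⟩ := h
        have : (p * c - 1) / p = c - 1 := by
          rw [Int.ediv_eq_iff_of_pos hp]; constructor <;> nlinarith
        rw [this, Int.mul_ediv_cancel_left _ hp.ne']; ring
      · have h1 := Int.emod_add_mul_ediv y p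
        have h2 := Int.emod_lt_of_pos y hp
        have h3 := Int.emod_nonneg y hp.ne'
        have h4 : y % p ≠ 0 := fun h0 => h (Int.dvd_of_emod_eq_zero h0)
        have h5 : 1 ≤ y % p := by omega
        have : (y - 1) / p = y / p := by
          rw [Int.ediv_eq_iff_of_pos hp]; constructor <;> nlinarith
        rw [this]; ring
    push_cast
    rw [← sub_sub]
    split_ifs at key ⊢ with h
    · rw [Finset.card_insert_of_notMem (by simp)]; push_cast; rw [ih]; linarith
    · rw [ih]; linarith

lemma powdvd (s : Finset ℕ) (f : ℕ → ℤ) (p : ℤ) :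
    p ^ (s.filter (fun i => p ∣ f i)).card ∣ ∏ i ∈ s, f i := by
  refine dvd_trans ?_ (Finset.prod_dvd_prod_of_subset _ s f (Finset.filter_subset (fun i => p ∣ f i) s))
  rw [← Finset.prod_const]
  exact Finset.prod_dvd_prod_of_dvd _ _ fun i hi => (Finset.mem_filter.1 hi).2

noncomputable def qz (K : ℕ) : ℤ[X] := ∏ i ∈ Finset.range (2 * K), (X + C ((K : ℤ) - i))

lemma bp_qz (K : ℕ) : bp K = C (1 / ((2 * K).factorial : ℂ)) * (qz K).map (Int.castRingHom ℂ) := by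
  simp [bp, qz, Polynomial.map_prod]

def cn (p : ℤ) (K : ℕ) (x : ℤ) : ℕ := ((Finset.range (2 * K)).filter (fun i : ℕ => p ∣ (x + K) - i)).card

lemma cn_eq (p : ℤ) (hp : 0 < p) (K : ℕ) (x : ℤ) : (cn p K x : ℤ) = (x + K) / p - (x - K) / p := by
  rw [cn, cnt_eq p _ hp]; congr 2; push_cast; ring

lemma qz_dvd (p : ℤ) (K : ℕ) (x : ℤ) : p ^ cn p K x ∣ (qz K).eval x := by
  simp only [qz, eval_prod, eval_add, eval_X, eval_C, ← add_sub_assoc]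
  exact powdvd _ _ _

lemma qz_dvd' (p : ℤ) (K : ℕ) (x : ℤ) : p ^ (cn p K x - 1) ∣ (derivative (qz K)).eval x := by
  rw [qz, derivative_prod_finset, eval_finsetSum]
  refine Finset.dvd_sum fun i hi => ?_
  simp only [eval_mul, eval_prod, eval_add, eval_X, eval_C, ← add_sub_assoc, derivative_add, derivative_X,
    derivative_C, eval_one, add_zero, mul_one]
  refine dvd_trans (pow_dvd_pow _ ?_) (powdvd _ _ _)
  rw [Finset.filter_erase, cn]
  exact Finset.pred_card_le_card_erase

lemma Tz_dvd (p : ℤ) (K L M : ℕ) (x : ℤ) :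
    p ^ (cn p K x + cn p L x + cn p M x - 1) ∣ (derivative (qz K * qz L * qz M)).eval x := by
  have a1 := qz_dvd p K x
  have a2 := qz_dvd p L x
  have a3 := qz_dvd p M x
  have b1 := qz_dvd' p K x
  have b2 := qz_dvd' p L x
  have b3 := qz_dvd' p M x
  simp only [derivative_mul, eval_add, eval_mul]
  rw [add_mul]
  refine dvd_add (dvd_add ?_ ?_) ?_
  · refine dvd_trans (pow_dvd_pow _ (show _ ≤ (cn p K x - 1) + cn p L x + cn p M x by omega)) ?_
    rw [pow_add, pow_add]; exact mul_dvd_mul (mul_dvd_mul b1 a2) a3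
  · refine dvd_trans (pow_dvd_pow _ (show _ ≤ cn p K x + (cn p L x - 1) + cn p M x by omega)) ?_
    rw [pow_add, pow_add]; exact mul_dvd_mul (mul_dvd_mul a1 b2) a3
  · refine dvd_trans (pow_dvd_pow _ (show _ ≤ cn p K x + cn p L x + (cn p M x - 1) by omega)) ?_
    rw [pow_add, pow_add]; exact mul_dvd_mul (mul_dvd_mul a1 a2) b3

lemma vfac (p n : ℕ) (hp : p.Prime) (h : n < p ^ 2) : padicValNat p n.factorial = n / p := by
  have := Fact.mk hp
  rw [padicValNat_factorial (b := 2) (by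
    rcases Nat.eq_zero_or_pos n with rfl | h0
    · simp
    · exact Nat.log_lt_of_lt_pow h0.ne' h)]
  simp

lemma p_dvd (N p : ℕ) (hp : p.Prime) (h1 : 14 * N < p ^ 2) (h2 : p ≤ 14 * N)
    (hc : cnd (p : ℤ) ((N : ℤ) % p)) (ν : ℕ) (a : ℤ)
    (ha : (Nat.lcmUpto (14 * N) : ℂ) * (derivative (Pp N)).eval (ν : ℂ) = a) : (p : ℤ) ∣ a := by
  have := Fact.mk hp
  have hp0 : (0 : ℤ) < p := by exact_mod_cast hp.pos
  set D := (2 * (7 * N)).factorial * (2 * (5 * N)).factorial * (2 * (3 * N)).factorial with hD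
  have hD0 : D ≠ 0 := by positivity
  have hv : padicValNat p D = 2 * (7 * N) / p + 2 * (5 * N) / p + 2 * (3 * N) / p := by
    rw [hD, padicValNat.mul (by positivity) (by positivity), padicValNat.mul (by positivity) (by positivity),
      vfac p _ hp (by omega), vfac p _ hp (by omega), vfac p _ hp (by omega)]
  have e : a * (D : ℤ) = (Nat.lcmUpto (14 * N) : ℤ) *
      (derivative (qz (7 * N) * qz (5 * N) * qz (3 * N))).eval (ν : ℤ) := by
    have hP : Pp N = C (1 / (D : ℂ)) * (qz (7 * N) * qz (5 * N) * qz (3 * N)).map (Int.castRingHom ℂ) := by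
      rw [Pp, bp_qz, bp_qz, bp_qz, Polynomial.map_mul, Polynomial.map_mul, hD]
      have : C (1 / (((2 * (7 * N)).factorial * (2 * (5 * N)).factorial * (2 * (3 * N)).factorial : ℕ) : ℂ))
        = C (1 / ((2 * (7 * N)).factorial : ℂ)) * C (1 / ((2 * (5 * N)).factorial : ℂ)) *
          C (1 / ((2 * (3 * N)).factorial : ℂ)) := by
        rw [← C_mul, ← C_mul]; congr 1; push_cast; ring
      rw [this]; ring
    rw [hP, derivative_mul, derivative_C, zero_mul, zero_add, eval_mul, eval_C, derivative_map] at ha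
    have h3 : (ν : ℂ) = Int.castRingHom ℂ (ν : ℤ) := by simp
    rw [h3, eval_map, eval₂_at_apply] at ha
    have hDc : (D : ℂ) ≠ 0 := by exact_mod_cast hD0
    have : (a : ℂ) * D = (Nat.lcmUpto (14 * N) : ℂ) *
      (((derivative (qz (7 * N) * qz (5 * N) * qz (3 * N))).eval (ν : ℤ) : ℤ) : ℂ) := by
      rw [← ha]; field_simp; simp
    exact_mod_cast this
  have hT := Tz_dvd p (7 * N) (5 * N) (3 * N) ν
  have hf := floor_ineq p N ν hp0 hc
  have c1 := cn_eq p hp0 (7 * N) ν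
  have c2 := cn_eq p hp0 (5 * N) ν
  have c3 := cn_eq p hp0 (3 * N) ν
  push_cast at c1 c2 c3
  rw [← c1, ← c2, ← c3] at hf
  have hv' : padicValNat p D + 1 ≤ cn p (7 * N) ν + cn p (5 * N) ν + cn p (3 * N) ν := by
    rw [hv]; zify; exact hf
  have hd : (p : ℤ) ^ (padicValNat p D + 1) ∣ a * D := by
    rw [e, pow_succ, mul_comm]
    refine mul_dvd_mul ?_ ?_
    · exact_mod_cast dvd_lcmUpto hp.one_le h2
    · exact dvd_trans (pow_dvd_pow _ (by omega)) hT
  obtain ⟨C', hC'⟩ := (pow_padicValNat_dvd : p ^ padicValNat p D ∣ D)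
  have hnd : ¬ p ∣ C' := by
    rintro ⟨x, rfl⟩
    apply pow_succ_padicValNat_not_dvd (p := p) hD0
    rw [pow_succ]
    exact ⟨x, by rw [mul_assoc]; exact hC'⟩
  have h5 : (p : ℤ) ^ padicValNat p D * p ∣ (p : ℤ) ^ padicValNat p D * (a * C') := by
    rw [← pow_succ]
    have : (p : ℤ) ^ padicValNat p D * (a * C') = a * D := by
      conv_rhs => rw [hC']
      push_cast; ring
    rw [this]; exact hd
  have h6 := (mul_dvd_mul_iff_left (pow_ne_zero _ hp0.ne')).1 h5
  rcases (Nat.prime_iff_prime_int.1 hp).dvd_or_dvd h6 with h | h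
  · exact h
  · exact absurd (by exact_mod_cast h) hnd

open Classical in
noncomputable def SP (N : ℕ) : Finset ℕ := (Finset.range (14 * N + 1)).filter
  (fun p => p.Prime ∧ 14 * N < p ^ 2 ∧ cnd (p : ℤ) ((N : ℤ) % p))

noncomputable def Pi0 (N : ℕ) : ℕ := ∏ p ∈ SP N, p

lemma mem_SP {N p : ℕ} : p ∈ SP N ↔ p ≤ 14 * N ∧ p.Prime ∧ 14 * N < p ^ 2 ∧ cnd (p : ℤ) ((N : ℤ) % p) := by
  simp [SP]

lemma Pi0_dvd_lcm (N : ℕ) : Pi0 N ∣ Nat.lcmUpto (14 * N) := by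
  refine Finset.prod_primes_dvd _ (fun p hp => (mem_SP.1 hp).2.1.prime) fun p hp => ?_
  exact dvd_lcmUpto (mem_SP.1 hp).2.1.one_le (mem_SP.1 hp).1

lemma Pi0_pos (N : ℕ) : 0 < Pi0 N := Finset.prod_pos fun _ hp => (mem_SP.1 hp).2.1.pos

noncomputable def l0 (N : ℕ) : ℕ := Nat.lcmUpto (14 * N) / Pi0 N

lemma l0_mul (N : ℕ) : l0 N * Pi0 N = Nat.lcmUpto (14 * N) := Nat.div_mul_cancel (Pi0_dvd_lcm N)

lemma l0_pos (N : ℕ) : 0 < l0 N := by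
  have h1 := l0_mul N
  have h2 := Nat.lcmUpto_pos (14 * N)
  rw [← h1] at h2
  exact Nat.pos_of_mul_pos_right h2

lemma l0_der (N : ℕ) (hN : 0 < N) (ν : ℕ) :
    ∃ a : ℤ, (l0 N : ℂ) * (derivative (Pp N)).eval (ν : ℂ) = a := by
  obtain ⟨a, ha⟩ := Pp_der_int N hN ν
  have hd : (Pi0 N : ℤ) ∣ a := by
    rw [Int.natCast_dvd]
    refine Finset.prod_primes_dvd _ (fun p hp => (mem_SP.1 hp).2.1.prime) fun q hq => ?_
    obtain ⟨h1, h2, h3, h4⟩ := mem_SP.1 hq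
    exact Int.natCast_dvd.1 (p_dvd N q h2 h3 h1 h4 ν a ha)
  obtain ⟨b, rfl⟩ := hd
  refine ⟨b, ?_⟩
  have hne : (Pi0 N : ℂ) ≠ 0 := by exact_mod_cast (Pi0_pos N).ne'
  rw [← l0_mul N] at ha
  push_cast at ha
  apply mul_left_cancel₀ hne
  linear_combination ha

lemma log_l0 (N : ℕ) : Real.log (l0 N) = Chebyshev.psi (14 * N : ℕ) - ∑ p ∈ SP N, Real.log p := by
  rw [Chebyshev.psi_eq_log_lcmUpto, ← l0_mul N]
  push_cast
  rw [Real.log_mul (by exact_mod_cast (l0_pos N).ne') (by exact_mod_cast (Pi0_pos N).ne'), Pi0]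
  push_cast
  rw [Real.log_prod (fun p hp => by exact_mod_cast (mem_SP.1 hp).2.1.ne_zero)]
  ring

end Bfour

open MeasureTheory Filter Topology Set
namespace Bfour

def Uu : Fin 3 → ℕ := ![14, 42, 63]
def Vv : Fin 3 → ℕ := ![36, 60, 72]

lemma UV_bd (i : Fin 3) : 14 ≤ Uu i ∧ Uu i < Vv i ∧ Vv i ≤ 72 := by
  fin_cases i <;> simp [Uu, Vv]

lemma UV_disj (i j : Fin 3) (h1 : Uu i < Vv j) (h2 : Uu j < Vv i) : i = j := by
  fin_cases i <;> fin_cases j <;> simp_all [Uu, Vv]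

def Aq (N q : ℕ) (i : Fin 3) : Finset ℕ :=
  (Finset.Ioc (168 * N / (84 * q + Vv i)) (168 * N / (84 * q + Uu i))).filter Nat.Prime

lemma mem_Aq {N q : ℕ} {i : Fin 3} {p : ℕ} : p ∈ Aq N q i ↔
    p.Prime ∧ p * (84 * q + Uu i) ≤ 168 * N ∧ 168 * N < p * (84 * q + Vv i) := by
  have h := UV_bd i
  rw [Aq, Finset.mem_filter, Finset.mem_Ioc, Nat.div_lt_iff_lt_mul (by omega), Nat.le_div_iff_mul_le (by omega)]
  tauto

lemma theta_Aq (N q : ℕ) (i : Fin 3) : Chebyshev.theta (168 * N / (84 * q + Uu i : ℕ) : ℝ) -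
    Chebyshev.theta (168 * N / (84 * q + Vv i : ℕ) : ℝ) = ∑ p ∈ Aq N q i, Real.log p := by
  have hh := UV_bd i
  have key : ∀ m : ℕ, Chebyshev.theta (168 * N / (m : ℕ) : ℝ) =
      ∑ p ∈ (Finset.Ioc 0 (168 * N / m)).filter Nat.Prime, Real.log p := by
    intro m
    rw [Chebyshev.theta]
    have : ((168 : ℝ) * N / m) = ((168 * N : ℕ) : ℝ) / m := by push_cast; ring
    rw [this, Nat.floor_div_natCast, Nat.floor_natCast]
  rw [key, key, Aq]
  have hle : 168 * N / (84 * q + Vv i) ≤ 168 * N / (84 * q + Uu i) :=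
    Nat.div_le_div_left (by omega) (by omega)
  have hu : (Finset.Ioc 0 (168 * N / (84 * q + Uu i))).filter Nat.Prime =
      (Finset.Ioc 0 (168 * N / (84 * q + Vv i))).filter Nat.Prime ∪
      (Finset.Ioc (168 * N / (84 * q + Vv i)) (168 * N / (84 * q + Uu i))).filter Nat.Prime := by
    rw [← Finset.filter_union, Finset.Ioc_union_Ioc_eq_Ioc (Nat.zero_le _) hle]
  rw [hu, Finset.sum_union]
  · ring
  · refine Finset.disjoint_filter_filter (Finset.disjoint_left.2 fun x h1 h2 => ?_)
    have := Finset.mem_Ioc.1 h1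
    have := Finset.mem_Ioc.1 h2
    omega

lemma Aq_sub (N Q q : ℕ) (hq : q < Q) (hN : 4 * (Q + 1) ^ 2 ≤ N) (i : Fin 3) : Aq N q i ⊆ SP N := by
  intro p hp
  obtain ⟨h1, h2, h3⟩ := mem_Aq.1 hp
  have hb := UV_bd i
  have hp0 := h1.pos
  refine mem_SP.2 ⟨?_, h1, ?_, ?_⟩
  · have : p * 14 ≤ p * (84 * q + Uu i) := Nat.mul_le_mul_left _ (by omega)
    omega
  · by_contra hcon
    have e1 : p * (84 * q + Vv i) ≤ p * (84 * (Q + 1)) := Nat.mul_le_mul_left _ (by omega)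
    have e2 : 2 * N < p * (Q + 1) := by nlinarith
    have e3 : 4 * N ^ 2 < p ^ 2 * (Q + 1) ^ 2 := by nlinarith
    have e4 : p ^ 2 * (Q + 1) ^ 2 ≤ 14 * N * (Q + 1) ^ 2 := Nat.mul_le_mul_right _ (by omega)
    have e5 : N * (4 * (Q + 1) ^ 2) ≤ N * N := Nat.mul_le_mul_left _ hN
    nlinarith
  · have hr := Nat.mod_add_div N p
    have hlt := Nat.mod_lt N hp0
    have ec : ((N : ℤ) % p) = ((N % p : ℕ) : ℤ) := by push_cast; rfl
    rw [ec]
    set r := N % p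
    set a := N / p
    have h4 : q < 2 * a + 2 := by
      by_contra hh
      have : p * (84 * (2 * a + 2)) ≤ p * (84 * q + Uu i) := Nat.mul_le_mul_left _ (by omega)
      nlinarith
    have h5 : 2 * a < q + 1 := by
      by_contra hh
      have : p * (84 * q + Vv i) ≤ p * (84 * (2 * a)) := Nat.mul_le_mul_left _ (by omega)
      nlinarith
    have h6 : q = 2 * a ∨ q = 2 * a + 1 := by omega
    unfold cnd
    rcases h6 with rfl | rfl
    · have k1 : p * Uu i ≤ 168 * r := by nlinarith
      have k2 : 168 * r < p * Vv i := by nlinarith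
      fin_cases i <;> simp [Uu, Vv] at k1 k2 <;> omega
    · have k1 : p * Uu i + 84 * p ≤ 168 * r := by nlinarith
      have k2 : 168 * r < p * Vv i + 84 * p := by nlinarith
      fin_cases i <;> simp [Uu, Vv] at k1 k2 <;> omega

lemma sum_le (N Q : ℕ) (hN : 4 * (Q + 1) ^ 2 ≤ N) :
    ∑ q ∈ Finset.range Q, ∑ i : Fin 3, (Chebyshev.theta (168 * N / (84 * q + Uu i : ℕ) : ℝ) -
    Chebyshev.theta (168 * N / (84 * q + Vv i : ℕ) : ℝ)) ≤ ∑ p ∈ SP N, Real.log p := by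
  simp_rw [theta_Aq]
  rw [← Finset.sum_product' (Finset.range Q) Finset.univ (fun q i => ∑ p ∈ Aq N q i, Real.log p),
    ← Finset.sum_biUnion]
  · refine Finset.sum_le_sum_of_subset_of_nonneg ?_ ?_
    · intro p hp
      obtain ⟨⟨q, i⟩, hx, hp⟩ := Finset.mem_biUnion.1 hp
      exact Aq_sub N Q q (by simpa using hx) hN i hp
    · intro p hp _
      exact Real.log_natCast_nonneg p
  · rintro ⟨q, i⟩ - ⟨q', j⟩ - hne
    refine Finset.disjoint_left.2 fun p h1 h2 => hne ?_
    obtain ⟨h, a1, a2⟩ := mem_Aq.1 h1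
    obtain ⟨-, b1, b2⟩ := mem_Aq.1 h2
    have hi := UV_bd i
    have hj := UV_bd j
    have hp := h.pos
    have c1 : 84 * q + Uu i < 84 * q' + Vv j := lt_of_mul_lt_mul_left (a1.trans_lt b2) hp.le
    have c2 : 84 * q' + Uu j < 84 * q + Vv i := lt_of_mul_lt_mul_left (b1.trans_lt a2) hp.le
    have e : q = q' := by omega
    subst e
    rw [UV_disj i j (by omega) (by omega)]

noncomputable def Gq (q : ℕ) : ℝ := ∑ i : Fin 3, (84 / (84 * q + Uu i) - 84 / (84 * q + Vv i) : ℝ)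

lemma theta_scale (c : ℝ) (hc : 0 < c) :
    Tendsto (fun N : ℕ => Chebyshev.theta (c * N) / N) atTop (𝓝 c) := by
  have h1 : Tendsto (fun N : ℕ => c * (N : ℝ)) atTop atTop :=
    tendsto_natCast_atTop_atTop.const_mul_atTop hc
  have h2 := (theta_tendsto.comp h1).mul_const c
  rw [one_mul] at h2
  refine h2.congr fun N => ?_
  simp only [Function.comp]
  rcases Nat.eq_zero_or_pos N with rfl | h
  · simp
  · have : (N : ℝ) ≠ 0 := by positivity
    field_simp

lemma psi_scale (c : ℝ) (hc : 0 < c) :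
    Tendsto (fun N : ℕ => Chebyshev.psi (c * N) / N) atTop (𝓝 c) := by
  have h1 : Tendsto (fun N : ℕ => c * (N : ℝ)) atTop atTop :=
    tendsto_natCast_atTop_atTop.const_mul_atTop hc
  have h2 := (psi_tendsto.comp h1).mul_const c
  rw [one_mul] at h2
  refine h2.congr fun N => ?_
  simp only [Function.comp]
  rcases Nat.eq_zero_or_pos N with rfl | h
  · simp
  · have : (N : ℝ) ≠ 0 := by positivity
    field_simp

lemma log_l0_lim (Q : ℕ) (c : ℝ) (hc : 14 - 2 * ∑ q ∈ Finset.range Q, Gq q < c) :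
    ∀ᶠ N : ℕ in atTop, Real.log (l0 N) ≤ c * N := by
  have h1 : Tendsto (fun N : ℕ => Chebyshev.psi (14 * N) / N -
      ∑ q ∈ Finset.range Q, ∑ i : Fin 3, (Chebyshev.theta ((168 / (84 * q + Uu i : ℕ)) * N : ℝ) / N -
    Chebyshev.theta ((168 / (84 * q + Vv i : ℕ)) * N : ℝ) / N)) atTop
     (𝓝 (14 - ∑ q ∈ Finset.range Q, ∑ i : Fin 3,
       ((168 / (84 * q + Uu i : ℕ)) - (168 / (84 * q + Vv i : ℕ)) : ℝ))) := by
    refine (psi_scale 14 (by norm_num)).sub (tendsto_finsetSum _ fun q _ => tendsto_finsetSum _ fun i _ => ?_)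
    have hi := UV_bd i
    refine (theta_scale _ ?_).sub (theta_scale _ ?_)
    · have : 0 < 84 * q + Uu i := by omega
      positivity
    · have : 0 < 84 * q + Vv i := by omega
      positivity
  have h2 : (14 - ∑ q ∈ Finset.range Q, ∑ i : Fin 3,
       ((168 / (84 * q + Uu i : ℕ)) - (168 / (84 * q + Vv i : ℕ)) : ℝ)) < c := by
    refine lt_of_eq_of_lt ?_ hc
    simp only [Gq, Finset.mul_sum]
    congr 1
    refine Finset.sum_congr rfl fun q _ => Finset.sum_congr rfl fun i _ => ?_
    push_cast; ring
  filter_upwards [h1.eventually_lt_const h2, eventually_ge_atTop (4 * (Q + 1) ^ 2)] with N hN hN2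
  have hN0 : (0 : ℝ) < N := by
    have : 0 < N := lt_of_lt_of_le (by positivity) hN2
    exact_mod_cast this
  have h3 := sum_le N Q hN2
  rw [log_l0]
  have h4 : Chebyshev.psi (14 * N) - ∑ q ∈ Finset.range Q, ∑ i : Fin 3,
      (Chebyshev.theta (168 * N / (84 * q + Uu i : ℕ) : ℝ) -
    Chebyshev.theta (168 * N / (84 * q + Vv i : ℕ) : ℝ)) ≤ c * N := by
    rw [← div_le_iff₀ hN0]
    refine le_trans (le_of_eq ?_) hN.le
    rw [sub_div, Finset.sum_div]
    congr 1
    refine Finset.sum_congr rfl fun q _ => ?_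
    rw [Finset.sum_div]
    refine Finset.sum_congr rfl fun i _ => ?_
    rw [sub_div, div_mul_eq_mul_div, div_mul_eq_mul_div]
  push_cast at h4 h3 ⊢
  linarith

end Bfour

open MeasureTheory Filter Topology Set
namespace Bfour

def gQ (q : ℕ) : ℚ := (84 / (84 * q + 14) - 84 / (84 * q + 36)) + (84 / (84 * q + 42) - 84 / (84 * q + 60)) +
  (84 / (84 * q + 63) - 84 / (84 * q + 72))

lemma Gq_eq (q : ℕ) : Gq q = (gQ q : ℝ) := by
  simp [Gq, gQ, Fin.sum_univ_three, Uu, Vv]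
  ring

def sQ : ℕ → ℚ
  | 0 => 0
  | n + 1 => sQ n + gQ n

lemma sQ_eq (n : ℕ) : ∑ q ∈ Finset.range n, Gq q = (sQ n : ℝ) := by
  induction n with
  | zero => simp [sQ]
  | succ n ih => rw [Finset.sum_range_succ, ih, sQ, Gq_eq]; push_cast; ring

noncomputable def tl (q : ℝ) : ℝ := (22 / 84) / (q + 25 / 84 - 1 / 2 + 1 / 400) + (18 / 84) / (q + 51 / 84 - 1 / 2 + 1 / 400)
  + (9 / 84) / (q + 135 / 168 - 1 / 2 + 1 / 400)

lemma tl_aux (q u v w : ℝ) (hu : 0 < q + u) (hv : u < v) (hw : 0 < q + w)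
    (h : (q + u) * (q + v) ≤ (q + w) * (q + w + 1)) :
    (v - u) / (q + w) - (v - u) / (q + 1 + w) ≤ 1 / (q + u) - 1 / (q + v) := by
  have h1 : (v - u) / (q + w) - (v - u) / (q + 1 + w) = (v - u) / ((q + w) * (q + w + 1)) := by
    have : q + 1 + w ≠ 0 := by linarith
    have : q + w + 1 ≠ 0 := by linarith
    field_simp; ring
  have h2 : 1 / (q + u) - 1 / (q + v) = (v - u) / ((q + u) * (q + v)) := by
    have : q + v ≠ 0 := by linarith
    field_simp; ring
  rw [h1, h2]
  exact div_le_div_of_nonneg_left (by linarith) (mul_pos hu (by linarith)) h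

lemma tl_step (q : ℕ) (hq : 50 ≤ q) : tl q - tl (q + 1) ≤ Gq q := by
  have h : (50 : ℝ) ≤ q := by exact_mod_cast hq
  have a1 := tl_aux q (14 / 84) (36 / 84) (25 / 84 - 1 / 2 + 1 / 400) (by linarith) (by norm_num) (by linarith) (by nlinarith)
  have a2 := tl_aux q (42 / 84) (60 / 84) (51 / 84 - 1 / 2 + 1 / 400) (by linarith) (by norm_num) (by linarith) (by nlinarith)
  have a3 := tl_aux q (63 / 84) (72 / 84) (135 / 168 - 1 / 2 + 1 / 400) (by linarith) (by norm_num) (by linarith) (by nlinarith)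
  have e : ∀ u : ℝ, 84 / (84 * (q : ℝ) + u) = 1 / (q + u / 84) := by
    intro u
    rw [show (84 : ℝ) * q + u = 84 * (q + u / 84) by ring, div_mul_eq_div_div]; norm_num
  rw [Gq_eq, gQ, tl, tl]
  push_cast
  rw [e, e, e, e, e, e]
  norm_num at a1 a2 a3 ⊢
  ring_nf at a1 a2 a3 ⊢
  linarith

lemma tl_sum (n : ℕ) : ∑ q ∈ Finset.range 50, Gq q + tl 50 - tl (50 + n) ≤ ∑ q ∈ Finset.range (50 + n), Gq q := by
  induction n with
  | zero => simp
  | succ n ih =>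
    rw [← add_assoc, Finset.sum_range_succ _ (50 + n)]
    have := tl_step (50 + n) (by omega)
    push_cast at this ⊢
    rw [← add_assoc]
    linarith

set_option maxRecDepth 100000 in
lemma s50 : (49834368 / 10000000 : ℚ) ≤ sQ 50 := by
  norm_num [sQ, gQ]

lemma log_l0_le : ∀ᶠ N : ℕ in atTop, Real.log (l0 N) ≤ 4.0098 * N := by
  refine log_l0_lim (50 + 10 ^ 8) _ ?_
  have h1 := tl_sum (10 ^ 8)
  have h2 : ((49834368 / 10000000 : ℚ) : ℝ) ≤ (sQ 50 : ℝ) := by exact_mod_cast s50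
  rw [sQ_eq 50] at h1
  generalize ∑ q ∈ Finset.range (50 + 10 ^ 8), Gq q = S at *
  push_cast at h1 h2
  norm_num [tl] at h1
  norm_num at h2 ⊢
  linarith

end Bfour

open MeasureTheory Filter Topology Set
namespace Bfour
open Polynomial

noncomputable def Rk (K : ℕ) (t : ℝ) : ℝ := ∏ j ∈ Finset.range K, (((j : ℝ) + 1 / 2) ^ 2 + t ^ 2)

lemma Rk_pos (K : ℕ) (t : ℝ) : 0 < Rk K t :=
  Finset.prod_pos fun j _ => by positivity

lemma bp_line (K : ℕ) (t : ℝ) : (bp K).eval (-1 / 2 + Complex.I * t) =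
    (((-1) ^ K * (Rk K t / (2 * K).factorial) : ℝ) : ℂ) := by
  rw [bp_eval]
  have : ∏ i ∈ Finset.range (2 * K), ((-1 / 2 + Complex.I * t : ℂ) + K - i) = (((-1) ^ K * Rk K t : ℝ) : ℂ) := by
    induction K with
    | zero => simp [Rk]
    | succ n ih =>
      rw [show 2 * (n + 1) = 2 * n + 1 + 1 by ring, Finset.prod_range_succ', Finset.prod_range_succ]
      have e : ∏ k ∈ Finset.range (2 * n), ((-1 / 2 + Complex.I * t : ℂ) + ((n + 1 : ℕ) : ℂ) - ((k + 1 : ℕ) : ℂ))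
          = ∏ i ∈ Finset.range (2 * n), ((-1 / 2 + Complex.I * t : ℂ) + n - i) :=
        Finset.prod_congr rfl fun k _ => by push_cast; ring
      rw [e, ih, Rk, Rk, Finset.prod_range_succ]
      push_cast
      generalize (∏ x ∈ Finset.range n, (((x : ℂ) + 1 / 2) ^ 2 + (t : ℂ) ^ 2)) = W
      linear_combination ((-1) ^ n * W * t ^ 2) * Complex.I_sq
  rw [this]; push_cast; ring

noncomputable def rho (N : ℕ) (t : ℝ) : ℝ := (Rk (7 * N) t / (2 * (7 * N)).factorial) *
  (Rk (5 * N) t / (2 * (5 * N)).factorial) * (Rk (3 * N) t / (2 * (3 * N)).factorial)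

lemma rho_pos (N : ℕ) (t : ℝ) : 0 < rho N t := by
  have := Rk_pos (7 * N) t
  have := Rk_pos (5 * N) t
  have := Rk_pos (3 * N) t
  unfold rho; positivity

lemma Pp_line (N : ℕ) (t : ℝ) : (Pp N).eval (-1 / 2 + Complex.I * t) = (((-1) ^ (15 * N) * rho N t : ℝ) : ℂ) := by
  rw [Pp, eval_mul, eval_mul, bp_line, bp_line, bp_line, ← Complex.ofReal_mul, ← Complex.ofReal_mul, rho]
  congr 1
  rw [show 15 * N = 7 * N + 5 * N + 3 * N by ring, pow_add, pow_add]; ring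

noncomputable def Ph (t x : ℝ) : ℝ := x * Real.log (x ^ 2 + t ^ 2) - 2 * x + 2 * t * Real.arctan (x / t)

lemma Ph_der (t : ℝ) (ht : 0 < t) (x : ℝ) : HasDerivAt (Ph t) (Real.log (x ^ 2 + t ^ 2)) x := by
  have h0 : x ^ 2 + t ^ 2 ≠ 0 := by positivity
  have h1 : HasDerivAt (fun x : ℝ => x ^ 2 + t ^ 2) (2 * x) x := by
    simpa using (hasDerivAt_pow 2 x).add_const (t ^ 2)
  have h2 := (hasDerivAt_id x).mul (h1.log h0)
  have h3 := (h2.sub ((hasDerivAt_id x).const_mul 2)).add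
    ((((hasDerivAt_id x).div_const t).arctan).const_mul (2 * t))
  refine h3.congr_deriv ?_
  have h4 : 1 + (x / t) ^ 2 ≠ 0 := by positivity
  have h5 : t ^ 2 + x ^ 2 ≠ 0 := by positivity
  simp only [id, one_mul, mul_one]
  field_simp
  ring

lemma Ph_mvt (t : ℝ) (ht : 0 < t) (a b : ℝ) (hab : a < b) :
    ∃ c ∈ Ioo a b, Ph t b - Ph t a = Real.log (c ^ 2 + t ^ 2) * (b - a) := by
  obtain ⟨c, hc, h⟩ := exists_hasDerivAt_eq_slope (Ph t) (fun x => Real.log (x ^ 2 + t ^ 2)) hab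
    (fun x _ => (Ph_der t ht x).continuousAt.continuousWithinAt) (fun x _ => Ph_der t ht x)
  refine ⟨c, hc, ?_⟩
  rw [h]; field_simp [sub_ne_zero.2 hab.ne']

lemma Ph_le (t : ℝ) (ht : 0 < t) (a b : ℝ) (hab : a < b) (h : -b ≤ a) :
    Ph t b - Ph t a ≤ Real.log (b ^ 2 + t ^ 2) * (b - a) := by
  obtain ⟨c, hc, e⟩ := Ph_mvt t ht a b hab
  rw [e]
  refine mul_le_mul_of_nonneg_right (Real.log_le_log (by positivity) ?_) (by linarith)
  have := hc.1
  have := hc.2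
  nlinarith

lemma Ph_ge (t : ℝ) (ht : 0 < t) (a b : ℝ) (hab : a < b) (h : 0 ≤ a) :
    Real.log (a ^ 2 + t ^ 2) * (b - a) ≤ Ph t b - Ph t a := by
  obtain ⟨c, hc, e⟩ := Ph_mvt t ht a b hab
  rw [e]
  refine mul_le_mul_of_nonneg_right (Real.log_le_log (by positivity) ?_) (by linarith)
  have := hc.1
  nlinarith

lemma Ph_half (t : ℝ) (ht : 0 < t) : -2 ≤ Ph t (1 / 2) := by
  unfold Ph
  have h1 : 0 ≤ Real.arctan (1 / 2 / t) := Real.arctan_nonneg.2 (by positivity)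
  have h2 : Real.log (1 / 4) ≤ Real.log ((1 / 2) ^ 2 + t ^ 2) :=
    Real.log_le_log (by norm_num) (by nlinarith)
  have h3 : -2 ≤ Real.log (1 / 4) := by
    rw [Real.log_div (by norm_num) (by norm_num), show (4 : ℝ) = 2 ^ 2 by norm_num, Real.log_pow]
    have := Real.log_two_lt_d9
    norm_num; linarith
  have : 0 ≤ 2 * t * Real.arctan (1 / 2 / t) := by positivity
  linarith

lemma Ph_neg (t x : ℝ) : Ph t (-x) = - Ph t x := by
  unfold Ph
  rw [neg_div, Real.arctan_neg]; ring_nf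

lemma logR (K : ℕ) (t : ℝ) : Real.log (Rk K t) = ∑ j ∈ Finset.range K, Real.log (((j : ℝ) + 1 / 2) ^ 2 + t ^ 2) :=
  Real.log_prod fun j _ => by positivity

lemma logR_le (K : ℕ) (t : ℝ) (ht : 0 < t) :
    Real.log (Rk K t) ≤ Ph t K + 2 + Real.log ((K + 1) * (1 + t)) := by
  have h1 : ∀ n : ℕ, Real.log (Rk n t) ≤ Ph t (n + 1 / 2) - Ph t (1 / 2) := by
    intro n
    rw [logR]
    induction n with
    | zero => simp
    | succ n ih =>
      rw [Finset.sum_range_succ]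
      have := Ph_ge t ht (n + 1 / 2) (((n + 1 : ℕ) : ℝ) + 1 / 2) (by push_cast; linarith) (by positivity)
      push_cast at this ⊢
      ring_nf at this ih ⊢
      linarith
  have h2 := Ph_le t ht K (K + 1 / 2) (by linarith) (by have := Nat.cast_nonneg (α := ℝ) K; linarith)
  have h3 := Ph_half t ht
  have h4 : Real.log (((K : ℝ) + 1 / 2) ^ 2 + t ^ 2) ≤ 2 * Real.log ((K + 1) * (1 + t)) := by
    have e : 2 * Real.log (((K : ℝ) + 1) * (1 + t)) = Real.log ((((K : ℝ) + 1) * (1 + t)) ^ 2) := by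
      rw [Real.log_pow]; norm_num
    rw [e]
    refine Real.log_le_log (by positivity) ?_
    have hK := Nat.cast_nonneg (α := ℝ) K
    have p1 := mul_nonneg hK ht.le
    have p2 : (K : ℝ) + 1 + t ≤ (K + 1) * (1 + t) := by nlinarith
    calc ((K : ℝ) + 1 / 2) ^ 2 + t ^ 2 ≤ (K + 1 + t) ^ 2 := by nlinarith
      _ ≤ _ := by gcongr
  have := h1 K
  linarith

lemma logR_ge (K : ℕ) (hK : 1 ≤ K) (t : ℝ) (ht : 0 < t) :
    Ph t K - 2 - Real.log (K + t) ≤ Real.log (Rk K t) := by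
  have h1 : ∀ n : ℕ, Ph t (n - 1 / 2) + Ph t (1 / 2) ≤ Real.log (Rk n t) := by
    intro n
    rw [logR]
    induction n with
    | zero =>
      have := Ph_neg t (1 / 2)
      simp at this ⊢; linarith
    | succ n ih =>
      rw [Finset.sum_range_succ]
      have := Ph_le t ht (n - 1 / 2) (n + 1 / 2) (by linarith)
        (by have := Nat.cast_nonneg (α := ℝ) n; linarith)
      push_cast at this ⊢
      ring_nf at this ih ⊢
      linarith
  have hK' : (1 : ℝ) ≤ K := by exact_mod_cast hK
  have h2 := Ph_le t ht (K - 1 / 2) K (by linarith) (by linarith)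
  have h3 := Ph_half t ht
  have h4 : Real.log ((K : ℝ) ^ 2 + t ^ 2) ≤ 2 * Real.log (K + t) := by
    have e : 2 * Real.log ((K : ℝ) + t) = Real.log (((K : ℝ) + t) ^ 2) := by
      rw [Real.log_pow]; norm_num
    rw [e]
    refine Real.log_le_log (by positivity) ?_
    nlinarith
  have := h1 K
  linarith

lemma logfac_ge (n : ℕ) (hn : 1 ≤ n) : n * Real.log n - n ≤ Real.log n.factorial := by
  induction n, hn using Nat.le_induction with
  | base => simp
  | succ n hn ih =>
    have h0 : (0 : ℝ) < n := by exact_mod_cast hn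
    rw [Nat.factorial_succ]
    push_cast
    rw [Real.log_mul (by positivity) (by positivity)]
    have h1 : Real.log (((n : ℝ) + 1) / n) ≤ ((n : ℝ) + 1) / n - 1 := Real.log_le_sub_one_of_pos (by positivity)
    rw [Real.log_div (by positivity) (by positivity)] at h1
    have h2 := mul_le_mul_of_nonneg_left h1 h0.le
    have h3 : (n : ℝ) * (((n : ℝ) + 1) / n - 1) = 1 := by field_simp; ring
    rw [h3] at h2
    linarith

lemma logfac_le (n : ℕ) (hn : 1 ≤ n) : Real.log n.factorial ≤ n * Real.log n - n + Real.log n + 1 := by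
  induction n, hn using Nat.le_induction with
  | base => simp
  | succ n hn ih =>
    have h0 : (0 : ℝ) < n := by exact_mod_cast hn
    rw [Nat.factorial_succ]
    push_cast
    rw [Real.log_mul (by positivity) (by positivity)]
    have h1 := Real.one_sub_inv_le_log_of_pos (show (0 : ℝ) < ((n : ℝ) + 1) / n by positivity)
    rw [Real.log_div (by positivity) (by positivity)] at h1
    have h2 := mul_le_mul_of_nonneg_left h1 (show (0 : ℝ) ≤ n + 1 by positivity)
    have h3 : ((n : ℝ) + 1) * (1 - (((n : ℝ) + 1) / n)⁻¹) = 1 := by field_simp; ring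
    rw [h3] at h2
    linarith

lemma Ph_tan (K t t0 : ℝ) (hK : 0 < K) (ht : 0 < t) (h0 : 0 < t0) :
    Ph t K ≤ K * Real.log (K ^ 2 + t0 ^ 2) - 2 * K + 2 * t * Real.arctan (K / t0) := by
  set A := Real.arctan (K / t0) with hA
  let g : ℝ → ℝ := fun t => K * Real.log (K ^ 2 + t ^ 2) + 2 * t * (Real.arctan (K / t) - A)
  have hg : ∀ x, 0 < x → HasDerivAt g (2 * (Real.arctan (K / x) - A)) x := by
    intro x hx
    have a0 : K ^ 2 + x ^ 2 ≠ 0 := by positivity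
    have a1 : HasDerivAt (fun x : ℝ => K ^ 2 + x ^ 2) (2 * x) x := by
      simpa using (hasDerivAt_pow 2 x).const_add (K ^ 2)
    have a2 := (a1.log a0).const_mul K
    have a3 : HasDerivAt (fun x : ℝ => K / x) (-K / x ^ 2) x := by
      simpa [div_eq_mul_inv, neg_mul] using (hasDerivAt_inv hx.ne').const_mul K
    have a4 := a2.add (((hasDerivAt_id x).const_mul 2).mul (a3.arctan.sub_const A))
    refine a4.congr_deriv ?_
    have a5 : 1 + (K / x) ^ 2 ≠ 0 := by positivity
    have a6 : x ^ 2 + K ^ 2 ≠ 0 := by positivity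
    simp only [id, mul_one]
    field_simp
    ring
  have key : g t ≤ g t0 := by
    rcases lt_trichotomy t t0 with h | h | h
    · obtain ⟨c, hc, e⟩ := exists_hasDerivAt_eq_slope g _ h
        (fun x hx => (hg x (ht.trans_le hx.1)).continuousAt.continuousWithinAt)
        (fun x hx => hg x (ht.trans hx.1))
      have hc0 : 0 < c := ht.trans hc.1
      have : A ≤ Real.arctan (K / c) := Real.arctan_mono (div_le_div_of_nonneg_left hK.le hc0 hc.2.le)
      have h2 : 0 ≤ (g t0 - g t) / (t0 - t) := by rw [← e]; linarith
      have h3 := mul_nonneg h2 (sub_pos.2 h).le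
      rw [div_mul_cancel₀ _ (sub_pos.2 h).ne'] at h3
      linarith
    · rw [h]
    · obtain ⟨c, hc, e⟩ := exists_hasDerivAt_eq_slope g _ h
        (fun x hx => (hg x (h0.trans_le hx.1)).continuousAt.continuousWithinAt)
        (fun x hx => hg x (h0.trans hx.1))
      have hc0 : 0 < c := h0.trans hc.1
      have : Real.arctan (K / c) ≤ A := Real.arctan_mono (div_le_div_of_nonneg_left hK.le h0 hc.1.le)
      have h2 : 0 ≤ (g t0 - g t) / (t - t0) := by
        have : (g t0 - g t) / (t - t0) = - ((g t - g t0) / (t - t0)) := by ring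
        rw [this, ← e]; linarith
      have h3 := mul_nonneg h2 (sub_pos.2 h).le
      rw [div_mul_cancel₀ _ (sub_pos.2 h).ne'] at h3
      linarith
  have e0 : g t0 = K * Real.log (K ^ 2 + t0 ^ 2) := by simp [g, hA]
  rw [e0] at key
  simp only [g] at key
  unfold Ph
  linarith

end Bfour

open MeasureTheory Filter Topology Set
namespace Bfour
open Polynomial

lemma Rk_abs (K : ℕ) (t : ℝ) : Rk K |t| = Rk K t := by simp [Rk, sq_abs]
lemma rho_abs (N : ℕ) (t : ℝ) : rho N |t| = rho N t := by simp [rho, Rk_abs]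

lemma Rk_mono (K : ℕ) {a b : ℝ} (ha : 0 ≤ a) (h : a ≤ b) : Rk K a ≤ Rk K b := by
  unfold Rk
  refine Finset.prod_le_prod (fun j _ => by positivity) fun j _ => ?_
  gcongr

lemma rho_mono (N : ℕ) {a b : ℝ} (ha : 0 ≤ a) (h : a ≤ b) : rho N a ≤ rho N b := by
  have h1 := Rk_mono (7 * N) ha h
  have h2 := Rk_mono (5 * N) ha h
  have h3 := Rk_mono (3 * N) ha h
  have := (Rk_pos (7 * N) a).le
  have := (Rk_pos (5 * N) a).le
  have := (Rk_pos (3 * N) a).le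
  have := (Rk_pos (7 * N) b).le
  have := (Rk_pos (5 * N) b).le
  unfold rho
  gcongr

lemma nrm_eq (N : ℕ) (s t : ℝ) : ‖(Pp N).eval (-1 / 2 + Complex.I * t) * ((Real.exp (-(s * t)) * wf t : ℝ) : ℂ)‖
    = rho N t * (Real.exp (-(s * t)) * wf t) := by
  have := rho_pos N t
  have := wf_nonneg t
  rw [Pp_line, norm_mul, Complex.norm_real, Complex.norm_real, Real.norm_eq_abs, Real.norm_eq_abs,
    abs_mul, abs_pow, abs_neg, abs_one, one_pow, one_mul, abs_of_pos (rho_pos N t), abs_of_nonneg (by positivity)]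

lemma rho_int (N : ℕ) (s : ℝ) (hs : |s| < 2 * Real.pi) :
    Integrable (fun t : ℝ => rho N t * (Real.exp (-(s * t)) * wf t)) := by
  refine (lam_int (Pp N) hs).norm.congr (Eventually.of_forall fun t => ?_)
  exact nrm_eq N s t

lemma lam_norm (N : ℕ) (s : ℝ) :
    ‖lam (Pp N) s‖ = ∫ t : ℝ, rho N t * (Real.exp (-(s * t)) * wf t) := by
  have : lam (Pp N) s = ((((-1) ^ (15 * N) * ∫ t : ℝ, rho N t * (Real.exp (-(s * t)) * wf t)) : ℝ) : ℂ) := by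
    unfold lam
    rw [← integral_const_mul, ← integral_complex_ofReal]
    refine integral_congr_ae (Eventually.of_forall fun t => ?_)
    simp only [Pp_line]
    push_cast; ring
  rw [this, Complex.norm_real, Real.norm_eq_abs, abs_mul, abs_pow, abs_neg, abs_one, one_pow, one_mul,
    abs_of_nonneg]
  refine integral_nonneg fun t => ?_
  have := rho_pos N t
  have := wf_nonneg t
  simp only [Pi.zero_apply]
  positivity

noncomputable def LL (τ : ℝ) : ℝ := 7 * Real.log ((49 + τ ^ 2) / 196) + 5 * Real.log ((25 + τ ^ 2) / 100) +
  3 * Real.log ((9 + τ ^ 2) / 36)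

noncomputable def AA (τ : ℝ) : ℝ := 2 * (Real.arctan (7 / τ) + Real.arctan (5 / τ) + Real.arctan (3 / τ))

lemma fac_ub (k N : ℕ) (hk : 1 ≤ k) (hN : 1 ≤ N) (τ t : ℝ) (hτ : 0 < τ) (ht : 0 < t) :
    Real.log (Rk (k * N) t / (2 * (k * N)).factorial) ≤
      N * (k * Real.log (((k : ℝ) ^ 2 + τ ^ 2) / (4 * (k : ℝ) ^ 2))) + t * (2 * Real.arctan (k / τ)) + 2 +
        Real.log ((k * N + 1) * (1 + t)) := by
  have hk0 : (0 : ℝ) < k := by exact_mod_cast hk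
  have hN0 : (0 : ℝ) < N := by exact_mod_cast hN
  rw [Real.log_div (Rk_pos _ _).ne' (by positivity)]
  have h1 := logR_le (k * N) t ht
  have h2 := logfac_ge (2 * (k * N)) (by nlinarith)
  have h3 := Ph_tan (k * N) t (τ * N) (by positivity) ht (by positivity)
  have e1 : Real.log (((k : ℝ) * N) ^ 2 + (τ * N) ^ 2) = Real.log ((k : ℝ) ^ 2 + τ ^ 2) + 2 * Real.log N := by
    rw [show ((k : ℝ) * N) ^ 2 + (τ * N) ^ 2 = ((k : ℝ) ^ 2 + τ ^ 2) * N ^ 2 by ring,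
      Real.log_mul (by positivity) (by positivity), Real.log_pow]; norm_num
  have e2 : (k : ℝ) * N / (τ * N) = k / τ := by field_simp
  have e3 : Real.log (2 * ((k : ℝ) * N)) = Real.log (2 * k) + Real.log N := by
    rw [← mul_assoc, Real.log_mul (by positivity) (by positivity)]
  have e4 : Real.log (((k : ℝ) ^ 2 + τ ^ 2) / (4 * (k : ℝ) ^ 2)) = Real.log ((k : ℝ) ^ 2 + τ ^ 2) - 2 * Real.log (2 * k) := by
    rw [Real.log_div (by positivity) (by positivity), show 4 * (k : ℝ) ^ 2 = (2 * k) ^ 2 by ring, Real.log_pow]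
    norm_num
  rw [e1, e2] at h3
  push_cast at h1 h2
  rw [e3] at h2
  rw [e4]
  linarith

lemma fac_lb (k N : ℕ) (hk : 1 ≤ k) (hN : 1 ≤ N) (τ : ℝ) (hτ : 0 < τ) :
    N * (k * Real.log (((k : ℝ) ^ 2 + τ ^ 2) / (4 * (k : ℝ) ^ 2))) + τ * N * (2 * Real.arctan (k / τ)) - 3 -
        Real.log (k + τ) - Real.log (2 * k) - 2 * Real.log N ≤
    Real.log (Rk (k * N) (τ * N) / (2 * (k * N)).factorial) := by
  have hk0 : (0 : ℝ) < k := by exact_mod_cast hk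
  have hN0 : (0 : ℝ) < N := by exact_mod_cast hN
  rw [Real.log_div (Rk_pos _ _).ne' (by positivity)]
  have h1 := logR_ge (k * N) (by nlinarith) (τ * N) (by positivity)
  have h2 := logfac_le (2 * (k * N)) (by nlinarith)
  have e1 : Real.log (((k : ℝ) * N) ^ 2 + (τ * N) ^ 2) = Real.log ((k : ℝ) ^ 2 + τ ^ 2) + 2 * Real.log N := by
    rw [show ((k : ℝ) * N) ^ 2 + (τ * N) ^ 2 = ((k : ℝ) ^ 2 + τ ^ 2) * N ^ 2 by ring,
      Real.log_mul (by positivity) (by positivity), Real.log_pow]; norm_num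
  have e2 : (k : ℝ) * N / (τ * N) = k / τ := by field_simp
  have e3 : Real.log (2 * ((k : ℝ) * N)) = Real.log (2 * k) + Real.log N := by
    rw [← mul_assoc, Real.log_mul (by positivity) (by positivity)]
  have e4 : Real.log (((k : ℝ) ^ 2 + τ ^ 2) / (4 * (k : ℝ) ^ 2)) = Real.log ((k : ℝ) ^ 2 + τ ^ 2) - 2 * Real.log (2 * k) := by
    rw [Real.log_div (by positivity) (by positivity), show 4 * (k : ℝ) ^ 2 = (2 * k) ^ 2 by ring, Real.log_pow]
    norm_num
  have e5 : Real.log ((k : ℝ) * N + τ * N) = Real.log (k + τ) + Real.log N := by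
    rw [← add_mul, Real.log_mul (by positivity) (by positivity)]
  unfold Ph at h1
  push_cast at h1 h2
  rw [e1, e2, e5] at h1
  rw [e3] at h2
  rw [e4]
  linarith

lemma LL_eq (τ : ℝ) : LL τ = ((7 : ℕ) : ℝ) * Real.log ((((7 : ℕ) : ℝ) ^ 2 + τ ^ 2) / (4 * ((7 : ℕ) : ℝ) ^ 2)) +
   ((5 : ℕ) : ℝ) * Real.log ((((5 : ℕ) : ℝ) ^ 2 + τ ^ 2) / (4 * ((5 : ℕ) : ℝ) ^ 2)) +
   ((3 : ℕ) : ℝ) * Real.log ((((3 : ℕ) : ℝ) ^ 2 + τ ^ 2) / (4 * ((3 : ℕ) : ℝ) ^ 2)) := by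
  unfold LL; norm_num

lemma rho_log (N : ℕ) (t : ℝ) : Real.log (rho N t) = Real.log (Rk (7 * N) t / (2 * (7 * N)).factorial) +
  Real.log (Rk (5 * N) t / (2 * (5 * N)).factorial) + Real.log (Rk (3 * N) t / (2 * (3 * N)).factorial) := by
  have := Rk_pos (7 * N) t
  have := Rk_pos (5 * N) t
  have := Rk_pos (3 * N) t
  rw [rho, Real.log_mul (by positivity) (by positivity), Real.log_mul (by positivity) (by positivity)]

lemma rho_ub (N : ℕ) (hN : 1 ≤ N) (τ t : ℝ) (hτ : 0 < τ) (ht : 0 < t) :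
    rho N t ≤ Real.exp 6 * 8 ^ 3 * N ^ 3 * Real.exp (N * LL τ) * ((1 + t) ^ 3 * Real.exp (AA τ * t)) := by
  have hN0 : (1 : ℝ) ≤ N := by exact_mod_cast hN
  have h7 := fac_ub 7 N (by norm_num) hN τ t hτ ht
  have h5 := fac_ub 5 N (by norm_num) hN τ t hτ ht
  have h3 := fac_ub 3 N (by norm_num) hN τ t hτ ht
  have b : ∀ k : ℝ, 0 ≤ k → k ≤ 7 → Real.log ((k * N + 1) * (1 + t)) ≤ Real.log (8 * N * (1 + t)) := by
    intro k hk hk7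
    refine Real.log_le_log (by positivity) ?_
    gcongr
    nlinarith
  have b7 := b (7 : ℕ) (by norm_num) (by norm_num)
  have b5 := b (5 : ℕ) (by norm_num) (by norm_num)
  have b3 := b (3 : ℕ) (by norm_num) (by norm_num)
  have hl : Real.log (rho N t) ≤ 6 + N * LL τ + AA τ * t + 3 * Real.log (8 * N * (1 + t)) := by
    rw [rho_log, LL_eq, AA]
    push_cast at *
    linarith
  have h := Real.exp_le_exp.2 hl
  rw [Real.exp_log (rho_pos N t), Real.exp_add, Real.exp_add, Real.exp_add] at h
  have e : Real.exp (3 * Real.log (8 * N * (1 + t))) = (8 * N * (1 + t)) ^ 3 := by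
    rw [show (3 : ℝ) * Real.log (8 * N * (1 + t)) = ((3 : ℕ) : ℝ) * Real.log (8 * N * (1 + t)) by norm_num,
      Real.exp_nat_mul, Real.exp_log (by positivity)]
  rw [e] at h
  refine h.trans (le_of_eq ?_)
  ring

lemma rho_lb (N : ℕ) (hN : 1 ≤ N) (τ : ℝ) (hτ : 0 < τ) :
    Real.exp (-(9 + (Real.log (7 + τ) + Real.log (5 + τ) + Real.log (3 + τ)) +
      (Real.log 14 + Real.log 10 + Real.log 6))) / N ^ 6 * Real.exp (N * LL τ) * Real.exp (AA τ * (τ * N)) ≤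
    rho N (τ * N) := by
  have hN0 : (1 : ℝ) ≤ N := by exact_mod_cast hN
  have h7 := fac_lb 7 N (by norm_num) hN τ hτ
  have h5 := fac_lb 5 N (by norm_num) hN τ hτ
  have h3 := fac_lb 3 N (by norm_num) hN τ hτ
  have hl : -(9 + (Real.log (7 + τ) + Real.log (5 + τ) + Real.log (3 + τ)) +
      (Real.log 14 + Real.log 10 + Real.log 6)) - 6 * Real.log N + N * LL τ + AA τ * (τ * N) ≤ Real.log (rho N (τ * N)) := by
    rw [rho_log, LL_eq, AA]
    push_cast at *
    norm_num at h7 h5 h3 ⊢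
    linarith
  have h := Real.exp_le_exp.2 hl
  rw [Real.exp_log (rho_pos N _), Real.exp_add, Real.exp_add, Real.exp_sub] at h
  have e : Real.exp (6 * Real.log N) = (N : ℝ) ^ 6 := by
    rw [show (6 : ℝ) * Real.log N = ((6 : ℕ) : ℝ) * Real.log N by norm_num,
      Real.exp_nat_mul, Real.exp_log (by positivity)]
  rw [e] at h
  exact h

end Bfour

open MeasureTheory Filter Topology Set

namespace Bfour

lemma cube_exp {ε : ℝ} (hε : 0 < ε) (hε1 : ε ≤ 6) (x : ℝ) (hx : 0 ≤ x) :
    (1 + x) ^ 3 ≤ (6 / ε) ^ 3 * Real.exp (ε / 2 * x) := by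
  have h1 : 1 + x ≤ 6 / ε * Real.exp (ε / 6 * x) := by
    have h := Real.add_one_le_exp (ε / 6 * x)
    have h2 : 1 ≤ 6 / ε := by rw [le_div_iff₀ hε]; linarith
    calc 1 + x ≤ 6 / ε * (ε / 6 * x + 1) := by
          rw [mul_add, ← mul_assoc, show 6 / ε * (ε / 6) = 1 by field_simp]; linarith
      _ ≤ _ := by gcongr
  calc (1 + x) ^ 3 ≤ (6 / ε * Real.exp (ε / 6 * x)) ^ 3 := by gcongr
    _ = _ := by rw [mul_pow, ← Real.exp_nat_mul]; congr 2; push_cast; ring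

lemma AA_pos {τ : ℝ} (hτ : 0 < τ) : 0 < AA τ := by
  unfold AA
  have := Real.arctan_pos.2 (show 0 < 7 / τ by positivity)
  have := Real.arctan_pos.2 (show 0 < 5 / τ by positivity)
  have := Real.arctan_pos.2 (show 0 < 3 / τ by positivity)
  positivity

lemma lam_ub (τ σ s : ℝ) (hτ : 0 < τ) (hs : |s| ≤ σ) (h : AA τ + σ < 2 * Real.pi) :
    ∃ C : ℝ, 0 < C ∧ ∀ N : ℕ, 1 ≤ N → ‖lam (Pp N) s‖ ≤ C * N ^ 3 * Real.exp (N * LL τ) := by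
  have hA := AA_pos hτ
  have hσ : 0 ≤ σ := (abs_nonneg s).trans hs
  have hpi := Real.pi_pos
  obtain ⟨ε, hε, hε6, hε2⟩ : ∃ ε : ℝ, 0 < ε ∧ ε ≤ 6 ∧ AA τ + σ + ε ≤ 2 * Real.pi :=
    ⟨min 6 (2 * Real.pi - AA τ - σ), lt_min (by norm_num) (by linarith), min_le_left _ _, by
      have := min_le_right 6 (2 * Real.pi - AA τ - σ); linarith⟩
  set u := AA τ + σ + ε / 2 with hu
  have hu2 : |u| < 2 * Real.pi := by rw [abs_of_pos (by positivity)]; linarith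
  have i1 := wf_exp_int hu2
  have i2 := wf_exp_int (s := -u) (by rwa [abs_neg])
  have i3 := i1.add i2
  set D := ∫ t, (Real.exp (-(u * t)) * wf t + Real.exp (-(-u * t)) * wf t) with hD
  have hD0 : 0 ≤ D := integral_nonneg fun t => by
    have := wf_nonneg t
    positivity
  refine ⟨Real.exp 6 * 8 ^ 3 * (6 / ε) ^ 3 * (D + 1), by positivity, fun N hN => ?_⟩
  have hb : ∀ᵐ t : ℝ, rho N t * (Real.exp (-(s * t)) * wf t) ≤
      (Real.exp 6 * 8 ^ 3 * N ^ 3 * Real.exp (N * LL τ) * (6 / ε) ^ 3) *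
        (Real.exp (-(u * t)) * wf t + Real.exp (-(-u * t)) * wf t) := by
    have h0 : ∀ᵐ t : ℝ, t ≠ 0 := by simp [ae_iff]
    filter_upwards [h0] with t ht
    have ht0 : 0 < |t| := abs_pos.2 ht
    have hr := rho_ub N hN τ |t| hτ ht0
    rw [rho_abs] at hr
    have hc := cube_exp hε hε6 |t| ht0.le
    have hst : Real.exp (-(s * t)) ≤ Real.exp (σ * |t|) := by
      apply Real.exp_le_exp.2
      calc -(s * t) ≤ |s * t| := neg_le_abs _
        _ = |s| * |t| := abs_mul _ _
        _ ≤ _ := by gcongr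
    have hw := wf_nonneg t
    have hut : Real.exp (u * |t|) ≤ Real.exp (-(u * t)) + Real.exp (-(-u * t)) := by
      have := (Real.exp_pos (-(u * t))).le
      have := (Real.exp_pos (-(-u * t))).le
      rcases abs_cases t with ⟨h1, _⟩ | ⟨h1, _⟩ <;> rw [h1]
      · have e : Real.exp (u * t) = Real.exp (-(-u * t)) := by congr 1; ring
        linarith
      · have e : Real.exp (u * -t) = Real.exp (-(u * t)) := by congr 1; ring
        linarith
    have hρ := (rho_pos N t).le
    calc rho N t * (Real.exp (-(s * t)) * wf t)
        ≤ (Real.exp 6 * 8 ^ 3 * N ^ 3 * Real.exp (N * LL τ) * ((1 + |t|) ^ 3 * Real.exp (AA τ * |t|))) *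
          (Real.exp (σ * |t|) * wf t) := by gcongr
      _ ≤ (Real.exp 6 * 8 ^ 3 * N ^ 3 * Real.exp (N * LL τ) * (((6 / ε) ^ 3 * Real.exp (ε / 2 * |t|)) *
          Real.exp (AA τ * |t|))) * (Real.exp (σ * |t|) * wf t) := by gcongr
      _ = (Real.exp 6 * 8 ^ 3 * N ^ 3 * Real.exp (N * LL τ) * (6 / ε) ^ 3) * (Real.exp (u * |t|) * wf t) := by
          rw [show u * |t| = ε / 2 * |t| + AA τ * |t| + σ * |t| by rw [hu]; ring, Real.exp_add, Real.exp_add]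
          ring
      _ ≤ (Real.exp 6 * 8 ^ 3 * N ^ 3 * Real.exp (N * LL τ) * (6 / ε) ^ 3) *
          ((Real.exp (-(u * t)) + Real.exp (-(-u * t))) * wf t) := by gcongr
      _ = _ := by ring
  rw [lam_norm]
  refine (integral_mono_ae (rho_int N s (lt_of_le_of_lt hs (by linarith))) (i3.const_mul _) hb).trans ?_
  have hI : ∫ t, (Real.exp 6 * 8 ^ 3 * N ^ 3 * Real.exp (N * LL τ) * (6 / ε) ^ 3) *
        (Real.exp (-(u * t)) * wf t + Real.exp (-(-u * t)) * wf t) = 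
        (Real.exp 6 * 8 ^ 3 * N ^ 3 * Real.exp (N * LL τ) * (6 / ε) ^ 3) * D := by
    rw [hD, integral_const_mul]
  refine (le_of_eq hI).trans ?_
  have : 0 ≤ Real.exp 6 * 8 ^ 3 * N ^ 3 * Real.exp (N * LL τ) * (6 / ε) ^ 3 := by positivity
  nlinarith

lemma wf_lb (t : ℝ) : Real.pi ^ 2 * Real.exp (-(2 * Real.pi * |t|)) ≤ wf t := by
  have hp := Real.pi_pos
  have h : Real.cosh (Real.pi * t) ≤ Real.exp (Real.pi * |t|) := by
    rw [← Real.cosh_abs, abs_mul, abs_of_pos hp, Real.cosh_eq]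
    have : Real.exp (-(Real.pi * |t|)) ≤ Real.exp (Real.pi * |t|) := Real.exp_le_exp.2 (by
      have := abs_nonneg t
      nlinarith [mul_nonneg hp.le this])
    linarith
  have e : Real.exp (-(2 * Real.pi * |t|)) = (1 / Real.exp (Real.pi * |t|)) ^ 2 := by
    rw [one_div, ← Real.exp_neg, ← Real.exp_nat_mul]; congr 1; push_cast; ring
  have hc := Real.cosh_pos (Real.pi * t)
  rw [e, wf, ← mul_pow, mul_one_div]
  gcongr

lemma lam_lb (τ : ℝ) (hτ : 0 < τ) (h : 2 * Real.pi ≤ AA τ + th) :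
    ∃ C : ℝ, 0 < C ∧ ∀ N : ℕ, 1 ≤ N → C / N ^ 6 * Real.exp (N * LL τ) ≤ ‖lam (Pp N) th‖ := by
  have hp := Real.pi_pos
  set c := Real.exp (-(9 + (Real.log (7 + τ) + Real.log (5 + τ) + Real.log (3 + τ)) +
      (Real.log 14 + Real.log 10 + Real.log 6))) with hc
  have hc0 : 0 < c := Real.exp_pos _
  refine ⟨c * (Real.pi ^ 2 * Real.exp (-(2 * Real.pi))), by positivity, fun N hN => ?_⟩
  have hN0 : (1 : ℝ) ≤ N := by exact_mod_cast hN
  have hr := rho_lb N hN τ hτ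
  rw [← hc] at hr
  have hth := th_pos
  have hi := rho_int N th (by rw [abs_of_pos hth]; linarith [th_lt])
  rw [lam_norm]
  have hnn : ∀ t, 0 ≤ rho N t * (Real.exp (-(th * t)) * wf t) := fun t => by
    have := wf_nonneg t
    have := (rho_pos N t).le
    positivity
  have h1 : ∫ t in Icc (-(τ * N) - 1) (-(τ * N)), rho N t * (Real.exp (-(th * t)) * wf t) ≤
      ∫ t, rho N t * (Real.exp (-(th * t)) * wf t) :=
    setIntegral_le_integral hi (Eventually.of_forall hnn)
  refine le_trans ?_ h1
  set K := c / N ^ 6 * Real.exp (N * LL τ) * (Real.pi ^ 2 * Real.exp (-(2 * Real.pi))) with hK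
  have h2 : ∫ t in Icc (-(τ * N) - 1) (-(τ * N)), K ≤
      ∫ t in Icc (-(τ * N) - 1) (-(τ * N)), rho N t * (Real.exp (-(th * t)) * wf t) := by
    refine setIntegral_mono_on ?_ hi.integrableOn measurableSet_Icc ?_
    · exact integrableOn_const (by simp)
    intro t ht
    have hτN : 0 < τ * N := by positivity
    have hat : |t| = -t := abs_of_neg (by linarith [ht.2])
    have a1 : rho N (τ * N) ≤ rho N t := by
      rw [← rho_abs N t, hat]
      exact rho_mono N hτN.le (by linarith [ht.2])
    have a2 : Real.exp (th * (τ * N)) ≤ Real.exp (-(th * t)) := by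
      apply Real.exp_le_exp.2
      nlinarith [ht.2]
    have a3 : Real.pi ^ 2 * Real.exp (-(2 * Real.pi * (τ * N + 1))) ≤ wf t := by
      refine le_trans ?_ (wf_lb t)
      gcongr
      rw [hat]; linarith [ht.1]
    have hρ := (rho_pos N t).le
    calc K ≤ (c / N ^ 6 * Real.exp (N * LL τ) * Real.exp (AA τ * (τ * N))) *
          (Real.exp (th * (τ * N)) * (Real.pi ^ 2 * Real.exp (-(2 * Real.pi * (τ * N + 1))))) := by
            rw [hK]
            have : Real.exp (-(2 * Real.pi)) ≤ Real.exp (AA τ * (τ * N)) * Real.exp (th * (τ * N)) *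
                Real.exp (-(2 * Real.pi * (τ * N + 1))) := by
              rw [← Real.exp_add, ← Real.exp_add]
              apply Real.exp_le_exp.2
              nlinarith
            calc _ ≤ c / N ^ 6 * Real.exp (N * LL τ) * (Real.pi ^ 2 * (Real.exp (AA τ * (τ * N)) * Real.exp (th * (τ * N)) *
                Real.exp (-(2 * Real.pi * (τ * N + 1))))) := by gcongr
              _ = _ := by ring
      _ ≤ _ := by
        refine mul_le_mul (hr.trans a1) (mul_le_mul a2 a3 (by positivity) (by positivity)) (by positivity) hρ
  refine le_trans (le_of_eq ?_) h2
  rw [setIntegral_const]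
  simp [hK]
  ring

end Bfour

open MeasureTheory Filter Topology Set

namespace Bfour

lemma log_up (y x b : ℝ) (k : ℤ) (hy : 0 < y) (h0 : 0 ≤ x) (h1 : x < 1) (h : y ≤ 2 ^ k * ((1 + x) / (1 - x)))
    (hb : 2 * ((∑ i ∈ Finset.range 8, x ^ (2 * i + 1) / (2 * i + 1)) + x ^ (2 * 8 + 1) / (1 - x ^ 2)) ≤ b) :
    Real.log y ≤ k * Real.log 2 + b := by
  have h2 := Real.log_div_le_sum_range_add h0 h1 8
  have h3 : 0 < (1 + x) / (1 - x) := div_pos (by linarith) (by linarith)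
  have h4 := Real.log_le_log hy h
  rw [Real.log_mul (by positivity) h3.ne', Real.log_zpow] at h4
  linarith

lemma log_lo (y x b : ℝ) (k : ℤ) (_hy : 0 < y) (h0 : 0 ≤ x) (h1 : x < 1) (h : 2 ^ k * ((1 + x) / (1 - x)) ≤ y)
    (hb : b ≤ 2 * (∑ i ∈ Finset.range 8, x ^ (2 * i + 1) / (2 * i + 1))) :
    k * Real.log 2 + b ≤ Real.log y := by
  have h2 := Real.sum_range_le_log_div h0 h1 8
  have h3 : 0 < (1 + x) / (1 - x) := div_pos (by linarith) (by linarith)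
  have h4 := Real.log_le_log (by positivity) h
  rw [Real.log_mul (by positivity) h3.ne', Real.log_zpow] at h4
  linarith

lemma LL_s7 (s : ℝ) : LL (√7 * s) = 7 * Real.log ((49 + 7 * s ^ 2) / 196) + 5 * Real.log ((25 + 7 * s ^ 2) / 100) +
    3 * Real.log ((9 + 7 * s ^ 2) / 36) := by
  rw [LL, mul_pow, Real.sq_sqrt (by norm_num)]

lemma LLJu : LL (√7 * 1.3186325) - 5 * Real.log 2 ≤ -18.157480 := by
  have l1 := Real.log_two_gt_d9
  have l2 := Real.log_two_lt_d9
  have h7 := log_up (1398206667209 / 4480000000000) (441912367 / 4000000000) (221861779 / 1000000000) (-2) (by norm_num) (by norm_num) (by norm_num) (by norm_num) (by norm_num [Finset.sum_range_succ])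
  have h5 := log_up (5947446670463 / 16000000000000) (19577352209 / 100000000000) (99166909 / 250000000) (-2) (by norm_num) (by norm_num) (by norm_num) (by norm_num) (by norm_num [Finset.sum_range_succ])
  have h3 := log_up (3387446670463 / 5760000000000) (4048272743 / 50000000000) (162286149 / 1000000000) (-1) (by norm_num) (by norm_num) (by norm_num) (by norm_num) (by norm_num [Finset.sum_range_succ])
  rw [LL_s7]
  norm_num at h7 h5 h3 ⊢
  linarith

lemma LLJl : -18.157482 ≤ LL (√7 * 1.3186324) - 5 * Real.log 2 := by
  have l1 := Real.log_two_gt_d9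
  have l2 := Real.log_two_lt_d9
  have h7 := log_lo (54617446289561 / 175000000000000) (11047807683 / 100000000000) (55465437 / 250000000) (-2) (by norm_num) (by norm_num) (by norm_num) (by norm_num) (by norm_num [Finset.sum_range_succ])
  have h5 := log_lo (232322124026927 / 625000000000000) (978867491 / 5000000000) (79333517 / 200000000) (-2) (by norm_num) (by norm_num) (by norm_num) (by norm_num) (by norm_num [Finset.sum_range_succ])
  have h3 := log_lo (132322124026927 / 225000000000000) (4048270577 / 50000000000) (162286061 / 1000000000) (-1) (by norm_num) (by norm_num) (by norm_num) (by norm_num) (by norm_num [Finset.sum_range_succ])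
  rw [LL_s7]
  norm_num at h7 h5 h3 ⊢
  linarith

lemma LLQ : LL (√7 * 15.588921) - 5 * Real.log 2 ≤ 37.684083 := by
  have l1 := Real.log_two_gt_d9
  have l2 := Real.log_two_lt_d9
  have h7 := log_up (250014457944241 / 28000000000000) (5488114869 / 100000000000) (109872697 / 1000000000) (3) (by norm_num) (by norm_num) (by norm_num) (by norm_num) (by norm_num [Finset.sum_range_succ])
  have h5 := log_up (1726101205609687 / 100000000000000) (947815459 / 25000000000) (37930799 / 500000000) (4) (by norm_num) (by norm_num) (by norm_num) (by norm_num) (by norm_num [Finset.sum_range_succ])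
  have h3 := log_up (190011245067743 / 4000000000000) (9749850993 / 50000000000) (6172703 / 15625000) (5) (by norm_num) (by norm_num) (by norm_num) (by norm_num) (by norm_num [Finset.sum_range_succ])
  rw [LL_s7]
  norm_num at h7 h5 h3 ⊢
  linarith


lemma at_add (a b : ℝ) (h : 7 * (a * b) < 1) : Real.arctan (√7 * a) + Real.arctan (√7 * b) =
    Real.arctan (√7 * ((a + b) / (1 - 7 * (a * b)))) := by
  have e : √7 * a * (√7 * b) = 7 * (a * b) := by
    have := Real.mul_self_sqrt (show (0 : ℝ) ≤ 7 by norm_num)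
    linear_combination (a * b) * this
  rw [Real.arctan_add (by rw [e]; exact h), e]
  congr 1
  ring

lemma th_eq : th = 2 * Real.arctan (√7 * (1 / 7)) := by
  rw [two_mul, at_add _ _ (by norm_num), th]
  norm_num
  ring

lemma at_k (k s : ℝ) (hs : 0 < s) : Real.arctan (k / (√7 * s)) = Real.arctan (√7 * (k / (7 * s))) := by
  congr 1
  have h := Real.mul_self_sqrt (show (0 : ℝ) ≤ 7 by norm_num)
  have := s7pos
  field_simp
  linear_combination (-k) * h

lemma at_inv (k s : ℝ) (hk : 0 < k) (hs : 0 < s) : Real.arctan (k / (√7 * s)) = Real.pi / 2 - Real.arctan (√7 * (s / k)) := by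
  have := s7pos
  rw [← Real.arctan_inv_of_pos (by positivity)]
  congr 1
  field_simp

lemma at_mono {a b : ℝ} (h : a < b) : Real.arctan (√7 * a) < Real.arctan (√7 * b) :=
  Real.arctan_strictMono (mul_lt_mul_of_pos_left h s7pos)

lemma AAQ : AA (√7 * 15.588921) < th := by
  rw [AA, th_eq, at_k _ _ (by norm_num), at_k _ _ (by norm_num), at_k _ _ (by norm_num),
    at_add _ _ (by norm_num), at_add _ _ (by norm_num)]
  have := at_mono (show (((7 / (7 * 15.588921) + 5 / (7 * 15.588921)) / (1 - 7 * (7 / (7 * 15.588921) * (5 / (7 * 15.588921)))) +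
        3 / (7 * 15.588921)) / (1 - 7 * ((7 / (7 * 15.588921) + 5 / (7 * 15.588921)) /
            (1 - 7 * (7 / (7 * 15.588921) * (5 / (7 * 15.588921)))) * (3 / (7 * 15.588921)))) : ℝ) < 1 / 7 by norm_num)
  linarith

lemma AAJu : AA (√7 * 1.3186325) + th < 2 * Real.pi := by
  have h1 := at_add (3 / (7 * 1.3186325)) (1 / 7) (by norm_num)
  have h2 := at_add (1.3186325 / 7) (1.3186325 / 5) (by norm_num)
  have h3 := at_mono (show ((3 / (7 * 1.3186325) + 1 / 7) / (1 - 7 * (3 / (7 * 1.3186325) * (1 / 7))) : ℝ) <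
    (1.3186325 / 7 + 1.3186325 / 5) / (1 - 7 * (1.3186325 / 7 * (1.3186325 / 5))) by norm_num)
  rw [AA, th_eq, at_inv 7 _ (by norm_num) (by norm_num), at_inv 5 _ (by norm_num) (by norm_num), at_k 3 _ (by norm_num)]
  linarith

lemma AAJl : 2 * Real.pi ≤ AA (√7 * 1.3186324) + th := by
  have h1 := at_add (3 / (7 * 1.3186324)) (1 / 7) (by norm_num)
  have h2 := at_add (1.3186324 / 7) (1.3186324 / 5) (by norm_num)
  have h3 := at_mono (show (1.3186324 / 7 + 1.3186324 / 5) / (1 - 7 * (1.3186324 / 7 * (1.3186324 / 5))) <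
    ((3 / (7 * 1.3186324) + 1 / 7) / (1 - 7 * (3 / (7 * 1.3186324) * (1 / 7))) : ℝ) by norm_num)
  rw [AA, th_eq, at_inv 7 _ (by norm_num) (by norm_num), at_inv 5 _ (by norm_num) (by norm_num), at_k 3 _ (by norm_num)]
  linarith

end Bfour

open MeasureTheory Filter Topology Set

namespace Bfour

set_option maxHeartbeats 1000000 in
lemma irr_fin (β : ℝ) (a b : ℕ → ℤ) (A l0 l1 : ℝ) (hA : 0 < A) (hl0 : 0 < l0) (hl1 : 0 < l1)
    (h : ∀ᶠ N : ℕ in atTop, |(a N : ℝ)| ≤ Real.exp (A * N) ∧ Real.exp (-(l0 * N)) ≤ |a N * β - b N| ∧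
      |a N * β - b N| ≤ Real.exp (-(l1 * N))) (κ : ℝ) (h1 : 1 + A / l1 < κ) (h2 : (A + l0) / l1 < κ) :
    {pq : ℤ × ℕ+ | |β - (pq.1 : ℝ) / ((pq.2 : ℕ) : ℝ)| < ((pq.2 : ℕ) : ℝ) ^ (-κ)}.Finite := by
  obtain ⟨N0, hN0⟩ := eventually_atTop.1 h
  have hκ : 0 < κ := lt_of_le_of_lt (by positivity) h1
  set d1 := κ - (1 + A / l1) with hd1
  set d2 := κ - (A + l0) / l1 with hd2
  have hd1p : 0 < d1 := by rw [hd1]; linarith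
  have hd2p : 0 < d2 := by rw [hd2]; linarith
  set c := Real.log 2 with hc
  have hcp : 0 < c := Real.log_pos (by norm_num)
  set T := max (l1 * N0) (max ((A * (c / l1 + 1) + c) / d1) ((A + l0) * (c / l1 + 1) / d2)) with hT
  obtain ⟨Q, hQ⟩ := exists_nat_gt (Real.exp T)
  have hqb : ∀ p : ℤ, ∀ q : ℕ, 0 < q → |β - (p : ℝ) / (q : ℝ)| < (q : ℝ) ^ (-κ) → q ≤ Q := by
    intro p q hq hlt
    by_contra hcon
    push Not at hcon
    have hq0 : (0 : ℝ) < q := by exact_mod_cast hq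
    have hqT : T < Real.log q := by
      rw [Real.lt_log_iff_exp_lt hq0]
      exact hQ.trans (by exact_mod_cast hcon)
    have t1 : l1 * N0 ≤ T := le_max_left _ _
    have t2 : (A * (c / l1 + 1) + c) / d1 ≤ T := (le_max_left _ _).trans (le_max_right _ _)
    have t3 : (A + l0) * (c / l1 + 1) / d2 ≤ T := (le_max_right _ _).trans (le_max_right _ _)
    set x := Real.log q with hx
    have hl2q : Real.log (2 * q) = c + x := by rw [Real.log_mul (by norm_num) hq0.ne']
    have hx0 : 0 < x := lt_of_le_of_lt (le_trans (by positivity) t1) hqT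
    set N := ⌈(c + x) / l1⌉₊ with hN
    have n1 : (c + x) / l1 ≤ N := Nat.le_ceil _
    have n2 : (N : ℝ) < (c + x) / l1 + 1 := Nat.ceil_lt_add_one (by positivity)
    have n3 : N0 ≤ N := by
      have : (N0 : ℝ) ≤ N := by
        refine le_trans ?_ n1
        rw [le_div_iff₀ hl1]
        linarith
      exact_mod_cast this
    obtain ⟨g1, g2, g3⟩ := hN0 N n3
    set L := a N * β - b N with hL
    have hqk : (q : ℝ) ^ (-κ) = Real.exp (-(κ * x)) := by
      rw [Real.rpow_def_of_pos hq0]; congr 1; ring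
    rw [hqk] at hlt
    have hL2 : |L| ≤ 1 / (2 * q) := by
      refine g3.trans ?_
      rw [← Real.exp_log (show (0 : ℝ) < 1 / (2 * q) by positivity), one_div, Real.log_inv, hl2q]
      apply Real.exp_le_exp.2
      rw [div_le_iff₀ hl1] at n1
      linarith
    have hkey : |(a N : ℝ)| * |β - p / q| ≤ Real.exp (A * N + -(κ * x)) := by
      rw [Real.exp_add]
      exact mul_le_mul g1 hlt.le (abs_nonneg _) (Real.exp_pos _).le
    have hid : (a N : ℝ) * (β - p / q) = L - (a N * p - b N * q) / q := by
      rw [hL]; field_simp; ring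
    by_cases hz : a N * p - b N * q = 0
    · have hz' : ((a N : ℝ) * p - b N * q) = 0 := by exact_mod_cast hz
      rw [← abs_mul, hid, hz', zero_div, sub_zero] at hkey
      have := Real.exp_le_exp.1 (g2.trans hkey)
      have e1 : κ * x ≤ (A + l0) * ((c + x) / l1 + 1) := by
        have : (A + l0) * N ≤ (A + l0) * ((c + x) / l1 + 1) := by gcongr
        linarith
      rw [div_le_iff₀ hd2p] at t3
      have e2 : (A + l0) * (c / l1 + 1) < d2 * x := by nlinarith
      have e3 : (A + l0) * ((c + x) / l1 + 1) = (A + l0) * (c / l1 + 1) + (A + l0) / l1 * x := by ring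
      rw [hd2] at e2
      linarith
    · have hz1 : (1 : ℝ) ≤ |(a N : ℝ) * p - b N * q| := by exact_mod_cast Int.one_le_abs hz
      have hz2 : 1 / (q : ℝ) ≤ |((a N : ℝ) * p - b N * q) / q| := by
        rw [abs_div, abs_of_pos hq0]; gcongr
      have hz3 : |((a N : ℝ) * p - b N * q) / q| ≤ |L| + |(a N : ℝ)| * |β - p / q| := by
        rw [← abs_mul, hid]
        calc _ = |L - (L - ((a N : ℝ) * p - b N * q) / q)| := by congr 1; ring
          _ ≤ _ := abs_sub _ _
      have hz4 : 1 / (2 * q : ℝ) ≤ Real.exp (A * N + -(κ * x)) := by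
        have : 1 / (q : ℝ) = 1 / (2 * q) + 1 / (2 * q) := by field_simp; norm_num
        linarith
      rw [← Real.exp_log (show (0 : ℝ) < 1 / (2 * q) by positivity), one_div, Real.log_inv, hl2q] at hz4
      have := Real.exp_le_exp.1 hz4
      have e1 : κ * x ≤ A * ((c + x) / l1 + 1) + (c + x) := by
        have : A * N ≤ A * ((c + x) / l1 + 1) := by gcongr
        linarith
      rw [div_le_iff₀ hd1p] at t2
      have e2 : A * (c / l1 + 1) + c < d1 * x := by nlinarith
      have e3 : A * ((c + x) / l1 + 1) + (c + x) = A * (c / l1 + 1) + c + (1 + A / l1) * x := by ring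
      rw [hd1] at e2
      linarith
  set M := ⌈(Q : ℝ) * (|β| + 1)⌉ with hM
  refine ((Set.finite_Icc (-M) M).prod (Set.finite_Iic (⟨Q + 1, Nat.succ_pos _⟩ : ℕ+))).subset ?_
  rintro ⟨p, q⟩ hpq
  have hpq' : |β - (p : ℝ) / ((q : ℕ) : ℝ)| < ((q : ℕ) : ℝ) ^ (-κ) := hpq
  have hq := hqb p q q.2 hpq'
  have hq1 : (1 : ℝ) ≤ ((q : ℕ) : ℝ) := by exact_mod_cast q.2
  have hle : ((q : ℕ) : ℝ) ^ (-κ) ≤ 1 := Real.rpow_le_one_of_one_le_of_nonpos hq1 (by linarith)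
  have hp : |(p : ℝ)| ≤ Q * (|β| + 1) := by
    have e : |(p : ℝ)| = q * |(p : ℝ) / ((q : ℕ) : ℝ)| := by
      rw [abs_div, abs_of_pos (by linarith : (0 : ℝ) < ((q : ℕ) : ℝ))]; field_simp
    have e2 : |(p : ℝ) / ((q : ℕ) : ℝ)| ≤ |β| + 1 := by
      have := abs_sub_abs_le_abs_sub ((p : ℝ) / ((q : ℕ) : ℝ)) β
      rw [abs_sub_comm] at this
      linarith
    rw [e]
    have : ((q : ℕ) : ℝ) ≤ Q := by exact_mod_cast hq
    gcongr
  have hpM : |(p : ℝ)| ≤ M := hp.trans (Int.le_ceil _)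
  have hpM' : |p| ≤ M := by exact_mod_cast hpM
  refine ⟨abs_le.1 hpM', ?_⟩
  show (q : ℕ) ≤ Q + 1
  omega

lemma ev_exp (C δ : ℝ) (hδ : 0 < δ) : ∀ᶠ N : ℕ in atTop, C * (N : ℝ) ^ 6 ≤ Real.exp (δ * N) := by
  have h := (isLittleO_pow_exp_pos_mul_atTop 6 hδ).comp_tendsto tendsto_natCast_atTop_atTop
  have h2 := h.def (c := 1 / (|C| + 1)) (by positivity)
  filter_upwards [h2] with N hN
  simp only [Function.comp, Real.norm_eq_abs, abs_of_pos (Real.exp_pos _)] at hN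
  rw [abs_of_nonneg (by positivity), one_div, inv_mul_eq_div, le_div_iff₀ (by positivity)] at hN
  have : 0 ≤ (N : ℝ) ^ 6 := by positivity
  nlinarith [le_abs_self C]

end Bfour

open MeasureTheory Filter Topology Set

namespace Bfour

lemma exists_lm (l c : ℝ) (n : ℕ) (hn : 0 < n) (hl : (n : ℝ) = l) (hc : l ≤ c) :
    ∃ k : ℕ, 0 < k * n ∧ c ≤ ((k * n : ℕ) : ℝ) ∧ ((k * n : ℕ) : ℝ) ≤ 2 * c := by
  subst hl
  have hn0 : (0 : ℝ) < n := by exact_mod_cast hn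
  have hc0 : 0 < c := hn0.trans_le hc
  have h1 := Nat.le_ceil (c / n)
  have h2 := Nat.ceil_lt_add_one (show 0 ≤ c / n by positivity)
  rw [div_le_iff₀ hn0] at h1
  have h3 : (⌈c / (n : ℝ)⌉₊ : ℝ) * n ≤ 2 * c := by
    calc _ ≤ (c / n + 1) * n := by gcongr
      _ = c + n := by field_simp
      _ ≤ _ := by linarith
  refine ⟨⌈c / n⌉₊, ?_, by push_cast; exact h1, by push_cast; exact h3⟩
  have : (0 : ℝ) < ((⌈c / (n : ℝ)⌉₊ * n : ℕ) : ℝ) := by push_cast; linarith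
  exact_mod_cast this

lemma two_pow_eq (N : ℕ) : (2 : ℝ) ^ (5 * N) = Real.exp (N * (5 * Real.log 2)) := by
  rw [← Real.exp_log (show (0 : ℝ) < 2 ^ (5 * N) by positivity), Real.log_pow]
  congr 1
  push_cast; ring

lemma forms : ∀ᶠ N : ℕ in atTop, ∃ A B : ℤ, |(A : ℝ)| ≤ Real.exp (41.693884 * N) ∧
    Real.exp (-(14.147683 * N)) ≤ |A * (√7 * th) - B| ∧ |A * (√7 * th) - B| ≤ Real.exp (-(14.147679 * N)) := by
  have hth := th_pos
  have hth2 := th_lt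
  have hp := Real.pi_pos
  have hs7 := s7pos
  have hs2 : 0 < √2 := Real.sqrt_pos.2 (by norm_num)
  obtain ⟨C1, hC1, u1⟩ := lam_ub (√7 * 15.588921) (2 * Real.pi - th) th (by positivity)
    (by rw [abs_of_pos hth]; linarith) (by linarith [AAQ])
  obtain ⟨C2, hC2, u2⟩ := lam_ub (√7 * 15.588921) (2 * Real.pi - th) (th - 2 * Real.pi) (by positivity)
    (by rw [abs_of_neg (by linarith)]; linarith) (by linarith [AAQ])
  obtain ⟨C3, hC3, u3⟩ := lam_ub (√7 * 1.3186325) th th (by positivity) (abs_of_pos hth).le AAJu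
  obtain ⟨C4, hC4, u4⟩ := lam_lb (√7 * 1.3186324) (by positivity) AAJl
  filter_upwards [log_l0_le, eventually_ge_atTop 1, ev_exp (2 * (C1 + C2) / (4 * √2 * Real.pi ^ 2)) 0.000001 (by norm_num),
    ev_exp (√7 * 2 * C3 / (2 * √2 * Real.pi)) 0.000001 (by norm_num),
    ev_exp ((2 * √2 * Real.pi) / (√7 * C4)) 0.000001 (by norm_num)] with N hl hN e1 e2 e3
  have hN1 : (1 : ℝ) ≤ N := by exact_mod_cast hN
  have hl' : (l0 N : ℝ) ≤ Real.exp (4.0098 * N) := by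
    rwa [← Real.log_le_iff_le_exp (by exact_mod_cast l0_pos N)]
  obtain ⟨k, hk0, hk1, hk2⟩ := exists_lm _ _ (l0 N) (l0_pos N) rfl hl'
  set l := k * l0 N with hldef
  obtain ⟨A, B, hA, hB⟩ := p4_main (Pp N) l (5 * N) hk0 (Pp_int N) (fun j => by
      obtain ⟨a, ha⟩ := l0_der N hN j
      refine ⟨k * a, ?_⟩
      rw [hldef]
      push_cast
      rw [← ha]; ring) (Pp_van N) (Pp_van' N) (fun t => by rw [Pp_line]; exact Complex.ofReal_im _)
  rw [two_pow_eq] at hA hB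
  set E5 := Real.exp (N * (5 * Real.log 2)) with hE5
  have hE5p : 0 < E5 := Real.exp_pos _
  have p36 : (N : ℝ) ^ 3 ≤ (N : ℝ) ^ 6 := pow_le_pow_right₀ hN1 (by norm_num)
  refine ⟨A, B, ?_, ?_, ?_⟩
  · have b : ‖lam (Pp N) th + lam (Pp N) (th - 2 * Real.pi)‖ ≤ (C1 + C2) * N ^ 6 * Real.exp (N * LL (√7 * 15.588921)) := by
      refine (norm_add_le _ _).trans ((add_le_add (u1 N hN) (u2 N hN)).trans ?_)
      rw [← add_mul, ← add_mul]
      gcongr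
    have : E5 * |(A : ℝ)| * (4 * √2 * Real.pi ^ 2) ≤ E5 * Real.exp (41.693884 * N) * (4 * √2 * Real.pi ^ 2) := by
      rw [hA]
      calc _ ≤ 2 * Real.exp (4.0098 * N) * ((C1 + C2) * N ^ 6 * Real.exp (N * LL (√7 * 15.588921))) := by gcongr
        _ = (2 * (C1 + C2) / (4 * √2 * Real.pi ^ 2) * N ^ 6) * (Real.exp (4.0098 * N) * Real.exp (N * LL (√7 * 15.588921))) *
            (4 * √2 * Real.pi ^ 2) := by field_simp
        _ ≤ Real.exp (0.000001 * N) * (Real.exp (4.0098 * N) * Real.exp (N * LL (√7 * 15.588921))) *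
            (4 * √2 * Real.pi ^ 2) := by gcongr
        _ ≤ _ := by
          refine mul_le_mul_of_nonneg_right ?_ (by positivity)
          rw [hE5, ← Real.exp_add, ← Real.exp_add, ← Real.exp_add]
          apply Real.exp_le_exp.2
          nlinarith [LLQ]
    exact le_of_mul_le_mul_left (le_of_mul_le_mul_right this (by positivity)) hE5p
  · have b := u4 N hN
    have : E5 * Real.exp (-(14.147683 * N)) * (2 * √2 * Real.pi) ≤ E5 * |A * (√7 * th) - B| * (2 * √2 * Real.pi) := by
      rw [hB]
      calc _ = E5 * Real.exp (-(14.147683 * N)) * (√7 * C4 / N ^ 6) * ((2 * √2 * Real.pi) / (√7 * C4) * N ^ 6) := by field_simp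
        _ ≤ E5 * Real.exp (-(14.147683 * N)) * (√7 * C4 / N ^ 6) * Real.exp (0.000001 * N) := by gcongr
        _ = (E5 * Real.exp (-(14.147683 * N)) * Real.exp (0.000001 * N)) * (√7 * C4 / N ^ 6) := by ring
        _ ≤ (Real.exp (4.0098 * N) * Real.exp (N * LL (√7 * 1.3186324))) * (√7 * C4 / N ^ 6) := by
          refine mul_le_mul_of_nonneg_right ?_ (by positivity)
          rw [hE5, ← Real.exp_add, ← Real.exp_add, ← Real.exp_add]
          apply Real.exp_le_exp.2
          nlinarith [LLJl]
        _ = √7 * Real.exp (4.0098 * N) * (C4 / N ^ 6 * Real.exp (N * LL (√7 * 1.3186324))) := by ring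
        _ ≤ _ := by gcongr
    exact le_of_mul_le_mul_left (le_of_mul_le_mul_right this (by positivity)) hE5p
  · have b : ‖lam (Pp N) th‖ ≤ C3 * N ^ 6 * Real.exp (N * LL (√7 * 1.3186325)) := by
      refine (u3 N hN).trans ?_
      gcongr
    have : E5 * |A * (√7 * th) - B| * (2 * √2 * Real.pi) ≤ E5 * Real.exp (-(14.147679 * N)) * (2 * √2 * Real.pi) := by
      rw [hB]
      calc _ ≤ √7 * (2 * Real.exp (4.0098 * N)) * (C3 * N ^ 6 * Real.exp (N * LL (√7 * 1.3186325))) := by gcongr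
        _ = (√7 * 2 * C3 / (2 * √2 * Real.pi) * N ^ 6) * (Real.exp (4.0098 * N) * Real.exp (N * LL (√7 * 1.3186325))) *
            (2 * √2 * Real.pi) := by field_simp
        _ ≤ Real.exp (0.000001 * N) * (Real.exp (4.0098 * N) * Real.exp (N * LL (√7 * 1.3186325))) *
            (2 * √2 * Real.pi) := by gcongr
        _ ≤ _ := by
          refine mul_le_mul_of_nonneg_right ?_ (by positivity)
          rw [hE5, ← Real.exp_add, ← Real.exp_add, ← Real.exp_add]
          apply Real.exp_le_exp.2
          nlinarith [LLJu]
    exact le_of_mul_le_mul_left (le_of_mul_le_mul_right this (by positivity)) hE5p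

theorem final (κ : ℝ) (hκ : κ > 3.94705) :
      {pq : ℤ × ℕ+ | |√7 * th - (pq.1 : ℝ) / ((pq.2 : ℕ) : ℝ)| < ((pq.2 : ℕ) : ℝ) ^ (-κ)}.Finite := by
  obtain ⟨N0, h⟩ := eventually_atTop.1 forms
  choose! a b hab using h
  refine irr_fin (√7 * th) a b 41.693884 14.147683 14.147679 (by norm_num) (by norm_num) (by norm_num)
    (eventually_atTop.2 ⟨N0, hab⟩) κ (lt_trans (by norm_num) hκ) (lt_trans (by norm_num) hκ)

end Bfour

theorem irrationality_measure_beta_19 :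
    ∀ κ : ℝ, κ > 3.94705 →
      {pq : ℤ × ℕ+ |
        |Real.sqrt 7 * Real.arctan (Real.sqrt 7 / 3) -
            (pq.1 : ℝ) / ((pq.2 : ℕ) : ℝ)| <
          ((pq.2 : ℕ) : ℝ) ^ (-κ)}.Finite := by
  intro κ hκ
  exact Bfour.final κ hκ
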